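/- arXiv:2509.25432 — 4 statements merged into one kernel-verified Lean document; each statement's English description precedes it below -/
import Mathlib

section
/- Let $k$ be an algebraically closed field and let $n \geq 0$ be an integer. Let $v_0, \dots, v_{n+1} \in k^3$ be nonzero vectors that are pairwise linearly independent, and suppose they do NOT all lie in a common $2$-dimensional linear subspace of $k^3$ (i.e., the corresponding $n+2$ distinct points of $\mathbb{P}^2_k$ are not collinear). Then the evaluation map from the space of homogeneous polynomials of degree $n$ in $k[X_0, X_1, X_2]$ to $k^{n+2}$, sending $F \mapsto (F(v_0), \dots, F(v_{n+1}))$, is surjective. (Equivalently: $n+2$ distinct points of $\mathbb{P}^2_k$ impose independent conditions on curves of degree $n$ if and only if they are not contained in a line.) -/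
/-! Fix one of the points, `v i`, and extend it to a basis of the span of all points chosen among
the points. A hyperplane contains the other members of this basis but not `v i`; each of the
remaining points lies on a hyperplane missing `v i`. If the points span a space of dimension `d` and
there are at most `n + d - 1` of them, these are at most `n` hyperplanes, so the product of their
equations, padded by a power of a linear form not vanishing at `v i`, is a form of degree `n` that
vanishes at every point except `v i`. Noncollinearity is the case `d ≥ 3`. -/

open Module MvPolynomial Submodule

section LinearAlgebra

variable {k V ι : Type*} [DivisionRing k] [AddCommGroup V] [Module k V]

theorem surjective_of_forall_exists_apply_ne_zero [Finite ι] (f : V →ₗ[k] ι → k)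
    (hf : ∀ i, ∃ x, f x i ≠ 0 ∧ ∀ j, j ≠ i → f x j = 0) :
    Function.Surjective f := by
  have := Fintype.ofFinite ι
  choose x hne hzero using hf
  intro y
  refine ⟨∑ i, (y i / f (x i) i) • x i, funext fun j => ?_⟩
  rw [map_sum, Finset.sum_apply, Finset.sum_eq_single j]
  · simp [hne j]
  · intro i _ hij
    simp [hzero i j hij.symm]
  · simp

variable {v : ι → V}

theorem exists_mem_linearIndepOn_card_eq_finrank_span [Finite ι] {i : ι} (hi : v i ≠ 0) :
    ∃ s : Finset ι, i ∈ s ∧ LinearIndepOn k v s ∧ s.card = finrank k (span k (Set.range v)) := by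
  obtain ⟨b, -, hib, hspan, hb⟩ :=
    exists_linearIndepOn_extension (LinearIndepOn.singleton (R := k) hi) (Set.subset_univ {i})
  lift b to Finset ι using b.toFinite
  refine ⟨b, by simpa using hib, hb, ?_⟩
  have hrange : span k (Set.range v) = span k (v '' b) :=
    span_eq_of_le _ (by simpa using hspan) (span_mono (Set.image_subset_range v b))
  rw [hrange, Set.image_eq_range]
  simpa using (finrank_span_eq_card hb).symm

theorem notMem_span_singleton_of_linearIndependent {x y : V} (h : LinearIndependent k ![x, y]) :
    x ∉ span k {y} := fun hx => by
  obtain ⟨a, rfl⟩ := mem_span_singleton.1 hx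
  exact (LinearIndependent.pair_iff' (h.ne_zero 1)).1 (LinearIndependent.pair_symm_iff.1 h) a rfl

theorem two_lt_finrank_span_range [Finite ι] {i j : ι} (hij : LinearIndependent k ![v i, v j])
    (hncol : ¬ ∃ W : Submodule k V, finrank k W = 2 ∧ ∀ l, v l ∈ W) :
    2 < finrank k (span k (Set.range v)) := by
  have hmem (l : ι) : v l ∈ span k (Set.range v) := subset_span (Set.mem_range_self l)
  have := FiniteDimensional.span_of_finite k (Set.finite_range v)
  refine lt_of_le_of_ne ?_ fun h => hncol ⟨_, h.symm, hmem⟩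
  have hpair : span k (Set.range ![v i, v j]) ≤ span k (Set.range v) := by
    simp [span_le, Set.insert_subset_iff, hmem]
  simpa [finrank_span_eq_card hij] using finrank_mono hpair

end LinearAlgebra

section Hypersurfaces

variable {k σ ι : Type*} [Field k] [Finite σ]

theorem exists_isHomogeneous_one_of_notMem {W : Submodule k (σ → k)} {p : σ → k} (hp : p ∉ W) :
    ∃ L : MvPolynomial σ k, L.IsHomogeneous 1 ∧ eval p L ≠ 0 ∧ ∀ x ∈ W, eval x L = 0 := by
  classical
  have := Fintype.ofFinite σ
  obtain ⟨f, hfp, hfW⟩ := exists_le_ker_of_notMem hp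
  obtain ⟨c, rfl⟩ := (dotProductEquiv k σ).surjective f
  have heval (x : σ → k) : eval x ((Matrix.replicateRow Unit c).toMvPolynomial ()) = c ⬝ᵥ x :=
    Matrix.toMvPolynomial_eval_eq_apply _ _ _
  refine ⟨_, Matrix.toMvPolynomial_isHomogeneous (Matrix.replicateRow Unit c) (), ?_, ?_⟩
  · simpa [heval] using hfp
  · intro x hx
    simpa [heval] using hfW hx

theorem exists_isHomogeneous_of_forall_notMem {n : ℕ} {S : Finset (Submodule k (σ → k))}
    {p : σ → k} (hp : p ≠ 0) (hS : ∀ W ∈ S, p ∉ W) (hn : S.card ≤ n) :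
    ∃ F : MvPolynomial σ k, F.IsHomogeneous n ∧ eval p F ≠ 0 ∧
      ∀ W ∈ S, ∀ x ∈ W, eval x F = 0 := by
  obtain ⟨M, hM, hMp, -⟩ := exists_isHomogeneous_one_of_notMem (W := ⊥) (by simpa using hp)
  choose! L hL hLp hLW using fun W hW => exists_isHomogeneous_one_of_notMem (hS W hW)
  refine ⟨M ^ (n - S.card) * ∏ W ∈ S, L W, ?_, ?_, fun W hW x hx => ?_⟩
  · convert (hM.pow (n - S.card)).mul (IsHomogeneous.prod S L (fun _ => 1) hL) using 1
    simp [Nat.sub_add_cancel hn]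
  · simpa [eval_prod, hMp, Finset.prod_eq_zero_iff] using hLp
  · rw [map_mul, eval_prod, Finset.prod_eq_zero hW (hLW W hW x hx), mul_zero]

theorem exists_isHomogeneous_eval_ne_zero_forall_ne_eval_eq_zero [Fintype ι] {n : ℕ}
    {v : ι → σ → k} (hv : ∀ i, v i ≠ 0)
    (hind : ∀ i j, i ≠ j → LinearIndependent k ![v i, v j])
    (hcard : Fintype.card ι + 1 ≤ n + finrank k (span k (Set.range v))) (i : ι) :
    ∃ F : MvPolynomial σ k, F.IsHomogeneous n ∧ eval (v i) F ≠ 0 ∧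
      ∀ j, j ≠ i → eval (v j) F = 0 := by
  classical
  obtain ⟨s, his, hs, hscard⟩ := exists_mem_linearIndepOn_card_eq_finrank_span (k := k) (hv i)
  let H : Submodule k (σ → k) := span k (v '' (s \ {i}))
  let S : Finset (Submodule k (σ → k)) := insert H (sᶜ.image fun j => span k {v j})
  have hS : ∀ W ∈ S, v i ∉ W := by
    simp only [S, Finset.forall_mem_insert, Finset.forall_mem_image, Finset.mem_compl]
    refine ⟨hs.notMem_span his, fun j hj => ?_⟩
    exact notMem_span_singleton_of_linearIndependent (hind i j (ne_of_mem_of_not_mem his hj))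
  have hSn : S.card ≤ n := by
    have hinsert : S.card ≤ sᶜ.card + 1 :=
      (Finset.card_insert_le _ _).trans (Nat.succ_le_succ Finset.card_image_le)
    have hcompl := s.card_add_card_compl
    omega
  obtain ⟨F, hF, hFi, hFS⟩ := exists_isHomogeneous_of_forall_notMem (hv i) hS hSn
  refine ⟨F, hF, hFi, fun j hji => ?_⟩
  by_cases hj : j ∈ s
  · exact hFS H (Finset.mem_insert_self _ _) _ (subset_span (Set.mem_image_of_mem v ⟨hj, hji⟩))
  · refine hFS (span k {v j}) (Finset.mem_insert_of_mem ?_) _ (mem_span_singleton_self _)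
    exact Finset.mem_image_of_mem _ (Finset.mem_compl.2 hj)

theorem noncollinear_points_impose_independent_conditions_general [Fintype ι] (n : ℕ)
    (v : ι → σ → k) (hv : ∀ i, v i ≠ 0)
    (hind : ∀ i j, i ≠ j → LinearIndependent k ![v i, v j])
    (hcard : Fintype.card ι + 1 ≤ n + finrank k (span k (Set.range v))) :
    Function.Surjective
      (fun F : homogeneousSubmodule σ k n => fun i : ι => eval (v i) (F : MvPolynomial σ k)) := by
  let evalPoints : homogeneousSubmodule σ k n →ₗ[k] ι → k :=
    LinearMap.pi fun i => (aeval (v i)).toLinearMap ∘ₗ (homogeneousSubmodule σ k n).subtype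
  refine surjective_of_forall_exists_apply_ne_zero evalPoints fun i => ?_
  obtain ⟨F, hF, hFi, hFj⟩ :=
    exists_isHomogeneous_eval_ne_zero_forall_ne_eval_eq_zero hv hind hcard i
  exact ⟨⟨F, hF⟩, hFi, hFj⟩

end Hypersurfaces

/-- `n+2` distinct non-collinear points of `ℙ²` over an algebraically closed field impose
independent conditions on curves of degree `n`: the evaluation map from degree-`n` homogeneous
polynomials in `k[X₀,X₁,X₂]` to `k^{n+2}` is surjective. -/
theorem noncollinear_points_impose_independent_conditions
    (k : Type*) [Field k] [IsAlgClosed k] (n : ℕ)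
    (v : Fin (n + 2) → (Fin 3 → k))
    (hv : ∀ i, v i ≠ 0)
    (hind : ∀ i j, i ≠ j → LinearIndependent k ![v i, v j])
    (hncol : ¬ ∃ W : Submodule k (Fin 3 → k), Module.finrank k W = 2 ∧ ∀ i, v i ∈ W) :
    Function.Surjective
      (fun F : MvPolynomial.homogeneousSubmodule (Fin 3) k n =>
        fun i : Fin (n + 2) => MvPolynomial.eval (v i) (F : MvPolynomial (Fin 3) k)) := by
  have hspan := two_lt_finrank_span_range (hind 0 1 (by simp)) hncol
  exact noncollinear_points_impose_independent_conditions_general n v hv hind (by simp; omega)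
end

section
/- Let $k$ be an algebraically closed field and let $f \in k[X_0, X_1, X_2]$ be an irreducible homogeneous polynomial of degree $d \geq 1$ such that the only common zero in $k^3$ of $f$ and its three partial derivatives $\partial f/\partial X_0, \partial f/\partial X_1, \partial f/\partial X_2$ is the origin (i.e., the plane curve $C = V(f) \subset \mathbb{P}^2_k$ is smooth). Then the homogeneous coordinate ring $k[X_0, X_1, X_2]/(f)$ is an integrally closed domain. (This is the content of the projective normality of the smooth plane curve $C$: for all $n > 0$, the restriction map $H^0(\mathbb{P}^2_k, \mathcal{O}(n)) \to H^0(C, \mathcal{O}_C(n))$ is surjective.) -/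
/-!
Let `A = k[X]/(f)` and let `x` in its fraction field be integral over `A`. Where `∂f/∂Xᵢ` is
invertible, `A` is étale over the polynomial ring in the remaining variables, hence normal, so a
power of `∂f/∂Xᵢ` multiplies `x` into `A`. Smoothness and the Nullstellensatz then show that powers
of all `Xⱼ` do so too. As `A` has depth at least two at the origin (`Xⱼᵐ` and `Xₗⁿ` have no common
factor modulo `Xᵢ`), this forces `x ∈ A`.
-/

open scoped Polynomial TensorProduct

section SimpleRoot

open Polynomial

variable {R S T : Type*} [CommRing R] [CommRing S] [CommRing T] [Algebra R S] [Algebra R T]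

/-- `x` is a simple root of `F`, in the sense suited to rings with nilpotents: `F'(x)` is required
to be a unit, not merely nonzero. -/
def IsSimpleRoot (F : R[X]) (x : S) : Prop :=
  aeval x F = 0 ∧ IsUnit (aeval x (derivative F))

theorem IsSimpleRoot.map {F : R[X]} {x : S} (hx : IsSimpleRoot F x) (φ : S →ₐ[R] T) :
    IsSimpleRoot F (φ x) :=
  ⟨by rw [aeval_algHom_apply, hx.1, map_zero], by rw [aeval_algHom_apply]; exact hx.2.map φ⟩

theorem IsSimpleRoot.eq_of_isNilpotent_sub {F : R[X]} {x y : S} (hx : IsSimpleRoot F x)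
    (hy : IsSimpleRoot F y) (hxy : IsNilpotent (x - y)) : x = y :=
  (existsUnique_nilpotent_sub_and_aeval_eq_zero (hx.1 ▸ IsNilpotent.zero) hx.2).unique
    ⟨by rw [sub_self]; exact IsNilpotent.zero, hx.1⟩ ⟨hxy, hy.1⟩

theorem IsSimpleRoot.existsUnique_mk_eq {F : R[X]} {I : Ideal S} (hI : IsNilpotent I) {y : S ⧸ I}
    (hy : IsSimpleRoot F y) : ∃! x : S, IsSimpleRoot F x ∧ Ideal.Quotient.mk I x = y := by
  have isNilpotent_of_mem {a : S} (ha : a ∈ I) : IsNilpotent a := by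
    obtain ⟨n, hn⟩ := hI
    exact ⟨n, (Submodule.mem_bot S).mp (hn.le (Ideal.pow_mem_pow ha n))⟩
  obtain ⟨x₀, rfl⟩ := Ideal.Quotient.mk_surjective y
  have mk_aeval (p : R[X]) :
      Ideal.Quotient.mk I (aeval x₀ p) = aeval (Ideal.Quotient.mk I x₀) p :=
    (aeval_algHom_apply (Ideal.Quotient.mkₐ R I) x₀ p).symm
  have isNilpotent_aeval : IsNilpotent (aeval x₀ F) :=
    isNilpotent_of_mem (Ideal.Quotient.eq_zero_iff_mem.mp (by rw [mk_aeval, hy.1]))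
  have isUnit_aeval_derivative : IsUnit (aeval x₀ (derivative F)) := by
    rw [← IsNilpotent.isUnit_quotient_mk_iff hI, mk_aeval]
    exact hy.2
  obtain ⟨x, ⟨hx₀x, hx⟩, -⟩ :=
    existsUnique_nilpotent_sub_and_aeval_eq_zero isNilpotent_aeval isUnit_aeval_derivative
  have hx_simple : IsSimpleRoot F x :=
    ⟨hx, isUnit_aeval_of_isUnit_aeval_of_isNilpotent_sub isUnit_aeval_derivative
      (by rw [← neg_sub]; exact hx₀x.neg)⟩
  have hx_mk : Ideal.Quotient.mk I x = Ideal.Quotient.mk I x₀ :=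
    (hx_simple.map (Ideal.Quotient.mkₐ R I)).eq_of_isNilpotent_sub hy
      (by simpa using (hx₀x.map (Ideal.Quotient.mk I)).neg)
  refine ⟨x, ⟨hx_simple, hx_mk⟩, fun z ⟨hz, hz_mk⟩ ↦ hz.eq_of_isNilpotent_sub hx_simple ?_⟩
  exact isNilpotent_of_mem (Ideal.Quotient.eq.mp (hz_mk.trans hx_mk.symm))

/-- The `R`-algebra `R[x]/(F)` localised at `F'(x)`, which is universal among `R`-algebras with a
simple root of `F`. -/
abbrev SimpleRootAlgebra (F : R[X]) : Type _ :=
  Localization.Away (AdjoinRoot.mk F (derivative F))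

namespace SimpleRootAlgebra

/-- The universal simple root of `F`. -/
noncomputable def root (F : R[X]) : SimpleRootAlgebra F :=
  algebraMap (AdjoinRoot F) _ (AdjoinRoot.root F)

theorem isSimpleRoot_root (F : R[X]) : IsSimpleRoot F (root F) := by
  have aeval_root (p : R[X]) : aeval (root F) p = algebraMap _ _ (AdjoinRoot.mk F p) := by
    rw [root, aeval_algebraMap_apply, AdjoinRoot.aeval_eq]
  refine ⟨by rw [aeval_root, AdjoinRoot.mk_self, map_zero], ?_⟩
  rw [aeval_root]
  exact IsLocalization.Away.algebraMap_isUnit _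

theorem algHom_ext {F : R[X]} {u v : SimpleRootAlgebra F →ₐ[R] S}
    (h : u (root F) = v (root F)) : u = v :=
  IsLocalization.algHom_ext (.powers (AdjoinRoot.mk F (derivative F)))
    (AdjoinRoot.algHom_ext h)

theorem exists_algHom_root_eq {F : R[X]} {x : S} (hx : IsSimpleRoot F x) :
    ∃ u : SimpleRootAlgebra F →ₐ[R] S, u (root F) = x := by
  let u₀ : AdjoinRoot F →ₐ[R] S := AdjoinRoot.liftAlgHom F (Algebra.ofId R S) x hx.1
  have hu₀ : IsUnit (u₀ (AdjoinRoot.mk F (derivative F))) := hx.2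
  exact ⟨IsLocalization.Away.liftAlgHom (AdjoinRoot.mk F (derivative F)) hu₀, by
    simp only [root, IsLocalization.Away.liftAlgHom_apply, IsLocalization.Away.lift_eq]
    exact AdjoinRoot.liftAlgHom_root _ _ _ hx.1⟩

instance formallyEtale (F : R[X]) : Algebra.FormallyEtale R (SimpleRootAlgebra F) := by
  rw [Algebra.FormallyEtale.iff_comp_bijective]
  refine fun C _ _ I hI ↦ ⟨fun u v huv ↦ ?_, fun w ↦ ?_⟩
  · have hv := (isSimpleRoot_root F).map ((Ideal.Quotient.mkₐ R I).comp v)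
    refine algHom_ext ((hv.existsUnique_mk_eq ⟨2, hI⟩).unique
      ⟨(isSimpleRoot_root F).map u, DFunLike.congr_fun huv (root F)⟩
      ⟨(isSimpleRoot_root F).map v, rfl⟩)
  · obtain ⟨x, ⟨hx, hxw⟩, -⟩ := ((isSimpleRoot_root F).map w).existsUnique_mk_eq ⟨2, hI⟩
    obtain ⟨u, rfl⟩ := exists_algHom_root_eq hx
    exact ⟨u, algHom_ext hxw⟩

instance etale (F : R[X]) : Algebra.Etale R (SimpleRootAlgebra F) where
  finitePresentation :=
    have : Algebra.FinitePresentation R (AdjoinRoot F) :=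
      .quotient (Submodule.fg_span_singleton F)
    have : Algebra.FinitePresentation (AdjoinRoot F) (SimpleRootAlgebra F) :=
      IsLocalization.Away.finitePresentation (AdjoinRoot.mk F (derivative F))
    .trans R (AdjoinRoot F) _

end SimpleRootAlgebra

end SimpleRoot

section Etale

variable (R S : Type*) [CommRing R] [IsDomain R] [CommRing S] [IsDomain S] [Algebra R S]

theorem isFractionRing_tensorProduct_fractionRing_of_etale [Algebra.Etale R S] :
    IsFractionRing S (S ⊗[R] FractionRing R) := by
  let K := FractionRing R
  have hM : Algebra.algebraMapSubmonoid S (nonZeroDivisors R) ≤ nonZeroDivisors S :=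
    map_le_nonZeroDivisors_of_injective _ (FaithfulSMul.algebraMap_injective R S) le_rfl
  have : IsDomain (S ⊗[R] K) := IsLocalization.isDomain_of_le_nonZeroDivisors _ hM
  have isField : IsField (S ⊗[R] K) := by
    let e := Algebra.TensorProduct.comm R K S
    have : IsDomain (K ⊗[R] S) := e.toMulEquiv.isDomain
    have : Module.Finite K (K ⊗[R] S) := Algebra.FormallyUnramified.finite_of_free K _
    have : IsArtinianRing (K ⊗[R] S) := .of_finite K _
    exact e.symm.toMulEquiv.isField (IsArtinianRing.isField_of_isDomain _)
  refine IsLocalization.of_le _ _ hM fun s hs ↦ ?_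
  let := isField.toField
  exact IsUnit.mk0 _ fun h ↦ nonZeroDivisors.ne_zero hs
    ((IsLocalization.injective (S ⊗[R] K) hM) (h.trans (map_zero _).symm))

theorem isIntegrallyClosed_of_etale [IsIntegrallyClosed R] [Algebra.Etale R S] :
    IsIntegrallyClosed S := by
  let K := FractionRing R
  have := isFractionRing_tensorProduct_fractionRing_of_etale R S
  have algebraMap_surj : Function.Surjective (algebraMap R (integralClosure R K)) := fun z ↦
    (IsIntegrallyClosed.algebraMap_eq_of_integral z.2).imp fun _ ↦ Subtype.ext
  rw [isIntegrallyClosed_iff (S ⊗[R] K)]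
  intro x hx
  -- Integral closure commutes with étale base change: `x` comes from `S ⊗[R] integralClosure R K`.
  obtain ⟨y, hy⟩ := TensorProduct.toIntegralClosure_bijective_of_smooth.surjective ⟨x, hx⟩
  obtain ⟨s, rfl⟩ := Algebra.TensorProduct.includeLeft_surjective
    (S := S) (A := S) algebraMap_surj y
  exact ⟨s, congrArg Subtype.val hy⟩

end Etale

theorem isIntegrallyClosed_simpleRootAlgebra {R : Type*} [CommRing R] [IsDomain R]
    [IsIntegrallyClosed R] {F : R[X]} [IsDomain (AdjoinRoot F)]
    (hF : AdjoinRoot.mk F F.derivative ≠ 0) : IsIntegrallyClosed (SimpleRootAlgebra F) :=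
  have : IsDomain (SimpleRootAlgebra F) :=
    IsLocalization.isDomain_localization (powers_le_nonZeroDivisors_of_noZeroDivisors hF)
  isIntegrallyClosed_of_etale R _

section DenominatorIdeal

/-- The ideal of all `a : A` with `a x ∈ A`, for an element `x` of an `A`-algebra such as the
fraction field. -/
def denominatorIdeal (A : Type*) {K : Type*} [CommRing A] [CommRing K] [Algebra A K] (x : K) :
    Ideal A :=
  (1 : Submodule A K).colon {x}

variable {A K : Type*} [CommRing A] [CommRing K] [Algebra A K]

theorem mem_denominatorIdeal {x : K} {a : A} :
    a ∈ denominatorIdeal A x ↔ ∃ b, algebraMap A K b = algebraMap A K a * x := by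
  rw [denominatorIdeal, Submodule.mem_colon_singleton, Submodule.mem_one, Algebra.smul_def]

theorem mem_radical_denominatorIdeal_of_isIntegral [IsDomain A] [IsFractionRing A K] {g : A}
    (hg : g ≠ 0) [IsIntegrallyClosed (Localization.Away g)] {x : K} (hx : IsIntegral A x) :
    g ∈ (denominatorIdeal A x).radical := by
  have hg' : Submonoid.powers g ≤ nonZeroDivisors A :=
    powers_le_nonZeroDivisors_of_noZeroDivisors hg
  let : Algebra (Localization.Away g) K :=
    IsLocalization.localizationAlgebraOfSubmonoidLe _ _ _ _ hg'
  have : IsScalarTower A (Localization.Away g) K :=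
    IsLocalization.localization_isScalarTower_of_submonoid_le _ _ _ _ hg'
  have : IsFractionRing (Localization.Away g) K :=
    IsFractionRing.isFractionRing_of_isDomain_of_isLocalization (.powers g) _ _
  obtain ⟨y, rfl⟩ := IsIntegrallyClosed.algebraMap_eq_of_integral
    (hx.tower_top (A := Localization.Away g))
  obtain ⟨n, a, ha⟩ := IsLocalization.Away.surj g y
  refine ⟨n, mem_denominatorIdeal.mpr ⟨a, ?_⟩⟩
  rw [IsScalarTower.algebraMap_apply A (Localization.Away g) K, ← ha, map_mul, map_pow,
    ← IsScalarTower.algebraMap_apply, map_pow, mul_comm]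

theorem exists_algebraMap_eq_of_pow_mem_denominatorIdeal [IsDomain K] [FaithfulSMul A K]
    {a b c : A} (ha : a ≠ 0) (habc : ∀ z, a ∣ b * z → a ∣ c * z → a ∣ z) {x : K} {n : ℕ}
    (hax : a ^ n ∈ denominatorIdeal A x) (hbx : b ∈ denominatorIdeal A x)
    (hcx : c ∈ denominatorIdeal A x) : ∃ y, algebraMap A K y = x := by
  simp only [mem_denominatorIdeal, map_pow] at hax hbx hcx
  have algebraMap_inj := FaithfulSMul.algebraMap_injective A K
  have dvd_mul_of_algebraMap_eq {n : ℕ} {s t z : A}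
      (hz : algebraMap A K z = algebraMap A K a ^ (n + 1) * x)
      (ht : algebraMap A K t = algebraMap A K s * x) : a ∣ s * z :=
    ⟨a ^ n * t, algebraMap_inj <| by simp only [map_mul, map_pow, hz, ht]; ring⟩
  obtain ⟨u, hu⟩ := hbx
  obtain ⟨v, hv⟩ := hcx
  induction n with
  | zero => simpa using hax
  | succ n ih =>
    obtain ⟨z, hz⟩ := hax
    obtain ⟨w, rfl⟩ := habc z (dvd_mul_of_algebraMap_eq hz hu) (dvd_mul_of_algebraMap_eq hz hv)
    refine ih ⟨w, mul_left_cancel₀ ((map_ne_zero_iff _ algebraMap_inj).mpr ha) ?_⟩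
    rw [← map_mul, hz, pow_succ', mul_assoc]

end DenominatorIdeal

theorem dvd_of_dvd_mul_of_dvd_mul_of_isRelPrime {M : Type*} [CommMonoidWithZero M]
    [IsCancelMulZero M] [DecompositionMonoid M] {x y c d : M} (hxy : IsRelPrime x y)
    (hx : d ∣ x * c) (hy : d ∣ y * c) : d ∣ c := by
  obtain ⟨p, q, hpx, ⟨c, rfl⟩, rfl⟩ := exists_dvd_and_dvd_of_dvd_mul hx
  rcases eq_or_ne q 0 with rfl | hq
  · simp
  have hp : p ∣ y * c := by
    rwa [mul_left_comm, mul_comm p, mul_dvd_mul_iff_left hq] at hy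
  rw [mul_comm p]
  exact mul_dvd_mul_left q ((hxy.of_dvd_left hpx).dvd_of_dvd_mul_left hp)

section Quotient

variable {P Q : Type*} [CommRing P] [CommRing Q] {φ : P →+* Q} {t : P}

theorem mk_dvd_mk_iff_map_dvd_map (hφ : Function.Surjective φ)
    (ht : RingHom.ker φ = Ideal.span {t}) {f p : P} :
    Ideal.Quotient.mk (Ideal.span {f}) t ∣ Ideal.Quotient.mk (Ideal.span {f}) p ↔
      φ f ∣ φ p := by
  have map_eq_zero_iff {r : P} : φ r = 0 ↔ t ∣ r := by
    rw [← RingHom.mem_ker, ht, Ideal.mem_span_singleton]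
  constructor
  · rintro ⟨q, hq⟩
    obtain ⟨q, rfl⟩ := Ideal.Quotient.mk_surjective q
    rw [← map_mul, Ideal.Quotient.mk_eq_mk_iff_sub_mem, Ideal.mem_span_singleton] at hq
    simpa [map_eq_zero_iff.mpr dvd_rfl] using map_dvd φ hq
  · rintro ⟨r, hr⟩
    obtain ⟨r, rfl⟩ := hφ r
    have ht_dvd : t ∣ p - f * r := map_eq_zero_iff.mp (by rw [map_sub, map_mul, hr, sub_self])
    simpa using map_dvd (Ideal.Quotient.mk (Ideal.span {f})) ht_dvd

theorem mk_dvd_of_isRelPrime_map [IsCancelMulZero Q] [DecompositionMonoid Q]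
    (hφ : Function.Surjective φ) (ht : RingHom.ker φ = Ideal.span {t}) {f b c : P}
    (hbc : IsRelPrime (φ b) (φ c)) {z : P ⧸ Ideal.span {f}}
    (hb : Ideal.Quotient.mk _ t ∣ Ideal.Quotient.mk _ b * z)
    (hc : Ideal.Quotient.mk _ t ∣ Ideal.Quotient.mk _ c * z) : Ideal.Quotient.mk _ t ∣ z := by
  obtain ⟨z, rfl⟩ := Ideal.Quotient.mk_surjective z
  rw [← map_mul, mk_dvd_mk_iff_map_dvd_map hφ ht, map_mul] at hb hc
  exact (mk_dvd_mk_iff_map_dvd_map hφ ht).mpr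
    (dvd_of_dvd_mul_of_dvd_mul_of_isRelPrime hbc hb hc)

end Quotient

section MvPolynomial

open MvPolynomial

variable {R σ : Type*} [CommRing R]

section PolynomialIn

variable [DecidableEq σ] (i : σ)

/-- `R[X_j : j ∈ σ]` as the ring of polynomials in the single variable `X_i` over
`R[X_j : j ≠ i]`. -/
noncomputable def polynomialIn : MvPolynomial σ R ≃ₐ[R] (MvPolynomial {j // j ≠ i} R)[X] :=
  (renameEquiv R (Equiv.optionSubtypeNe i).symm).trans (optionEquivLeft R _)

theorem polynomialIn_C (a : R) : polynomialIn i (C a) = Polynomial.C (C a) := by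
  simp [polynomialIn]

theorem polynomialIn_X_self :
    polynomialIn i (X i : MvPolynomial σ R) = Polynomial.X := by
  simp [polynomialIn]

theorem polynomialIn_X_of_ne {j : σ} (hj : j ≠ i) :
    polynomialIn i (X j : MvPolynomial σ R) = Polynomial.C (X ⟨j, hj⟩) := by
  simp [polynomialIn, hj]

theorem polynomialIn_pderiv (f : MvPolynomial σ R) :
    polynomialIn i (pderiv i f) = (polynomialIn i f).derivative := by
  induction f using MvPolynomial.induction_on with
  | C a => simp [polynomialIn_C]
  | add p q hp hq => simp only [map_add, hp, hq]
  | mul_X p j hp =>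
    rw [pderiv_mul, map_add, map_mul, map_mul, map_mul, Polynomial.derivative_mul, hp]
    rcases eq_or_ne j i with rfl | hj
    · simp [polynomialIn_X_self]
    · simp [polynomialIn_X_of_ne i hj, pderiv_X_of_ne hj]

end PolynomialIn

theorem isRelPrime_X_X [IsDomain R] {i j : σ} (hij : i ≠ j) :
    IsRelPrime (X i : MvPolynomial σ R) (X j) := by
  rw [X_prime.irreducible.isRelPrime_iff_not_dvd, X_dvd_X]
  exact hij

/-- The coordinate ring of the affine hypersurface `V(f)`; for homogeneous `f` this is the
homogeneous coordinate ring of the projective hypersurface. -/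
abbrev CoordinateRing (f : MvPolynomial σ R) : Type _ :=
  MvPolynomial σ R ⧸ Ideal.span {f}

/-- The ideal of the singular locus of the hypersurface `V(f)`. -/
noncomputable def singularIdeal (f : MvPolynomial σ R) : Ideal (MvPolynomial σ R) :=
  Ideal.span (insert f (Set.range fun i ↦ pderiv i f))

theorem X_mem_radical_singularIdeal {k : Type*} (K : Type*) [Field k] [Field K] [IsAlgClosed K]
    [Algebra k K] [Finite σ] {f : MvPolynomial σ k}
    (hf : ∀ v : σ → K, aeval v f = 0 → (∀ i, aeval v (pderiv i f) = 0) → v = 0) (i : σ) :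
    X i ∈ (singularIdeal f).radical := by
  rw [← vanishingIdeal_zeroLocus_eq_radical (K := K), mem_vanishingIdeal_iff, singularIdeal,
    zeroLocus_span]
  intro v hv
  have hv_zero : v = 0 := hf v (hv f (Set.mem_insert ..))
    fun j ↦ hv _ (Set.mem_insert_of_mem _ (Set.mem_range_self j))
  rw [aeval_X, hv_zero, Pi.zero_apply]

theorem exists_mk_X_ne_zero [IsDomain R] [Nontrivial σ] {f : MvPolynomial σ R} (hf : ¬IsUnit f) :
    ∃ i : σ, Ideal.Quotient.mk (Ideal.span {f}) (X i) ≠ 0 := by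
  by_contra! h
  obtain ⟨i, j, hij⟩ := exists_pair_ne σ
  simp only [Ideal.Quotient.eq_zero_iff_mem, Ideal.mem_span_singleton] at h
  exact hf (isRelPrime_X_X hij (h i) (h j))

variable [IsDomain R] [UniqueFactorizationMonoid R] {f : MvPolynomial σ R}

theorem isIntegrallyClosed_away_mk_pderiv [IsDomain (CoordinateRing f)] {i : σ}
    (hi : Ideal.Quotient.mk (Ideal.span {f}) (pderiv i f) ≠ 0) :
    IsIntegrallyClosed (Localization.Away (Ideal.Quotient.mk (Ideal.span {f}) (pderiv i f))) := by
  classical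
  let F := polynomialIn i f
  let e : CoordinateRing f ≃+* AdjoinRoot F :=
    Ideal.quotientEquiv _ _ (polynomialIn i).toRingEquiv
      (by rw [Ideal.map_span, Set.image_singleton]; rfl)
  have e_mk_pderiv :
      e (Ideal.Quotient.mk _ (pderiv i f)) = AdjoinRoot.mk F F.derivative :=
    congrArg (AdjoinRoot.mk F) (polynomialIn_pderiv i f)
  have : IsDomain (AdjoinRoot F) := e.symm.toMulEquiv.isDomain
  have : IsIntegrallyClosed (SimpleRootAlgebra F) :=
    isIntegrallyClosed_simpleRootAlgebra (by rwa [← e_mk_pderiv, map_ne_zero_iff e e.injective])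
  have map_powers : (Submonoid.powers (AdjoinRoot.mk F F.derivative)).map e.symm.toMonoidHom =
      .powers (Ideal.Quotient.mk _ (pderiv i f)) := by
    rw [Submonoid.map_powers, ← e_mk_pderiv]
    exact congrArg _ (e.symm_apply_apply _)
  exact .of_equiv (IsLocalization.ringEquivOfRingEquiv (SimpleRootAlgebra F) _ e.symm map_powers)

theorem mk_X_dvd_of_dvd_pow_mul {i j l : σ} (hji : j ≠ i) (hli : l ≠ i) (hjl : j ≠ l) (m n : ℕ)
    {z : CoordinateRing f}
    (hj : Ideal.Quotient.mk _ (X i) ∣ Ideal.Quotient.mk _ (X j) ^ m * z)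
    (hl : Ideal.Quotient.mk _ (X i) ∣ Ideal.Quotient.mk _ (X l) ^ n * z) :
    Ideal.Quotient.mk _ (X i) ∣ z := by
  classical
  let φ : MvPolynomial σ R →+* MvPolynomial {j // j ≠ i} R :=
    Polynomial.constantCoeff.comp (polynomialIn i).toRingHom
  have hφ : Function.Surjective φ :=
    Polynomial.constantCoeff_surjective.comp (polynomialIn i).surjective
  have ker_φ : RingHom.ker φ = Ideal.span {X i} := by
    ext p
    rw [← RingHom.comap_ker, Polynomial.ker_constantCoeff, Ideal.mem_comap,
      Ideal.mem_span_singleton, Ideal.mem_span_singleton, ← polynomialIn_X_self]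
    exact map_dvd_iff (polynomialIn i)
  have φ_X {j : σ} (hj : j ≠ i) : φ (X j) = X ⟨j, hj⟩ := by
    simp [φ, polynomialIn_X_of_ne i hj]
  have hrel : IsRelPrime (φ (X j ^ m)) (φ (X l ^ n)) := by
    rw [map_pow, map_pow, φ_X hji, φ_X hli]
    exact (isRelPrime_X_X (by simpa using hjl)).pow
  rw [← map_pow] at hj hl
  exact mk_dvd_of_isRelPrime_map hφ ker_φ hrel hj hl

section IntegralElement

variable {K : Type*} [CommRing K] [Algebra (CoordinateRing f) K]

theorem singularIdeal_le_radical_comap_denominatorIdeal [IsDomain (CoordinateRing f)]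
    [IsFractionRing (CoordinateRing f) K] {x : K} (hx : IsIntegral (CoordinateRing f) x) :
    singularIdeal f ≤
      ((denominatorIdeal (CoordinateRing f) x).comap (Ideal.Quotient.mk _)).radical := by
  rw [singularIdeal, Ideal.span_le, Set.insert_subset_iff, Set.range_subset_iff]
  simp only [← Ideal.comap_radical, SetLike.mem_coe, Ideal.mem_comap]
  refine ⟨by rw [Ideal.Quotient.mk_singleton_self]; exact zero_mem _, fun i ↦ ?_⟩
  rcases eq_or_ne (Ideal.Quotient.mk (Ideal.span {f}) (pderiv i f)) 0 with hi | hi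
  · rw [hi]
    exact zero_mem _
  · have := isIntegrallyClosed_away_mk_pderiv hi
    exact mem_radical_denominatorIdeal_of_isIntegral hi hx

theorem exists_algebraMap_eq_of_X_mem_radical [IsDomain K] [FaithfulSMul (CoordinateRing f) K]
    {i j l : σ} (hji : j ≠ i) (hli : l ≠ i) (hjl : j ≠ l)
    (hi : Ideal.Quotient.mk (Ideal.span {f}) (X i) ≠ 0) {x : K}
    (hx : ∀ i,
      X i ∈ ((denominatorIdeal (CoordinateRing f) x).comap (Ideal.Quotient.mk _)).radical) :
    ∃ y, algebraMap (CoordinateRing f) K y = x := by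
  simp only [← Ideal.comap_radical, Ideal.mem_comap] at hx
  obtain ⟨_, hi_mem⟩ := hx i
  obtain ⟨m, hj_mem⟩ := hx j
  obtain ⟨n, hl_mem⟩ := hx l
  exact exists_algebraMap_eq_of_pow_mem_denominatorIdeal hi
    (fun _ ↦ mk_X_dvd_of_dvd_pow_mul hji hli hjl m n) hi_mem hj_mem hl_mem

end IntegralElement

theorem isIntegrallyClosed_coordinateRing_of_X_mem_radical_singularIdeal (hσ : 3 ≤ ENat.card σ)
    [IsDomain (CoordinateRing f)] (hX : ∀ i, X i ∈ (singularIdeal f).radical) :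
    IsIntegrallyClosed (CoordinateRing f) := by
  have : Nontrivial σ := (ENat.one_lt_card_iff_nontrivial σ).mp (lt_of_lt_of_le (by norm_num) hσ)
  have hf : ¬IsUnit f := fun h ↦
    Ideal.Quotient.nontrivial_iff.mp inferInstance (Ideal.span_singleton_eq_top.mpr h)
  obtain ⟨i, hi⟩ := exists_mk_X_ne_zero hf
  obtain ⟨j, hji, -⟩ := ENat.exists_ne_ne_of_three_le hσ i i
  obtain ⟨l, hlj, hli⟩ := ENat.exists_ne_ne_of_three_le hσ j i
  rw [isIntegrallyClosed_iff (FractionRing (CoordinateRing f))]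
  exact fun hx ↦ exists_algebraMap_eq_of_X_mem_radical hji hli hlj.symm hi fun i ↦
    Ideal.radical_le_radical_iff.mpr (singularIdeal_le_radical_comap_denominatorIdeal hx) (hX i)

theorem smooth_plane_curve_coordinate_ring_integrally_closed_general {k K : Type*} [Field k]
    [Field K] [IsAlgClosed K] [Algebra k K] [Finite σ] (hσ : 3 ≤ ENat.card σ)
    {f : MvPolynomial σ k} (hirr : Irreducible f)
    (hsm : ∀ v : σ → K, aeval v f = 0 → (∀ i, aeval v (pderiv i f) = 0) → v = 0) :
    IsDomain (CoordinateRing f) ∧ IsIntegrallyClosed (CoordinateRing f) := by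
  have : (Ideal.span {f}).IsPrime := (Ideal.span_singleton_prime hirr.ne_zero).mpr hirr.prime
  have : IsDomain (CoordinateRing f) := Ideal.Quotient.isDomain _
  exact ⟨this, isIntegrallyClosed_coordinateRing_of_X_mem_radical_singularIdeal hσ
    (X_mem_radical_singularIdeal K hsm)⟩

end MvPolynomial

/-- The homogeneous coordinate ring `k[X₀,X₁,X₂]/(f)` of a smooth plane curve `V(f) ⊆ ℙ²_k`
over an algebraically closed field is an integrally closed domain (projective normality). -/
theorem smooth_plane_curve_coordinate_ring_integrally_closed
    (k : Type*) [Field k] [IsAlgClosed k] (d : ℕ) (hd : 1 ≤ d)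
    (f : MvPolynomial (Fin 3) k) (hf : f.IsHomogeneous d)
    (hirr : Irreducible f)
    (hsm : ∀ v : Fin 3 → k, MvPolynomial.eval v f = 0 →
      (∀ i : Fin 3, MvPolynomial.eval v (MvPolynomial.pderiv i f) = 0) → v = 0) :
    IsDomain (MvPolynomial (Fin 3) k ⧸ Ideal.span {f}) ∧
      IsIntegrallyClosed (MvPolynomial (Fin 3) k ⧸ Ideal.span {f}) :=
  smooth_plane_curve_coordinate_ring_integrally_closed_general (K := k) (by simp) hirr hsm
end

section
/- Let $k$ be an algebraically closed field and let $C \subset \mathbb{P}^2_k$ be a smooth plane curve of degree $d$. Let $p_1, \dots, p_m$ be distinct points of $C$ with $m \leq d-2$, and let $\mathcal{L} = \mathcal{O}_C(p_1 + \cdots + p_m)$. Then $h^0(C, \mathcal{L}) = 1$. -/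
/-!
Framework: a smooth plane curve of degree `d` over an algebraically closed field `k` is
`C = V(f) ⊆ ℙ²_k` for `f ∈ k[X₀,X₁,X₂]` homogeneous of degree `d` whose only common zero
with its partial derivatives is the origin.  We realize the points of `C`, the order of
vanishing at a point of `C` of a homogeneous polynomial, Riemann–Roch spaces `L(D)` of
divisors on `C` (inside the fraction field `F` of the homogeneous coordinate ring of `C`,
as the degree-zero fractions `g/h` with `div(g/h) + D ≥ 0`), and `h⁰(C, O_C(D)) = dim L(D)`.
-/

noncomputable section PlaneCurve

variable {k : Type*} [Field k]

/-- The points of the plane curve `V(f) ⊆ ℙ²_k`: points of the projectivization of `k³`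
whose (fixed) representative vector is a zero of `f`.  (For homogeneous `f` this is
independent of the representative.) -/
def PlanePoint (f : MvPolynomial (Fin 3) k) : Type _ :=
  { p : Projectivization k (Fin 3 → k) // MvPolynomial.eval p.rep f = 0 }

open Classical in
/-- The inhomogeneous polynomial `ℓ - 1`, where `ℓ` is a linear form with `ℓ(v) = 1`;
the hyperplane `ℓ = 1` is an affine chart of `ℙ²` containing the point `[v]`. -/
def slicePoly (v : Fin 3 → k) : MvPolynomial (Fin 3) k :=
  if hv : ∃ i, v i ≠ 0 then
    MvPolynomial.C (v hv.choose)⁻¹ * MvPolynomial.X hv.choose - 1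
  else 0

/-- The order of vanishing, at the point `p` of the curve `C = V(f)`, of the restriction
to `C` of a homogeneous polynomial `g`: in the affine chart `ℓ = 1` of `ℙ²` containing `p`,
it is the largest `n` such that, locally at `p` (i.e., after multiplying by some polynomial
not vanishing at `p`), `g` lies in the `n`-th power of the maximal ideal of `p` on the
affine curve `{f = 0, ℓ = 1}`. -/
def ordAt (f : MvPolynomial (Fin 3) k) (p : PlanePoint f) (g : MvPolynomial (Fin 3) k) : ℕ :=
  sSup { n : ℕ | ∃ h : MvPolynomial (Fin 3) k, MvPolynomial.eval p.1.rep h ≠ 0 ∧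
    h * g ∈ Ideal.span {f, slicePoly p.1.rep} +
      (RingHom.ker (MvPolynomial.eval p.1.rep)) ^ n }

variable (F : Type*) [CommRing F]

/-- The Riemann–Roch space `L(D) = H⁰(C, O_C(D))` of a divisor `D` on the smooth plane
curve `C = V(f)`, realized inside the fraction field `F` of the homogeneous coordinate ring
`k[X₀,X₁,X₂]/(f)` of `C`: it consists of `0` together with all degree-zero fractions `g/h`
(`g`, `h` homogeneous of the same degree, neither divisible by `f`) with `div(g/h) + D ≥ 0`. -/
def RRspace (f : MvPolynomial (Fin 3) k)
    [Algebra (MvPolynomial (Fin 3) k ⧸ Ideal.span {f}) F]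
    (D : PlanePoint f → ℤ) : Set F :=
  {φ | φ = 0 ∨ ∃ (e : ℕ) (g h : MvPolynomial (Fin 3) k),
    g.IsHomogeneous e ∧ h.IsHomogeneous e ∧ ¬ f ∣ g ∧ ¬ f ∣ h ∧
    φ * algebraMap (MvPolynomial (Fin 3) k ⧸ Ideal.span {f}) F
          (Ideal.Quotient.mk (Ideal.span {f}) h)
      = algebraMap (MvPolynomial (Fin 3) k ⧸ Ideal.span {f}) F
          (Ideal.Quotient.mk (Ideal.span {f}) g) ∧
    ∀ p : PlanePoint f, 0 ≤ (ordAt f p g : ℤ) - (ordAt f p h : ℤ) + D p}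

/-- `h⁰(C, O_C(D))`: the dimension over `k` of the Riemann–Roch space of the divisor `D`. -/
def h0 (f : MvPolynomial (Fin 3) k)
    [Algebra (MvPolynomial (Fin 3) k ⧸ Ideal.span {f}) F] [Algebra k F]
    (D : PlanePoint f → ℤ) : ℕ :=
  Module.finrank k (Submodule.span k (RRspace F f D))

end PlaneCurve

/-!
A section `φ = g / h` of `O_C(p₁ + ⋯ + p_m)` is multiplied into a form by lines through the `pᵢ`:
if `A = L₁ ⋯ L_m` with `Lᵢ` a line through `pᵢ`, then `div (g A) ≥ div h` on `C`, so Max Noether's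
theorem gives `g A ≡ B h` modulo `f` for a form `B` of degree `m`, and `φ = B / A` on `C`.
Replacing `Lᵢ` by another line `Lᵢ'` through `pᵢ` gives in the same way a form `B'` with
`Lᵢ' B ≡ Lᵢ B'` modulo `f`. Both sides have degree `m + 1 < d`, so the congruence is an equality of
forms, whence `Lᵢ ∣ B`. Choosing the lines pairwise distinct, `A ∣ B`, and `φ` is a constant.

Noether's theorem rests on two facts: the local rings of `C` are discrete valuation rings with
valuation `ordAt`, so the inequality of divisors is a divisibility of germs at every point; and
`(h, f)` has no irrelevant component, so a form lying locally in `(h, f)` at each point of `C` lies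
in `(h, f)`.
-/

namespace PlaneCurve

open MvPolynomial
open scoped Matrix

attribute [local instance] MvPolynomial.gradedAlgebra

section LinearForms

variable {k : Type*} [Field k]

theorem prime_of_isHomogeneous_one {σ : Type*} {L : MvPolynomial σ k} (hL : L.IsHomogeneous 1)
    (hL0 : L ≠ 0) : Prime L := by
  refine (irreducible_of_totalDegree_eq_one (hL.totalDegree hL0) fun r hr => ?_).prime
  obtain ⟨s, hs⟩ := ne_zero_iff.1 hL0
  exact (ne_zero_of_dvd_ne_zero hs (hr s)).isUnit

theorem cross_cross_dotProduct_cross_add_smul (v z a b : Fin 3 → k) (s t : k) :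
    (v ⨯₃ (z ⨯₃ (a + s • b))) ⬝ᵥ (z ⨯₃ (a + t • b)) = (t - s) * ((v ⬝ᵥ z) * (z ⬝ᵥ a ⨯₃ b)) := by
  simp [cross_apply, dotProduct, Fin.sum_univ_three]
  ring

theorem exists_dotProduct_cross_ne_zero {z : Fin 3 → k} (hz : z ≠ 0) :
    ∃ a b, z ⬝ᵥ a ⨯₃ b ≠ 0 := by
  contrapose! hz
  ext i
  have := hz (Pi.single (i + 1) 1) (Pi.single (i + 2) 1)
  fin_cases i <;> simpa [cross_apply, dotProduct, Fin.sum_univ_three] using this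

theorem exists_forall_dotProduct_ne_zero [Infinite k] {ι : Type*} [Finite ι] {v : ι → Fin 3 → k}
    (hv : ∀ i, v i ≠ 0) : ∃ z, ∀ i, v i ⬝ᵥ z ≠ 0 :=
  Module.Dual.exists_forall_ne_zero_of_forall_exists (fun i => dotProductEquiv k _ (v i)) fun i =>
    DFunLike.ne_iff.1 ((dotProductEquiv k _).map_ne_zero_iff.2 (hv i))

-- The lines join the points `v i` to distinct points `z ⨯₃ (a + t i • b)` of a line `z` that avoids
-- all the `v i`.
theorem exists_pairwise_not_dvd_lines [Infinite k] {ι : Type*} [Finite ι] {v : ι → Fin 3 → k}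
    (hv : ∀ i, v i ≠ 0) :
    ∃ L : ι → MvPolynomial (Fin 3) k, (∀ i, (L i).IsHomogeneous 1) ∧ (∀ i, L i ≠ 0) ∧
      (∀ i, eval (v i) (L i) = 0) ∧ Pairwise fun i j => ¬ L i ∣ L j := by
  obtain ⟨z, hz⟩ := exists_forall_dotProduct_ne_zero hv
  rcases isEmpty_or_nonempty ι with hι | ⟨⟨i₀⟩⟩
  · exact ⟨0, by simp⟩
  obtain ⟨a, b, hab⟩ := exists_dotProduct_cross_ne_zero (z := z) (by rintro rfl; simpa using hz i₀)
  let t : ι ↪ k :=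
    (Finite.equivFin ι).toEmbedding.trans (Fin.valEmbedding.trans (Infinite.natEmbedding k))
  let M : Matrix ι (Fin 3) k := .of fun i => v i ⨯₃ (z ⨯₃ (a + t i • b))
  have eval_line (i : ι) (x : Fin 3 → k) :
      eval x (M.toMvPolynomial i) = (v i ⨯₃ (z ⨯₃ (a + t i • b))) ⬝ᵥ x :=
    M.toMvPolynomial_eval_eq_apply i x
  have eval_line_ne_zero (j : ι) {s : k} (hs : t j ≠ s) :
      eval (z ⨯₃ (a + s • b)) (M.toMvPolynomial j) ≠ 0 := by
    rw [eval_line, cross_cross_dotProduct_cross_add_smul]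
    exact mul_ne_zero (sub_ne_zero.2 hs.symm) (mul_ne_zero (hz j) hab)
  refine ⟨M.toMvPolynomial, M.toMvPolynomial_isHomogeneous, fun i h => ?_, fun i => ?_,
    fun i j hij hdvd => ?_⟩
  · exact eval_line_ne_zero i (s := t i + 1) (by simp) (by simp [h])
  · rw [eval_line, dotProduct_comm, dot_self_cross]
  · have := map_dvd (eval (z ⨯₃ (a + t i • b))) hdvd
    rw [eval_line i, dotProduct_comm, dot_cross_self, zero_dvd_iff] at this
    exact eval_line_ne_zero j (t.injective.ne hij.symm) this

end LinearForms

section Depth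

theorem mem_span_pair_of_mul_mem_of_mul_mem {R : Type*} [CommRing R] [IsDomain R]
    {f h x y G : R} (hf : Prime f) (hfh : ¬ f ∣ h) (hx : Prime x) (hxy : ¬ x ∣ y)
    (hprime : (Ideal.span {x, y}).IsPrime) (hf_notMem : f ∉ Ideal.span {x, y})
    (hxG : x * G ∈ Ideal.span {h, f}) (hyG : y * G ∈ Ideal.span {h, f}) :
    G ∈ Ideal.span {h, f} := by
  have hfx : ¬ f ∣ x := fun hfx =>
    hf_notMem (Ideal.mem_of_dvd _ ((hf.irreducible.dvd_comm hx.irreducible).1 hfx)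
      (Ideal.subset_span (by simp)))
  obtain ⟨a, b, hxG⟩ := Ideal.mem_span_pair.1 hxG
  obtain ⟨a', b', hyG⟩ := Ideal.mem_span_pair.1 hyG
  obtain ⟨c, hc⟩ : f ∣ y * a - x * a' := by
    refine (hf.dvd_or_dvd (a := h) ⟨x * b' - y * b, ?_⟩).resolve_left hfh
    linear_combination y * hxG - x * hyG
  have hfc : f * c ∈ Ideal.span {x, y} := Ideal.mem_span_pair.2 ⟨-a', a, by linear_combination hc⟩
  obtain ⟨r, s, hrs⟩ := Ideal.mem_span_pair.1 ((hprime.mem_or_mem hfc).resolve_left hf_notMem)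
  obtain ⟨u, hu⟩ : x ∣ a - s * f := by
    refine (hx.dvd_or_dvd (a := y) ⟨a' + r * f, ?_⟩).resolve_left hxy
    linear_combination hc - f * hrs
  obtain ⟨v, hv⟩ : f ∣ G - u * h := by
    refine (hf.dvd_or_dvd (a := x) ⟨b + s * h, ?_⟩).resolve_left hfx
    linear_combination -hxG + h * hu
  exact Ideal.mem_span_pair.2 ⟨u, v, by linear_combination -hv⟩

variable {k : Type*} [Field k]

theorem ker_restrict_line_eq_span {e : Fin 3 → k} (he : e 0 ≠ 0) :
    RingHom.ker (aeval fun j => Polynomial.C (e j) * Polynomial.X :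
        MvPolynomial (Fin 3) k →ₐ[k] Polynomial k) =
      Ideal.span {C (e 0) * X 1 - C (e 1) * X 0, C (e 0) * X 2 - C (e 2) * X 0} := by
  set restrict : MvPolynomial (Fin 3) k →ₐ[k] Polynomial k :=
    aeval fun j => Polynomial.C (e j) * Polynomial.X with restrict_def
  set I : Ideal (MvPolynomial (Fin 3) k) :=
    Ideal.span {C (e 0) * X 1 - C (e 1) * X 0, C (e 0) * X 2 - C (e 2) * X 0}
  let extend : Polynomial k →ₐ[k] MvPolynomial (Fin 3) k := Polynomial.aeval (C (e 0)⁻¹ * X 0)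
  apply le_antisymm
  · have generator_mem (j : Fin 3) : C (e 0) * X j - C (e j) * X 0 ∈ I := by
      fin_cases j
      · simp
      · exact Ideal.subset_span (.inl rfl)
      · exact Ideal.subset_span (.inr rfl)
    have mk_extend_restrict :
        (Ideal.Quotient.mkₐ k I).comp (extend.comp restrict) = Ideal.Quotient.mkₐ k I := by
      ext j
      have hC : C (e 0)⁻¹ * C (e 0) = (1 : MvPolynomial (Fin 3) k) := by simp [← C_mul, he]
      have : extend (restrict (X j)) - X j =
          -C (e 0)⁻¹ * (C (e 0) * X j - C (e j) * X 0) := by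
        simp only [restrict_def, extend, aeval_X, map_mul, Polynomial.aeval_C, Polynomial.aeval_X,
          algebraMap_eq]
        linear_combination X j * hC
      exact Ideal.Quotient.eq.2 (this ▸ I.mul_mem_left _ (generator_mem j))
    intro p hp
    have : Ideal.Quotient.mk I (extend (restrict p)) = Ideal.Quotient.mk I p :=
      congr($mk_extend_restrict p)
    rwa [RingHom.mem_ker.1 hp, map_zero, map_zero, eq_comm,
      Ideal.Quotient.eq_zero_iff_mem] at this
  · rw [Ideal.span_le]
    rintro _ (rfl | rfl) <;> simp [restrict_def] <;> ring

-- The lines through a point `e` off the curve generate a prime ideal that does not contain `f`.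
theorem mem_span_pair_of_forall_X_mul_mem [Infinite k] {f h G : MvPolynomial (Fin 3) k}
    (hf : Prime f) (hfh : ¬ f ∣ h) (hG : ∀ i, X i * G ∈ Ideal.span {h, f}) :
    G ∈ Ideal.span {h, f} := by
  obtain ⟨e, he⟩ : ∃ e, eval e (X 0 * f) ≠ 0 := by
    by_contra! hzero
    exact mul_ne_zero (X_ne_zero 0) hf.ne_zero (MvPolynomial.funext (by simpa using hzero))
  rw [map_mul, eval_X] at he
  have he0 := left_ne_zero_of_mul he
  have hker := ker_restrict_line_eq_span he0
  have mul_mem (j : Fin 3) : (C (e 0) * X j - C (e j) * X 0) * G ∈ Ideal.span {h, f} := by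
    rw [sub_mul, mul_assoc, mul_assoc]
    exact Ideal.sub_mem _ (Ideal.mul_mem_left _ _ (hG j)) (Ideal.mul_mem_left _ _ (hG 0))
  have homogeneous (j : Fin 3) : (C (e 0) * X j - C (e j) * X 0).IsHomogeneous 1 :=
    (isHomogeneous_C_mul_X _ _).sub (isHomogeneous_C_mul_X _ _)
  have ne_zero : (C (e 0) * X 1 - C (e 1) * X 0 : MvPolynomial (Fin 3) k) ≠ 0 := fun h => by
    simpa [he0] using congr(eval (Pi.single 1 1) $h)
  refine mem_span_pair_of_mul_mem_of_mul_mem hf hfh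
    (prime_of_isHomogeneous_one (homogeneous 1) ne_zero) (fun hdvd => ?_)
    (hker ▸ RingHom.ker_isPrime _) (fun hmem => ?_) (mul_mem 1) (mul_mem 2)
  · simpa [he0] using map_dvd (eval (Pi.single 2 1)) hdvd
  · obtain ⟨a, b, rfl⟩ := Ideal.mem_span_pair.1 hmem
    exact right_ne_zero_of_mul he (by simp [mul_comm])

theorem mem_span_pair_of_idealOfVars_le_radical_colon [Infinite k]
    {f h G : MvPolynomial (Fin 3) k} (hf : Prime f) (hfh : ¬ f ∣ h)
    (hG : idealOfVars (Fin 3) k ≤ ((Ideal.span {h, f}).colon {G}).radical) :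
    G ∈ Ideal.span {h, f} := by
  obtain ⟨n, hn⟩ := Ideal.exists_pow_le_of_le_radical_of_fg hG (idealOfVars_fg _ _)
  replace hn : ∀ s ∈ idealOfVars (Fin 3) k ^ n, s * G ∈ Ideal.span {h, f} := fun s hs =>
    Submodule.mem_colon_singleton.1 (hn hs)
  clear hG
  induction n with
  | zero => simpa using hn 1
  | succ n ih =>
    refine ih fun s hs => mem_span_pair_of_forall_X_mul_mem hf hfh fun i => ?_
    rw [← mul_assoc]
    exact hn _ (pow_succ' (idealOfVars (Fin 3) k) n ▸
      Ideal.mul_mem_mul (Ideal.subset_span ⟨i, rfl⟩) hs)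

end Depth

section Homogeneous

variable {σ R : Type*} [CommRing R]

theorem aeval_smul_of_isHomogeneous {S : Type*} [CommRing S] [Algebra R S]
    {p : MvPolynomial σ R} {n : ℕ} (hp : p.IsHomogeneous n) (c : S) (x : σ → S) :
    aeval (c • x) p = c ^ n * aeval x p := by
  simp only [aeval_def, eval₂_eq, Finset.mul_sum]
  refine Finset.sum_congr rfl fun d hd => ?_
  have hd : ∑ i ∈ d.support, d i = n := (hp.degree_eq_sum_deg_support hd).symm
  simp only [Pi.smul_apply, smul_eq_mul, mul_pow, Finset.prod_mul_distrib,
    Finset.prod_pow_eq_pow_sum, hd]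
  ring

theorem eval_smul_of_isHomogeneous {p : MvPolynomial σ R} {n : ℕ} (hp : p.IsHomogeneous n)
    (c : R) (x : σ → R) : eval (c • x) p = c ^ n * eval x p :=
  aeval_smul_of_isHomogeneous hp c x

theorem homogeneousComponent_add_mul {g : MvPolynomial σ R} {e : ℕ} (hg : g.IsHomogeneous e)
    (p : MvPolynomial σ R) (n : ℕ) :
    homogeneousComponent (n + e) (p * g) = homogeneousComponent n p * g := by
  have := DirectSum.coe_decompose_mul_add_of_right_mem (homogeneousSubmodule σ R) (i := n) (a := p)
    hg
  have decompose_eq (p : MvPolynomial σ R) (n : ℕ) :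
      (DirectSum.decompose (homogeneousSubmodule σ R) p n : MvPolynomial σ R) =
        homogeneousComponent n p :=
    decomposition.decompose'_apply p n
  rwa [decompose_eq, decompose_eq] at this

theorem isHomogeneous_span_singleton {g : MvPolynomial σ R} {n : ℕ} (hg : g.IsHomogeneous n) :
    (Ideal.span {g}).IsHomogeneous (homogeneousSubmodule σ R) :=
  Ideal.homogeneous_span _ _ <| by rintro _ rfl; exact ⟨n, hg⟩

theorem isHomogeneous_span_pair {g h : MvPolynomial σ R} {m n : ℕ} (hg : g.IsHomogeneous m)
    (hh : h.IsHomogeneous n) :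
    (Ideal.span {g, h}).IsHomogeneous (homogeneousSubmodule σ R) :=
  Ideal.homogeneous_span _ _ <| by rintro _ (rfl | rfl); exacts [⟨m, hg⟩, ⟨n, hh⟩]

theorem exists_isHomogeneous_dvd_sub_mul {f g h : MvPolynomial σ R} {d m n : ℕ}
    (hf : f.IsHomogeneous d) (hh : h.IsHomogeneous n) (hg : g.IsHomogeneous (m + n))
    (hgh : g ∈ Ideal.span {h, f}) :
    ∃ b : MvPolynomial σ R, b.IsHomogeneous m ∧ f ∣ g - b * h := by
  obtain ⟨a, b, hab⟩ := Ideal.mem_span_pair.1 hgh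
  refine ⟨homogeneousComponent m a, homogeneousComponent_isHomogeneous m a, ?_⟩
  have : homogeneousComponent (m + n) (b * f) = g - homogeneousComponent m a * h := by
    rw [← homogeneousComponent_add_mul hh, eq_sub_of_add_eq' hab, map_sub,
      homogeneousComponent_of_mem hg, if_pos rfl]
  rw [← this, ← Ideal.mem_span_singleton]
  exact homogeneousComponent_mem_of_mem (isHomogeneous_span_singleton hf)
    (Ideal.mem_span_singleton.2 (dvd_mul_left f b)) _

end Homogeneous

section Degree

variable {σ R : Type*} [CommRing R] [IsDomain R]

theorem exists_eq_C_mul_of_dvd {A B : MvPolynomial σ R} {n : ℕ} (hA : A.IsHomogeneous n)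
    (hB : B.IsHomogeneous n) (hAB : A ∣ B) :
    ∃ c, B = C c * A := by
  obtain ⟨c, rfl⟩ := hAB
  obtain h0 | h0 := eq_or_ne (A * c) 0
  · exact ⟨0, by rw [h0, C_0, zero_mul]⟩
  have hdeg := totalDegree_mul_of_isDomain (left_ne_zero_of_mul h0) (right_ne_zero_of_mul h0)
  rw [hB.totalDegree h0, hA.totalDegree (left_ne_zero_of_mul h0), left_eq_add,
    totalDegree_eq_zero_iff_eq_C] at hdeg
  exact ⟨_, by rw [← hdeg, mul_comm]⟩

theorem eq_of_dvd_sub_of_lt_totalDegree {f A B : MvPolynomial σ R} {n : ℕ}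
    (hA : A.IsHomogeneous n) (hB : B.IsHomogeneous n) (hn : n < f.totalDegree)
    (hfAB : f ∣ A - B) : A = B := by
  by_contra hAB
  have := totalDegree_le_of_dvd_of_isDomain hfAB (sub_ne_zero.2 hAB)
  rw [(hA.sub hB).totalDegree (sub_ne_zero.2 hAB)] at this
  exact this.not_gt hn

end Degree

section Dehomogenization

variable {σ R : Type*} [CommRing R]

/-- The substitution `X i ↦ X i / ℓ`, which restricts a polynomial to the affine chart `ℓ = 1`
when `ℓ` is a linear form: it sends a homogeneous `g` of degree `e` to `g / ℓ ^ e`. -/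
noncomputable def dehomogenize (ℓ : MvPolynomial σ R) :
    MvPolynomial σ R →ₐ[R] Localization.Away ℓ :=
  aeval fun i => IsLocalization.Away.invSelf ℓ *
    algebraMap (MvPolynomial σ R) (Localization.Away ℓ) (X i)

variable {ℓ : MvPolynomial σ R}

theorem dehomogenize_of_isHomogeneous {g : MvPolynomial σ R} {e : ℕ} (hg : g.IsHomogeneous e) :
    dehomogenize ℓ g =
      IsLocalization.Away.invSelf ℓ ^ e * algebraMap _ (Localization.Away ℓ) g := by
  have hX : aeval (fun i => algebraMap (MvPolynomial σ R) (Localization.Away ℓ) (X i)) g =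
      algebraMap _ _ g :=
    (aeval_algebraMap_apply _ X g).trans (congrArg _ (aeval_X_left_apply g))
  exact hX ▸ aeval_smul_of_isHomogeneous hg _ _

theorem dehomogenize_self (hℓ : ℓ.IsHomogeneous 1) : dehomogenize ℓ ℓ = 1 := by
  rw [dehomogenize_of_isHomogeneous hℓ, pow_one, mul_comm, IsLocalization.Away.mul_invSelf]

theorem lift_dehomogenize {S : Type*} [CommRing S] (φ : MvPolynomial σ R →+* S) (hφ : φ ℓ = 1)
    (p : MvPolynomial σ R) :
    IsLocalization.Away.lift (S := Localization.Away ℓ) ℓ (g := φ) (by simp [hφ])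
      (dehomogenize ℓ p) = φ p := by
  have hu : IsUnit (φ ℓ) := by simp [hφ]
  set lift := IsLocalization.Away.lift (S := Localization.Away ℓ) ℓ hu
  have lift_algebraMap (q : MvPolynomial σ R) : lift (algebraMap _ _ q) = φ q :=
    IsLocalization.Away.lift_eq ℓ hu q
  have lift_invSelf : lift (IsLocalization.Away.invSelf ℓ) = 1 := by
    have := congr(lift $(IsLocalization.Away.mul_invSelf (S := Localization.Away ℓ) ℓ))
    rwa [map_mul, lift_algebraMap, hφ, one_mul, map_one] at this
  have : lift.comp (dehomogenize ℓ : MvPolynomial σ R →+* Localization.Away ℓ) = φ := by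
    refine ringHom_ext (fun r => ?_) fun i => ?_
    · rw [← algebraMap_eq]
      simpa [IsScalarTower.algebraMap_apply R (MvPolynomial σ R) (Localization.Away ℓ)]
        using lift_algebraMap (C r)
    · simp [dehomogenize, lift_invSelf, lift_algebraMap]
  exact congr($this p)

theorem comap_dehomogenize_map {P : Ideal (MvPolynomial σ R)}
    (hP : P.IsHomogeneous (homogeneousSubmodule σ R)) (hℓ : ℓ.IsHomogeneous 1) :
    (P.map (algebraMap _ (Localization.Away ℓ))).comap (dehomogenize ℓ) =
      P ⊔ Ideal.span {ℓ - 1} := by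
  apply le_antisymm
  · intro p hp
    set I := P ⊔ Ideal.span {ℓ - 1}
    have hmk : Ideal.Quotient.mk I ℓ = 1 :=
      Ideal.Quotient.eq.2 (Ideal.mem_sup_right (Ideal.mem_span_singleton_self _))
    rw [← Ideal.Quotient.eq_zero_iff_mem, ← lift_dehomogenize _ hmk, ← RingHom.mem_ker]
    refine Ideal.map_le_iff_le_comap.2 (fun q hq => ?_) hp
    rw [Ideal.mem_comap, RingHom.mem_ker, IsLocalization.Away.lift_eq,
      Ideal.Quotient.eq_zero_iff_mem]
    exact Ideal.mem_sup_left hq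
  · refine sup_le (fun p hp => ?_) ?_
    · rw [← sum_homogeneousComponent p]
      refine Ideal.sum_mem _ fun n _ => ?_
      rw [Ideal.mem_comap, dehomogenize_of_isHomogeneous (homogeneousComponent_isHomogeneous n p)]
      exact Ideal.mul_mem_left _ _
        (Ideal.mem_map_of_mem _ (homogeneousComponent_mem_of_mem hP hp n))
    · rw [Ideal.span_singleton_le_iff_mem, Ideal.mem_comap, map_sub, dehomogenize_self hℓ, map_one,
        sub_self]
      exact zero_mem _

theorem isPrime_sup_span_sub_one {P : Ideal (MvPolynomial σ R)} [P.IsPrime]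
    (hP : P.IsHomogeneous (homogeneousSubmodule σ R)) (hℓ : ℓ.IsHomogeneous 1) (hℓP : ℓ ∉ P) :
    (P ⊔ Ideal.span {ℓ - 1}).IsPrime := by
  have : (P.map (algebraMap _ (Localization.Away ℓ))).IsPrime :=
    IsLocalization.isPrime_of_isPrime_disjoint (.powers ℓ) _ P ‹_›
      ((Ideal.disjoint_powers_iff_notMem _ (Ideal.IsPrime.isRadical ‹_›)).2 hℓP)
  exact comap_dehomogenize_map hP hℓ ▸ Ideal.comap_isPrime _ _

theorem exists_eval_eq_mul_mem {P : Ideal (MvPolynomial σ R)}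
    (hP : P.IsHomogeneous (homogeneousSubmodule σ R)) (hℓ : ℓ.IsHomogeneous 1) {v : σ → R}
    (hv : eval v ℓ = 1) {s g : MvPolynomial σ R} {e : ℕ} (hg : g.IsHomogeneous e)
    (hsg : s * g ∈ P ⊔ Ideal.span {ℓ - 1}) :
    ∃ t, eval v t = eval v s ∧ t * g ∈ P := by
  rw [← comap_dehomogenize_map hP hℓ, Ideal.mem_comap, map_mul,
    dehomogenize_of_isHomogeneous hg] at hsg
  have hℓℓ := IsLocalization.Away.mul_invSelf (S := Localization.Away ℓ) ℓ
  obtain ⟨n, t, ht⟩ := IsLocalization.Away.surj ℓ (dehomogenize ℓ s)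
  have htg : algebraMap _ (Localization.Away ℓ) (t * g) ∈ P.map (algebraMap _ _) := by
    convert Ideal.mul_mem_left _ (algebraMap _ (Localization.Away ℓ) ℓ ^ (n + e)) hsg using 1
    rw [map_mul, ← ht]
    have := congr($hℓℓ ^ e)
    rw [mul_pow, one_pow] at this
    linear_combination -(dehomogenize ℓ s) * algebraMap _ (Localization.Away ℓ) ℓ ^ n *
      algebraMap _ (Localization.Away ℓ) g * this
  obtain ⟨_, ⟨N, rfl⟩, hN⟩ :=
    (IsLocalization.algebraMap_mem_map_algebraMap_iff (.powers ℓ) _ _ _).1 htg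
  refine ⟨ℓ ^ N * t, ?_, mul_assoc (ℓ ^ N) t g ▸ hN⟩
  have := congr(IsLocalization.Away.lift ℓ (g := eval v) (by simp [hv]) $ht)
  rw [map_mul, map_pow, IsLocalization.Away.lift_eq, IsLocalization.Away.lift_eq,
    lift_dehomogenize _ hv, hv, one_pow, mul_one] at this
  rw [map_mul, map_pow, hv, one_pow, one_mul, this]

end Dehomogenization

section Taylor

variable {σ R : Type*} [CommRing R]

theorem X_sub_C_mem_ker_eval (v : σ → R) (i : σ) : X i - C (v i) ∈ RingHom.ker (eval v) := by
  simp [RingHom.mem_ker]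

theorem sub_taylor_mem_ker_eval_sq [Fintype σ] (v : σ → R) (p : MvPolynomial σ R) :
    p - (C (eval v p) + ∑ i, C (eval v (pderiv i p)) * (X i - C (v i))) ∈
      RingHom.ker (eval v) ^ 2 := by
  classical
  set M := RingHom.ker (eval v)
  induction p using MvPolynomial.induction_on with
  | C a => simp
  | add p q hp hq =>
    convert Ideal.add_mem _ hp hq using 1
    simp only [map_add, add_mul, Finset.sum_add_distrib]
    ring
  | mul_X p j hp =>
    set D := ∑ i, C (eval v (pderiv i p)) * (X i - C (v i))
    have leibniz : ∑ i, C (eval v (pderiv i (p * X j))) * (X i - C (v i)) =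
        C (v j) * D + C (eval v p) * (X j - C (v j)) := by
      simp [D, Pi.single_apply, apply_ite, add_mul, Finset.sum_add_distrib, Finset.mul_sum,
        mul_assoc, add_comm]
    have hD : D * (X j - C (v j)) ∈ M ^ 2 := pow_two M ▸ Ideal.mul_mem_mul
      (Ideal.sum_mem _ fun i _ => Ideal.mul_mem_left _ _ (X_sub_C_mem_ker_eval v i))
      (X_sub_C_mem_ker_eval v j)
    convert Ideal.add_mem _ (Ideal.mul_mem_left _ (X j) hp) hD using 1
    rw [leibniz, map_mul, eval_X, map_mul]
    ring

theorem ker_eval_le_span_sup_sq [Finite σ] (v : σ → R) :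
    RingHom.ker (eval v) ≤
      Ideal.span (Set.range fun i => X i - C (v i)) ⊔ RingHom.ker (eval v) ^ 2 := by
  have := Fintype.ofFinite σ
  intro p hp
  have := sub_taylor_mem_ker_eval_sq v p
  rw [RingHom.mem_ker.1 hp, map_zero, zero_add] at this
  rw [← add_sub_cancel (∑ i, C (eval v (pderiv i p)) * (X i - C (v i))) p]
  exact Submodule.add_mem_sup (Ideal.sum_mem _ fun i _ =>
    Ideal.mul_mem_left _ _ (Ideal.subset_span ⟨i, rfl⟩)) this

end Taylor

section DiscreteValuationRing

open IsLocalRing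

theorem maximalIdeal_eq_span_singleton {R : Type*} [CommRing R] [IsLocalRing R]
    [IsNoetherianRing R] {t : R} (ht : t ∈ maximalIdeal R)
    (hle : maximalIdeal R ≤ Ideal.span {t} ⊔ maximalIdeal R ^ 2) :
    maximalIdeal R = Ideal.span {t} :=
  le_antisymm
    (Submodule.le_of_le_smul_of_le_jacobson_bot (Ideal.fg_of_isNoetherianRing _)
      (maximalIdeal_le_jacobson _) (by rwa [pow_two] at hle))
    ((Ideal.span_singleton_le_iff_mem _).2 ht)

theorem mem_maximalIdeal_pow_iff_le_addVal {R : Type*} [CommRing R] [IsDomain R]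
    [IsDiscreteValuationRing R] {x : R} {n : ℕ} :
    x ∈ maximalIdeal R ^ n ↔ n ≤ IsDiscreteValuationRing.addVal R x := by
  obtain ⟨ϖ, hϖ⟩ := IsDiscreteValuationRing.exists_irreducible R
  rw [hϖ.maximalIdeal_eq, Ideal.span_singleton_pow, Ideal.mem_span_singleton,
    ← IsDiscreteValuationRing.addVal_le_iff_dvd, hϖ.addVal_pow]

end DiscreteValuationRing

section LocalRing

variable {k : Type*} [Field k]

theorem exists_slicePoly_eq {v : Fin 3 → k} (hv : v ≠ 0) :
    ∃ i, v i ≠ 0 ∧ slicePoly v = C (v i)⁻¹ * X i - 1 := by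
  have h : ∃ i, v i ≠ 0 := Function.ne_iff.1 hv
  exact ⟨h.choose, h.choose_spec, by rw [slicePoly, dif_pos h]⟩

variable {f : MvPolynomial (Fin 3) k}

/-- The ideal of the affine curve `{f = 0, ℓ = 1}` containing `q`, where `slicePoly` is `ℓ - 1`. -/
noncomputable def chartIdeal (q : PlanePoint f) : Ideal (MvPolynomial (Fin 3) k) :=
  Ideal.span {f, slicePoly q.1.rep}

theorem chartIdeal_le_ker_eval (q : PlanePoint f) :
    chartIdeal q ≤ RingHom.ker (eval q.1.rep) := by
  obtain ⟨i, hi, hslice⟩ := exists_slicePoly_eq q.1.rep_nonzero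
  rw [chartIdeal, Ideal.span_le]
  rintro _ (rfl | rfl)
  · exact q.2
  · simp [hslice, RingHom.mem_ker, hi]

theorem exists_chartIdeal_eq_sup (q : PlanePoint f) :
    ∃ ℓ : MvPolynomial (Fin 3) k, ℓ.IsHomogeneous 1 ∧ eval q.1.rep ℓ = 1 ∧
      chartIdeal q = Ideal.span {f} ⊔ Ideal.span {ℓ - 1} := by
  obtain ⟨i, hi, hslice⟩ := exists_slicePoly_eq q.1.rep_nonzero
  exact ⟨_, isHomogeneous_C_mul_X (q.1.rep i)⁻¹ i, by simp [hi], by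
    rw [chartIdeal, hslice, Ideal.span_insert]⟩

/-- Evaluation at `q` on the coordinate ring of the affine curve `chartIdeal q`; its kernel is the
maximal ideal of `q`. -/
noncomputable def evalAt (q : PlanePoint f) : MvPolynomial (Fin 3) k ⧸ chartIdeal q →+* k :=
  Ideal.Quotient.lift _ (eval q.1.rep) (chartIdeal_le_ker_eval q)

instance isPrime_ker_evalAt (q : PlanePoint f) : (RingHom.ker (evalAt q)).IsPrime :=
  RingHom.ker_isPrime _

/-- The local ring of the curve `V(f)` at `q`, as a localization of the coordinate ring of the
affine curve `chartIdeal q`. -/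
abbrev LocalRing (q : PlanePoint f) : Type _ := Localization.AtPrime (RingHom.ker (evalAt q))

/-- The germ at `q` of a polynomial restricted to the affine curve `chartIdeal q`. For a homogeneous
polynomial this is a local equation at `q` of its divisor on `V(f)`. -/
noncomputable def germ (q : PlanePoint f) : MvPolynomial (Fin 3) k →+* LocalRing q :=
  (algebraMap _ (LocalRing q)).comp (Ideal.Quotient.mk (chartIdeal q))

variable {q : PlanePoint f} {g h : MvPolynomial (Fin 3) k}

theorem map_germ_ker_eval (q : PlanePoint f) :
    (RingHom.ker (eval q.1.rep)).map (germ q) = IsLocalRing.maximalIdeal (LocalRing q) := by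
  have hker : (RingHom.ker (eval q.1.rep)).map (Ideal.Quotient.mk (chartIdeal q)) =
      RingHom.ker (evalAt q) :=
    (Ideal.ker_quotient_lift _ (chartIdeal_le_ker_eval q)).symm
  rw [germ, ← Ideal.map_map, hker, IsLocalization.AtPrime.map_eq_maximalIdeal]

theorem germ_mem_map_germ_iff {J : Ideal (MvPolynomial (Fin 3) k)} :
    germ q g ∈ J.map (germ q) ↔ ∃ s, eval q.1.rep s ≠ 0 ∧ s * g ∈ chartIdeal q ⊔ J := by
  rw [germ, ← Ideal.map_map, RingHom.comp_apply,
    IsLocalization.algebraMap_mem_map_algebraMap_iff (RingHom.ker (evalAt q)).primeCompl,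
    Ideal.Quotient.mk_surjective.exists]
  refine exists_congr fun s => and_congr Iff.rfl ?_
  rw [← map_mul, Ideal.mem_quotient_iff_mem_sup, sup_comm]

theorem germ_mem_maximalIdeal_pow_iff {n : ℕ} :
    germ q g ∈ IsLocalRing.maximalIdeal (LocalRing q) ^ n ↔
      ∃ s, eval q.1.rep s ≠ 0 ∧ s * g ∈ chartIdeal q ⊔ RingHom.ker (eval q.1.rep) ^ n := by
  rw [← map_germ_ker_eval, ← Ideal.map_pow, germ_mem_map_germ_iff]

theorem ordAt_eq_sSup_germ_mem :
    ordAt f q g = sSup {n | germ q g ∈ IsLocalRing.maximalIdeal (LocalRing q) ^ n} :=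
  congrArg sSup (Set.ext fun _ => germ_mem_maximalIdeal_pow_iff.symm)

theorem exists_mul_mem_span_pair_of_germ_dvd {d m n : ℕ} (hf : f.IsHomogeneous d)
    (hh : h.IsHomogeneous m) (hg : g.IsHomogeneous n) (hdvd : germ q h ∣ germ q g) :
    ∃ t, eval q.1.rep t ≠ 0 ∧ t * g ∈ Ideal.span {h, f} := by
  obtain ⟨ℓ, hℓ, hℓ_eval, hchart⟩ := exists_chartIdeal_eq_sup q
  rw [← Ideal.mem_span_singleton, ← Set.image_singleton, ← Ideal.map_span,
    germ_mem_map_germ_iff, hchart] at hdvd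
  obtain ⟨s, hs, hsg⟩ := hdvd
  rw [sup_comm, ← sup_assoc, ← Ideal.span_insert] at hsg
  obtain ⟨t, ht, htg⟩ := exists_eval_eq_mul_mem (isHomogeneous_span_pair hh hf) hℓ hℓ_eval hg hsg
  exact ⟨t, ht ▸ hs, htg⟩

theorem germ_prod_mem_maximalIdeal_pow {ι : Type*} [Fintype ι] {p : ι → PlanePoint f}
    [DecidablePred fun i => p i = q] {M : ι → MvPolynomial (Fin 3) k}
    (hM : ∀ i, eval (p i).1.rep (M i) = 0) :
    germ q (∏ i, M i) ∈
      IsLocalRing.maximalIdeal (LocalRing q) ^ (Finset.univ.filter fun i => p i = q).card := by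
  rw [← Finset.prod_filter_mul_prod_filter_not _ fun i => p i = q, map_mul, map_prod,
    ← Finset.prod_const]
  refine Ideal.mul_mem_right _ _ (Ideal.prod_mem_prod fun i hi => ?_)
  rw [← map_germ_ker_eval]
  refine Ideal.mem_map_of_mem _ ?_
  rw [RingHom.mem_ker, ← (Finset.mem_filter.1 hi).2, hM]

end LocalRing

section Smooth

open IsDiscreteValuationRing

variable {k : Type*} [Field k]

/-- `V(f)` is a smooth plane curve: `f` is an irreducible homogeneous polynomial whose only common
zero with its partial derivatives is the origin. Irreducibility, which smoothness implies over an
algebraically closed field, is required explicitly so that `k` can be arbitrary. -/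
class IsSmoothPlaneCurve (f : MvPolynomial (Fin 3) k) : Prop where
  isHomogeneous : f.IsHomogeneous f.totalDegree
  prime : Prime f
  eq_zero_of_eval_pderiv_eq_zero :
    ∀ v, eval v f = 0 → (∀ i, eval v (pderiv i f) = 0) → v = 0

open IsSmoothPlaneCurve

variable {f : MvPolynomial (Fin 3) k} [IsSmoothPlaneCurve f]

theorem exists_eval_pderiv_ne_zero (q : PlanePoint f) {i : Fin 3} (hi : q.1.rep i ≠ 0) :
    ∃ j ≠ i, eval q.1.rep (pderiv j f) ≠ 0 := by
  by_contra! hj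
  have euler : ∑ j, q.1.rep j * eval q.1.rep (pderiv j f) = 0 := by
    have := congr(eval q.1.rep $(IsSmoothPlaneCurve.isHomogeneous (f := f).sum_X_mul_pderiv))
    simpa only [map_sum, map_mul, eval_X, map_nsmul, q.2, smul_zero] using this
  rw [Finset.sum_eq_single i (fun j _ hji => by rw [hj j hji, mul_zero]) (by simp)] at euler
  refine q.1.rep_nonzero (eq_zero_of_eval_pderiv_eq_zero (f := f) _ q.2 fun j => ?_)
  obtain rfl | hji := eq_or_ne j i
  exacts [(mul_eq_zero.1 euler).resolve_left hi, hj j hji]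

-- If `X i` is constant on the chart and `∂f/∂X j` does not vanish at `q`, the remaining coordinate
-- is a uniformizer.
theorem exists_ker_eval_le_chartIdeal_sup_span_sup_sq (q : PlanePoint f) :
    ∃ t ∈ RingHom.ker (eval q.1.rep), RingHom.ker (eval q.1.rep) ≤
      chartIdeal q ⊔ Ideal.span {t} ⊔ RingHom.ker (eval q.1.rep) ^ 2 := by
  obtain ⟨i, hi, hslice⟩ := exists_slicePoly_eq q.1.rep_nonzero
  obtain ⟨j, hji, hj⟩ := exists_eval_pderiv_ne_zero q hi
  have third : ∀ i j : Fin 3, j ≠ i → ∃ l, ∀ m, m = i ∨ m = l ∨ m = j := by decide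
  obtain ⟨l, hl⟩ := third i j hji
  set v := q.1.rep
  set M := RingHom.ker (eval v)
  refine ⟨X l - C (v l), X_sub_C_mem_ker_eval v l,
    (ker_eval_le_span_sup_sq v).trans (sup_le ?_ le_sup_right)⟩
  set J := chartIdeal q ⊔ Ideal.span {X l - C (v l)} ⊔ M ^ 2
  have chartIdeal_le : chartIdeal q ≤ J := le_sup_left.trans le_sup_left
  have mem_i : X i - C (v i) ∈ J := by
    have : X i - C (v i) = C (v i) * slicePoly v := by
      rw [hslice, mul_sub, ← mul_assoc, ← C_mul, mul_inv_cancel₀ hi, C_1, one_mul, mul_one]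
    rw [this]
    exact J.mul_mem_left _ (chartIdeal_le (Ideal.subset_span (.inr rfl)))
  have mem_l : X l - C (v l) ∈ J :=
    Ideal.mem_sup_left (Ideal.mem_sup_right (Ideal.mem_span_singleton_self _))
  have differential_mem : ∑ m, C (eval v (pderiv m f)) * (X m - C (v m)) ∈ J := by
    have taylor := sub_taylor_mem_ker_eval_sq v f
    rw [q.2, map_zero, zero_add] at taylor
    exact (Submodule.sub_mem_iff_right J (chartIdeal_le (Ideal.subset_span (.inl rfl)))).1
      (Ideal.mem_sup_right taylor)
  have mem_j : X j - C (v j) ∈ J := by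
    rw [← Finset.add_sum_erase _ _ (Finset.mem_univ j)] at differential_mem
    refine (J.unit_mul_mem_iff_mem ((isUnit_iff_ne_zero.2 hj).map C)).1
      ((Submodule.add_mem_iff_left J (Ideal.sum_mem _ fun m hm => ?_)).1 differential_mem)
    obtain rfl | rfl | rfl := hl m
    exacts [J.mul_mem_left _ mem_i, J.mul_mem_left _ mem_l, absurd rfl (Finset.ne_of_mem_erase hm)]
  rw [Ideal.span_le]
  rintro _ ⟨m, rfl⟩
  obtain rfl | rfl | rfl := hl m
  exacts [mem_i, mem_l, mem_j]

theorem isPrincipal_maximalIdeal_localRing (q : PlanePoint f) :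
    (IsLocalRing.maximalIdeal (LocalRing q)).IsPrincipal := by
  obtain ⟨t, ht, hle⟩ := exists_ker_eval_le_chartIdeal_sup_span_sup_sq q
  have chartIdeal_map : (chartIdeal q).map (germ q) = ⊥ := by
    rw [germ, ← Ideal.map_map, Ideal.map_quotient_self, Ideal.map_bot]
  have := Ideal.map_mono (f := germ q) hle
  rw [Ideal.map_sup, Ideal.map_sup, chartIdeal_map, bot_sup_eq, Ideal.map_span,
    Set.image_singleton, Ideal.map_pow, map_germ_ker_eval] at this
  exact ⟨germ q t, maximalIdeal_eq_span_singleton (R := LocalRing q)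
    (map_germ_ker_eval q ▸ Ideal.mem_map_of_mem _ ht) this⟩

instance isPrime_chartIdeal (q : PlanePoint f) : (chartIdeal q).IsPrime := by
  obtain ⟨ℓ, hℓ, hℓ_eval, hchart⟩ := exists_chartIdeal_eq_sup q
  have hf := prime (f := f)
  have : (Ideal.span {f}).IsPrime := (Ideal.span_singleton_prime hf.ne_zero).2 hf
  refine hchart ▸ isPrime_sup_span_sub_one (isHomogeneous_span_singleton isHomogeneous) hℓ
    fun hℓf => ?_
  have := map_dvd (eval q.1.rep) (Ideal.mem_span_singleton.1 hℓf)
  simp [q.2, hℓ_eval] at this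

instance isDomain_localRing (q : PlanePoint f) : IsDomain (LocalRing q) :=
  IsLocalization.isDomain_localization (Ideal.primeCompl_le_nonZeroDivisors _)

variable {q : PlanePoint f} {g : MvPolynomial (Fin 3) k}

theorem germ_ne_zero {n : ℕ} (hg : g.IsHomogeneous n) (hfg : ¬ f ∣ g) : germ q g ≠ 0 := by
  intro hzero
  obtain ⟨t, ht, htg⟩ := exists_mul_mem_span_pair_of_germ_dvd isHomogeneous
    (isHomogeneous_zero _ _ 0) hg (q := q) (by rw [hzero, map_zero])
  rw [Ideal.span_insert, Ideal.span_singleton_zero, bot_sup_eq, Ideal.mem_span_singleton] at htg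
  obtain hft | hfg' := (prime (f := f)).dvd_or_dvd htg
  · have := map_dvd (eval q.1.rep) hft
    simp [q.2, ht] at this
  · exact hfg hfg'

theorem exists_eval_eq_zero_germ_ne_zero [Infinite k] (q : PlanePoint f) :
    ∃ L : MvPolynomial (Fin 3) k, eval q.1.rep L = 0 ∧ germ q L ≠ 0 := by
  obtain ⟨L, hL, hL0, hLq, hLdvd⟩ :=
    exists_pairwise_not_dvd_lines fun _ : Bool => q.1.rep_nonzero
  by_cases hf : f ∣ L true
  · refine ⟨L false, hLq false, germ_ne_zero (hL false) fun hf' => ?_⟩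
    exact hLdvd Bool.true_eq_false_eq_False ((((prime (f := f)).irreducible.dvd_comm
      (prime_of_isHomogeneous_one (hL true) (hL0 true)).irreducible).1 hf).trans hf')
  · exact ⟨L true, hLq true, germ_ne_zero (hL true) hf⟩

instance isDiscreteValuationRing_localRing [Infinite k] (q : PlanePoint f) :
    IsDiscreteValuationRing (LocalRing q) := by
  obtain ⟨L, hLq, hL⟩ := exists_eval_eq_zero_germ_ne_zero q
  have hfield : ¬ IsField (LocalRing q) := fun h => hL <| by
    rw [← Ideal.mem_bot, ← IsLocalRing.isField_iff_maximalIdeal_eq.1 h, ← map_germ_ker_eval]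
    exact Ideal.mem_map_of_mem _ hLq
  exact ((TFAE (LocalRing q) hfield).out 0 4).2 (isPrincipal_maximalIdeal_localRing q)

end Smooth

section Noether

variable {k : Type*} [Field k] {f g h : MvPolynomial (Fin 3) k} {d m n : ℕ}

theorem exists_planePoint_rep_eq_smul (hf : f.IsHomogeneous d) {x : Fin 3 → k} (hx : x ≠ 0)
    (hfx : eval x f = 0) : ∃ (q : PlanePoint f) (c : k), q.1.rep = c • x := by
  obtain ⟨c, hc⟩ := Projectivization.exists_smul_eq_mk_rep k x hx
  rw [Units.smul_def] at hc
  exact ⟨⟨.mk k x hx, by rw [← hc, eval_smul_of_isHomogeneous hf, hfx, mul_zero]⟩, c, hc.symm⟩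

theorem exists_mem_colon_eval_ne_zero (hf : f.IsHomogeneous d) (hh : h.IsHomogeneous m)
    (hg : g.IsHomogeneous n) (hdvd : ∀ q : PlanePoint f, germ q h ∣ germ q g)
    {x : Fin 3 → k} (hx : x ≠ 0) (hfx : eval x f = 0) :
    ∃ s ∈ (Ideal.span {h, f}).colon {g}, eval x s ≠ 0 := by
  obtain ⟨q, c, hc⟩ := exists_planePoint_rep_eq_smul hf hx hfx
  obtain ⟨t, ht, htg⟩ := exists_mul_mem_span_pair_of_germ_dvd hf hh hg (hdvd q)
  rw [← sum_homogeneousComponent t, map_sum] at ht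
  obtain ⟨e, -, he⟩ := Finset.exists_ne_zero_of_sum_ne_zero ht
  refine ⟨homogeneousComponent e t, Submodule.mem_colon_singleton.2 ?_, ?_⟩
  · rw [smul_eq_mul, ← homogeneousComponent_add_mul hg]
    exact homogeneousComponent_mem_of_mem (isHomogeneous_span_pair hh hf) htg _
  · rw [hc, eval_smul_of_isHomogeneous (homogeneousComponent_isHomogeneous e t)] at he
    exact right_ne_zero_of_mul he

-- Max Noether's theorem: by the Nullstellensatz, `g` is multiplied into `(h, f)` by a power of the
-- irrelevant ideal.
theorem mem_span_pair_of_forall_germ_dvd [IsAlgClosed k] (hf : f.IsHomogeneous d)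
    (hf_prime : Prime f) (hh : h.IsHomogeneous m) (hfh : ¬ f ∣ h) (hg : g.IsHomogeneous n)
    (hdvd : ∀ q : PlanePoint f, germ q h ∣ germ q g) : g ∈ Ideal.span {h, f} := by
  refine mem_span_pair_of_idealOfVars_le_radical_colon hf_prime hfh ?_
  rw [← vanishingIdeal_zeroLocus_eq_radical (k := k) (K := k), idealOfVars, Ideal.span_le]
  rintro _ ⟨i, rfl⟩
  refine mem_vanishingIdeal_iff.2 fun x hx => ?_
  by_contra hxi
  have eval_eq_zero {s : MvPolynomial (Fin 3) k} (hs : s ∈ (Ideal.span {h, f}).colon {g}) :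
      eval x s = 0 := hx s hs
  have hx0 : x ≠ 0 := by rintro rfl; simp at hxi
  obtain ⟨s, hs, hsx⟩ := exists_mem_colon_eval_ne_zero hf hh hg hdvd hx0 <| eval_eq_zero <|
    Submodule.mem_colon_singleton.2 (Ideal.mul_mem_right _ _ (Ideal.subset_span (.inr rfl)))
  exact hsx (eval_eq_zero hs)

end Noether

section Order

variable {k : Type*} [Field k] [Infinite k] {f : MvPolynomial (Fin 3) k} [IsSmoothPlaneCurve f]
  {q : PlanePoint f} {g h A : MvPolynomial (Fin 3) k}

open IsDiscreteValuationRing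

theorem coe_ordAt (hg : germ q g ≠ 0) : (ordAt f q g : ℕ∞) = addVal (LocalRing q) (germ q g) := by
  obtain ⟨n, hn⟩ := ENat.ne_top_iff_exists.1 (mt (addVal_eq_top_iff (R := LocalRing q)).1 hg)
  have : {n | germ q g ∈ IsLocalRing.maximalIdeal (LocalRing q) ^ n} = Set.Iic n := by
    ext m
    rw [Set.mem_Iic, ← Nat.cast_le (α := ℕ∞), hn]
    exact mem_maximalIdeal_pow_iff_le_addVal (R := LocalRing q)
  rw [ordAt_eq_sSup_germ_mem, this, csSup_Iic, hn]

theorem ordAt_one (q : PlanePoint f) : ordAt f q 1 = 0 := by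
  have := coe_ordAt (q := q) (g := 1) (by rw [map_one]; exact one_ne_zero)
  rwa [map_one, addVal_one, Nat.cast_eq_zero] at this

theorem germ_dvd_germ_mul {n : ℕ} (hg : germ q g ≠ 0) (hh : germ q h ≠ 0)
    (hA : germ q A ∈ IsLocalRing.maximalIdeal (LocalRing q) ^ n)
    (hord : ordAt f q h ≤ ordAt f q g + n) : germ q h ∣ germ q (g * A) := by
  rw [map_mul, ← addVal_le_iff_dvd (R := LocalRing q), addVal_mul (R := LocalRing q),
    ← coe_ordAt hg, ← coe_ordAt hh]
  have : (n : ℕ∞) ≤ addVal (LocalRing q) (germ q A) := mem_maximalIdeal_pow_iff_le_addVal.1 hA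
  exact (mod_cast hord : (ordAt f q h : ℕ∞) ≤ ordAt f q g + n).trans (by gcongr)

end Order

section CoordinateRing

variable {σ R : Type*} [CommRing R] {f : MvPolynomial σ R} {F : Type*} [CommRing F]
  [Algebra (MvPolynomial σ R ⧸ Ideal.span {f}) F]

theorem algebraMap_mk_eq_zero_iff [IsFractionRing (MvPolynomial σ R ⧸ Ideal.span {f}) F]
    {g : MvPolynomial σ R} :
    algebraMap (MvPolynomial σ R ⧸ Ideal.span {f}) F (Ideal.Quotient.mk _ g) = 0 ↔
      f ∣ g := by
  rw [FaithfulSMul.algebraMap_eq_zero_iff, Ideal.Quotient.eq_zero_iff_mem,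
    Ideal.mem_span_singleton]

theorem algebraMap_mk_C [Algebra R F] [IsScalarTower R (MvPolynomial σ R ⧸ Ideal.span {f}) F]
    (c : R) : algebraMap (MvPolynomial σ R ⧸ Ideal.span {f}) F (Ideal.Quotient.mk _ (C c)) =
      algebraMap R F c :=
  (IsScalarTower.algebraMap_apply R (MvPolynomial σ R ⧸ Ideal.span {f}) F c).symm

theorem prime_of_isFractionRing [IsDomain F]
    [IsFractionRing (MvPolynomial σ R ⧸ Ideal.span {f}) F] (hf : f ≠ 0) :
    Prime f := by
  have : IsDomain (MvPolynomial σ R ⧸ Ideal.span {f}) :=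
    (IsFractionRing.injective (MvPolynomial σ R ⧸ Ideal.span {f}) F).isDomain _
  exact (Ideal.span_singleton_prime hf).1 ((Ideal.Quotient.isDomain_iff_prime _).1 this)

end CoordinateRing

section RiemannRoch

open IsSmoothPlaneCurve

variable {k : Type*} [Field k] [IsAlgClosed k] {f : MvPolynomial (Fin 3) k} [IsSmoothPlaneCurve f]
  {ι : Type*} [Fintype ι] {p : ι → PlanePoint f} {g h : MvPolynomial (Fin 3) k} {e : ℕ}

open Classical in
theorem exists_isHomogeneous_dvd_mul_prod_sub_mul
    (hg : g.IsHomogeneous e) (hh : h.IsHomogeneous e) (hfg : ¬ f ∣ g) (hfh : ¬ f ∣ h)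
    (hord : ∀ q, ordAt f q h ≤ ordAt f q g + (Finset.univ.filter fun i => p i = q).card)
    {M : ι → MvPolynomial (Fin 3) k} (hM : ∀ i, (M i).IsHomogeneous 1)
    (hMp : ∀ i, eval (p i).1.rep (M i) = 0) :
    ∃ B : MvPolynomial (Fin 3) k,
      B.IsHomogeneous (Fintype.card ι) ∧ f ∣ g * ∏ i, M i - B * h := by
  have hprod : (g * ∏ i, M i).IsHomogeneous (Fintype.card ι + e) := by
    simpa [add_comm] using hg.mul (.prod Finset.univ M _ fun i _ => hM i)
  exact exists_isHomogeneous_dvd_sub_mul isHomogeneous hh hprod <|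
    mem_span_pair_of_forall_germ_dvd isHomogeneous prime hh hfh hprod fun q =>
      germ_dvd_germ_mul (germ_ne_zero hg hfg) (germ_ne_zero hh hfh)
        (germ_prod_mem_maximalIdeal_pow hMp) (hord q)

open Classical in
-- Replacing the factor `L i` of `∏ j, L j` by another line `L'` through `p i` multiplies the
-- numerator `B` by `L' / L i`, and the new numerator `B'` is again a polynomial.
theorem dvd_of_dvd_mul_prod_sub_mul (hcard : Fintype.card ι + 2 ≤ f.totalDegree)
    (hg : g.IsHomogeneous e) (hh : h.IsHomogeneous e) (hfg : ¬ f ∣ g) (hfh : ¬ f ∣ h)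
    (hord : ∀ q, ordAt f q h ≤ ordAt f q g + (Finset.univ.filter fun i => p i = q).card)
    {L : ι → MvPolynomial (Fin 3) k} (hL : ∀ i, (L i).IsHomogeneous 1)
    (hLp : ∀ i, eval (p i).1.rep (L i) = 0) {i : ι} (hL0 : L i ≠ 0)
    {L' : MvPolynomial (Fin 3) k} (hL' : L'.IsHomogeneous 1) (hL'p : eval (p i).1.rep L' = 0)
    (hLL' : ¬ L i ∣ L') {B : MvPolynomial (Fin 3) k} (hB : B.IsHomogeneous (Fintype.card ι))
    (hAB : f ∣ g * ∏ j, L j - B * h) : L i ∣ B := by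
  obtain ⟨B', hB', hAB'⟩ := exists_isHomogeneous_dvd_mul_prod_sub_mul hg hh hfg hfh hord
    (M := Function.update L i L')
    (Function.forall_update_iff L (p := fun _ M => M.IsHomogeneous 1) |>.2 ⟨hL', fun j _ => hL j⟩)
    (Function.forall_update_iff L (p := fun j M => eval (p j).1.rep M = 0) |>.2
      ⟨hL'p, fun j _ => hLp j⟩)
  have hprod : L' * ∏ j, L j = L i * ∏ j, Function.update L i L' j := by
    rw [Finset.prod_update_of_mem (Finset.mem_univ i), Finset.sdiff_singleton_eq_erase,
      ← Finset.mul_prod_erase _ _ (Finset.mem_univ i), mul_left_comm]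
  have hdvd : f ∣ (L' * B - L i * B') * h := by
    have : (L' * B - L i * B') * h = L i * (g * ∏ j, Function.update L i L' j - B' * h) -
        L' * (g * ∏ j, L j - B * h) := by
      linear_combination g * hprod
    rw [this]
    exact dvd_sub (hAB'.mul_left _) (hAB.mul_left _)
  have heq : L' * B = L i * B' := eq_of_dvd_sub_of_lt_totalDegree (hL'.mul hB) ((hL i).mul hB')
    (by omega) ((prime.dvd_or_dvd hdvd).resolve_right hfh)
  exact ((prime_of_isHomogeneous_one (hL i) hL0).dvd_or_dvd ⟨B', heq⟩).resolve_left hLL'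

open Classical in
theorem exists_dvd_sub_C_mul_of_ordAt_le (hcard : Fintype.card ι + 2 ≤ f.totalDegree)
    (hg : g.IsHomogeneous e) (hh : h.IsHomogeneous e) (hfg : ¬ f ∣ g) (hfh : ¬ f ∣ h)
    (hord : ∀ q, ordAt f q h ≤ ordAt f q g + (Finset.univ.filter fun i => p i = q).card) :
    ∃ c, f ∣ g - C c * h := by
  obtain ⟨L, hL, hL0, hLp, hLdvd⟩ :=
    exists_pairwise_not_dvd_lines fun i : ι × Bool => (p i.1).1.rep_nonzero
  set A := ∏ i, L (i, true)
  have hA : A.IsHomogeneous (Fintype.card ι) := by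
    simpa using IsHomogeneous.prod Finset.univ (fun i => L (i, true)) _ fun i _ => hL (i, true)
  obtain ⟨B, hB, hAB⟩ := exists_isHomogeneous_dvd_mul_prod_sub_mul hg hh hfg hfh hord
    (M := fun i => L (i, true)) (fun i => hL (i, true)) fun i => hLp (i, true)
  have line_dvd (i : ι) : L (i, true) ∣ B :=
    dvd_of_dvd_mul_prod_sub_mul hcard hg hh hfg hfh hord (L := fun i => L (i, true))
      (fun i => hL (i, true)) (fun i => hLp (i, true)) (hL0 (i, true)) (hL (i, false))
      (hLp (i, false)) (hLdvd (by simp)) hB hAB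
  have hdvd : A ∣ B := Finset.prod_dvd_of_isRelPrime (fun i _ j _ hij =>
    (prime_of_isHomogeneous_one (hL _) (hL0 _)).irreducible.isRelPrime_iff_not_dvd.2
      (hLdvd (by simpa using hij))) fun i _ => line_dvd i
  obtain ⟨c, rfl⟩ := exists_eq_C_mul_of_dvd hA hB hdvd
  have hfA : ¬ f ∣ A := fun hfA => Finset.prod_ne_zero_iff.2 (fun i _ => hL0 (i, true)) <|
    eq_of_dvd_sub_of_lt_totalDegree hA (isHomogeneous_zero _ _ _) (by omega)
      ((sub_zero A).symm ▸ hfA)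
  refine ⟨c, (prime.dvd_or_dvd (?_ : f ∣ A * (g - C c * h))).resolve_left hfA⟩
  convert hAB using 1
  ring

open Classical in
theorem RRspace_eq_range_algebraMap (hcard : Fintype.card ι + 2 ≤ f.totalDegree)
    (F : Type*) [Field F]
    [Algebra (MvPolynomial (Fin 3) k ⧸ Ideal.span {f}) F]
    [IsFractionRing (MvPolynomial (Fin 3) k ⧸ Ideal.span {f}) F]
    [Algebra k F] [IsScalarTower k (MvPolynomial (Fin 3) k ⧸ Ideal.span {f}) F] :
    RRspace F f (fun q => ((Finset.univ.filter fun i => p i = q).card : ℤ)) =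
      Set.range (algebraMap k F) := by
  ext φ
  constructor
  · rintro (rfl | ⟨e, g, h, hg, hh, hfg, hfh, hφ, hord⟩)
    · exact ⟨0, map_zero _⟩
    obtain ⟨c, hc⟩ := exists_dvd_sub_C_mul_of_ordAt_le (p := p) hcard hg hh hfg hfh fun q => by
      have := hord q
      dsimp only at this
      omega
    refine ⟨c, mul_right_cancel₀ (mt algebraMap_mk_eq_zero_iff.1 hfh) ?_⟩
    rw [hφ, ← algebraMap_mk_C (f := f), ← map_mul, ← map_mul, ← sub_eq_zero, ← map_sub,
      ← map_sub, algebraMap_mk_eq_zero_iff, dvd_sub_comm]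
    exact hc
  · rintro ⟨c, rfl⟩
    obtain rfl | hc := eq_or_ne c 0
    · exact .inl (map_zero _)
    have hfC {a : k} (ha : a ≠ 0) : ¬ f ∣ C a := fun hfa =>
      (prime (f := f)).not_isUnit (isUnit_of_dvd_unit hfa ((isUnit_iff_ne_zero.2 ha).map C))
    refine .inr ⟨0, C c, 1, isHomogeneous_C _ _, isHomogeneous_one _ _, hfC hc,
      C_1 (σ := Fin 3) (R := k) ▸ hfC one_ne_zero, ?_, fun q => ?_⟩
    · rw [map_one, map_one, mul_one, algebraMap_mk_C]
    · rw [ordAt_one]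
      dsimp only
      omega

end RiemannRoch

end PlaneCurve

open PlaneCurve in
open Classical in
theorem h0_eq_one_of_card_le_degree_sub_two_general
    (k : Type*) [Field k] [IsAlgClosed k]
    (d : ℕ) (f : MvPolynomial (Fin 3) k) (hf : f.IsHomogeneous d)
    (hsm : ∀ v : Fin 3 → k, MvPolynomial.eval v f = 0 →
      (∀ i : Fin 3, MvPolynomial.eval v (MvPolynomial.pderiv i f) = 0) → v = 0)
    {ι : Type*} [Fintype ι] (hι : Fintype.card ι + 2 ≤ d) (p : ι → PlanePoint f)
    (F : Type*) [Field F]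
    [Algebra (MvPolynomial (Fin 3) k ⧸ Ideal.span {f}) F]
    [IsFractionRing (MvPolynomial (Fin 3) k ⧸ Ideal.span {f}) F]
    [Algebra k F] [IsScalarTower k (MvPolynomial (Fin 3) k ⧸ Ideal.span {f}) F] :
    h0 F f (fun q => ((Finset.univ.filter (fun i => p i = q)).card : ℤ)) = 1 := by
  have hf0 : f ≠ 0 := by
    rintro rfl
    exact one_ne_zero (hsm 1 (map_zero _) fun i => by rw [map_zero, map_zero])
  have hd := hf.totalDegree hf0
  have : IsSmoothPlaneCurve f := ⟨hd.symm ▸ hf, prime_of_isFractionRing (F := F) hf0, hsm⟩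
  rw [h0, RRspace_eq_range_algebraMap (hd.symm ▸ hι), ← Algebra.coe_bot,
    ← Subalgebra.coe_toSubmodule, Submodule.span_eq]
  exact Subalgebra.finrank_bot

open Classical in
/-- If `C ⊆ ℙ²_k` is a smooth plane curve of degree `d` over an algebraically closed field,
`p₁, …, p_m` are distinct points of `C` with `m ≤ d - 2`, and
`L = O_C(p₁ + ⋯ + p_m)`, then `h⁰(C, L) = 1`. -/
theorem h0_eq_one_of_card_le_degree_sub_two
    (k : Type*) [Field k] [IsAlgClosed k]
    (d : ℕ) (f : MvPolynomial (Fin 3) k) (hf : f.IsHomogeneous d)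
    (hsm : ∀ v : Fin 3 → k, MvPolynomial.eval v f = 0 →
      (∀ i : Fin 3, MvPolynomial.eval v (MvPolynomial.pderiv i f) = 0) → v = 0)
    (m : ℕ) (hm : m + 2 ≤ d)
    (p : Fin m → PlanePoint f) (hp : Function.Injective p)
    (F : Type*) [Field F]
    [Algebra (MvPolynomial (Fin 3) k ⧸ Ideal.span {f}) F]
    [IsFractionRing (MvPolynomial (Fin 3) k ⧸ Ideal.span {f}) F]
    [Algebra k F] [IsScalarTower k (MvPolynomial (Fin 3) k ⧸ Ideal.span {f}) F] :
    h0 F f (fun q => ((Finset.univ.filter (fun i => p i = q)).card : ℤ)) = 1 :=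
  h0_eq_one_of_card_le_degree_sub_two_general k d f hf hsm (by simpa using hm) p F
end

section
/- Let $k$ be an algebraically closed field and let $C \subset \mathbb{P}^2_k$ be a smooth plane curve of degree $d$. Let $p_1, \dots, p_{d-1}$ be distinct points of $C$ and let $\mathcal{L} = \mathcal{O}_C(p_1 + \cdots + p_{d-1})$. If the points $p_1, \dots, p_{d-1}$ do not all lie on a line in $\mathbb{P}^2_k$, then $h^0(C, \mathcal{L}) = 1$. If they all lie on a line $\ell \subset \mathbb{P}^2_k$, then $h^0(C, \mathcal{L}) = 2$ and $h^0(C, \mathcal{O}_C(\ell \cap C)) = 3$, where $\ell \cap C$ denotes the intersection divisor of $\ell$ with $C$ (a degree-$d$ effective divisor). -/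
/-!
The order of vanishing at a point of `C` is the valuation of a discrete valuation ring, so orders
add under multiplication. Let `D = p₁ + ⋯ + p_{d-1}` and let `H` be a form of degree `n < d`
vanishing at the `pᵢ`. By Max Noether's `AF + BG` theorem every element of `L(D)` is `G / H` for a
unique form `G` of degree `n` with `div G + D ≥ div H`; the space of these `G` is to be found. The
other tool is a weak form of Bézout's theorem: if `div l ≤ div G + E` on `C`, where `l` is a linear
form and `E` consists of fewer than `d - deg G` distinct points, then `l` divides `G`. Indeed, if
`M` is a product of lines through the points of `E`, none of them `l`, then `G M` lies in `(l, f)`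
and has degree less than `d`.

If the points lie on the line `l`, take `H = l` and lines `Mᵢ ≠ l` through `pᵢ`. Since `f` vanishes
at the `pᵢ`, it can be written as `N M₁ ⋯ M_{d-1} + l B` with `N` linear, and `div N + D ≥ div l`.
The intersection of `C` with `l` exceeds `D` at some point `p`, so every admissible `G` vanishes at
`p`. Thus `l` and `N` span the linear forms through `p`, and these are the admissible `G`.

If the points are not collinear, take for `H` the product of a line `l` through at least two of
them and of one line through each `pᵢ` off `l`. The weak Bézout theorem shows, one line at a time
with `l` last, that `H` divides every admissible `G`, whence `G` is a multiple of `H`.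
-/

section HomogeneousPolynomials

open MvPolynomial

variable {σ R : Type*}

theorem aeval_smul_of_isHomogeneous {A : Type*} [CommSemiring R] [CommSemiring A] [Algebra R A]
    {n : ℕ} {g : MvPolynomial σ R} (hg : g.IsHomogeneous n) (c : A) (x : σ → A) :
    aeval (c • x) g = c ^ n * aeval x g := by
  rw [aeval_def, aeval_def, eval₂_eq, eval₂_eq, Finset.mul_sum]
  refine Finset.sum_congr rfl fun s hs => ?_
  simp_rw [Pi.smul_apply, smul_eq_mul, mul_pow]
  rw [Finset.prod_mul_distrib, Finset.prod_pow_eq_pow_sum, ← hg.degree_eq_sum_deg_support hs]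
  exact mul_left_comm _ _ _

theorem eval_smul_of_isHomogeneous [CommSemiring R] {n : ℕ} {g : MvPolynomial σ R}
    (hg : g.IsHomogeneous n) (c : R) (v : σ → R) : eval (c • v) g = c ^ n * eval v g := by
  simpa only [aeval_eq_eval] using aeval_smul_of_isHomogeneous hg c v

section Components

attribute [local instance] MvPolynomial.gradedAlgebra

variable [CommSemiring R] {e : ℕ} {h : MvPolynomial σ R}

theorem coe_decompose_homogeneousSubmodule (g : MvPolynomial σ R) (n : ℕ) :
    (DirectSum.decompose (homogeneousSubmodule σ R) g n : MvPolynomial σ R) =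
      homogeneousComponent n g :=
  decomposition.decompose'_apply g n

theorem homogeneousComponent_add_mul_of_isHomogeneous (hh : h.IsHomogeneous e)
    (w : MvPolynomial σ R) (n : ℕ) :
    homogeneousComponent (n + e) (w * h) = homogeneousComponent n w * h := by
  simp only [← coe_decompose_homogeneousSubmodule]
  exact DirectSum.coe_decompose_mul_add_of_right_mem _ hh

theorem homogeneousComponent_mul_of_isHomogeneous_of_lt (hh : h.IsHomogeneous e)
    (w : MvPolynomial σ R) {n : ℕ} (hn : n < e) : homogeneousComponent n (w * h) = 0 := by
  rw [← coe_decompose_homogeneousSubmodule]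
  exact DirectSum.coe_decompose_mul_of_right_mem_of_not_le _ hh hn.not_ge

end Components

section Divisibility

variable [CommRing R] {d e n : ℕ} {f g h : MvPolynomial σ R}

theorem dvd_homogeneousComponent_mul (hh : h.IsHomogeneous e) (w : MvPolynomial σ R) (n : ℕ) :
    h ∣ homogeneousComponent n (w * h) := by
  obtain hn | ⟨i, rfl⟩ := (lt_or_ge n e).imp_right Nat.exists_eq_add_of_le'
  · rw [homogeneousComponent_mul_of_isHomogeneous_of_lt hh w hn]
    exact dvd_zero h
  · rw [homogeneousComponent_add_mul_of_isHomogeneous hh]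
    exact dvd_mul_left h _

theorem exists_isHomogeneous_eq_mul_of_dvd (hh : h.IsHomogeneous e) (hg : g.IsHomogeneous (n + e))
    (hdvd : h ∣ g) : ∃ q : MvPolynomial σ R, q.IsHomogeneous n ∧ g = q * h := by
  obtain ⟨w, hw⟩ := dvd_iff_exists_eq_mul_left.1 hdvd
  refine ⟨homogeneousComponent n w, homogeneousComponent_isHomogeneous n w, ?_⟩
  rw [← homogeneousComponent_add_mul_of_isHomogeneous hh, ← hw, homogeneousComponent_eq_self hg]

theorem exists_eq_smul_of_dvd_of_isHomogeneous (hh : h.IsHomogeneous n) (hg : g.IsHomogeneous n)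
    (hdvd : h ∣ g) : ∃ c : R, g = c • h := by
  obtain ⟨q, hq, rfl⟩ :=
    exists_isHomogeneous_eq_mul_of_dvd (n := 0) hh (by rwa [zero_add]) hdvd
  rw [← mem_homogeneousSubmodule, homogeneousSubmodule_zero, Submodule.mem_one] at hq
  obtain ⟨c, rfl⟩ := hq
  exact ⟨c, (Algebra.smul_def c h).symm⟩

theorem eq_zero_of_dvd_of_isHomogeneous_of_lt (hh : h.IsHomogeneous e) (hg : g.IsHomogeneous n)
    (hn : n < e) (hdvd : h ∣ g) : g = 0 := by
  obtain ⟨w, rfl⟩ := dvd_iff_exists_eq_mul_left.1 hdvd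
  rw [← homogeneousComponent_eq_self hg, homogeneousComponent_mul_of_isHomogeneous_of_lt hh w hn]

theorem exists_isHomogeneous_dvd_sub_mul_of_mem_span_pair (hf : f.IsHomogeneous d)
    (hh : h.IsHomogeneous e) (hg : g.IsHomogeneous (n + e)) (hmem : g ∈ Ideal.span {h, f}) :
    ∃ q : MvPolynomial σ R, q.IsHomogeneous n ∧ f ∣ g - q * h := by
  obtain ⟨w, z, hwz⟩ := Ideal.mem_span_pair.1 hmem
  refine ⟨homogeneousComponent n w, homogeneousComponent_isHomogeneous n w, ?_⟩
  have hg' := congrArg (homogeneousComponent (n + e)) hwz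
  rw [map_add, homogeneousComponent_add_mul_of_isHomogeneous hh,
    homogeneousComponent_eq_self hg] at hg'
  rw [← hg', add_sub_cancel_left]
  exact dvd_homogeneousComponent_mul hf z _

theorem dvd_of_mem_span_pair_of_isHomogeneous_of_lt (hf : f.IsHomogeneous d)
    (hh : h.IsHomogeneous e) (hg : g.IsHomogeneous n) (hn : n < d)
    (hmem : g ∈ Ideal.span {h, f}) : h ∣ g := by
  obtain ⟨w, z, hwz⟩ := Ideal.mem_span_pair.1 hmem
  rw [← homogeneousComponent_eq_self hg, ← hwz, map_add,
    homogeneousComponent_mul_of_isHomogeneous_of_lt hf z hn, add_zero]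
  exact dvd_homogeneousComponent_mul hh w n

end Divisibility

section CoordinateRing

variable [CommRing R] {f : MvPolynomial σ R} (F : Type*) [CommRing F] [Algebra R F]
  [Algebra (MvPolynomial σ R ⧸ Ideal.span {f}) F]
  [IsScalarTower R (MvPolynomial σ R ⧸ Ideal.span {f}) F]

variable (f) in
/-- The canonical map from the polynomial ring to the fraction field `F` of the homogeneous
coordinate ring of the hypersurface `V(f)`. -/
noncomputable def coordinateMap : MvPolynomial σ R →ₐ[R] F :=
  (IsScalarTower.toAlgHom R (MvPolynomial σ R ⧸ Ideal.span {f}) F).comp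
    (Ideal.Quotient.mkₐ R (Ideal.span {f}))

theorem coordinateMap_eq_zero_iff [IsFractionRing (MvPolynomial σ R ⧸ Ideal.span {f}) F]
    {q : MvPolynomial σ R} : coordinateMap f F q = 0 ↔ f ∣ q := by
  rw [← Ideal.mem_span_singleton, ← Ideal.Quotient.eq_zero_iff_mem]
  exact map_eq_zero_iff _ (IsFractionRing.injective _ F)

omit [Algebra R F] [IsScalarTower R (MvPolynomial σ R ⧸ Ideal.span {f}) F] in
theorem prime_of_isFractionRing [IsDomain F]
    [IsFractionRing (MvPolynomial σ R ⧸ Ideal.span {f}) F] (hf0 : f ≠ 0) : Prime f := by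
  have := (IsFractionRing.injective (MvPolynomial σ R ⧸ Ideal.span {f}) F).isDomain
  exact (Ideal.span_singleton_prime hf0).1 ((Ideal.Quotient.isDomain_iff_prime _).1 this)

end CoordinateRing

section Charts

variable [CommRing R] {d m n : ℕ} {f L : MvPolynomial σ R}

theorem exists_isHomogeneous_sub_one_dvd_sub (hL : L.IsHomogeneous 1) {q : MvPolynomial σ R}
    (hq : q.totalDegree ≤ n) : ∃ Q : MvPolynomial σ R, Q.IsHomogeneous n ∧ L - 1 ∣ q - Q := by
  refine ⟨∑ i ∈ Finset.range (q.totalDegree + 1), homogeneousComponent i q * L ^ (n - i),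
    IsHomogeneous.sum _ _ _ fun i hi => ?_, ?_⟩
  · have hmul := (homogeneousComponent_isHomogeneous i q).mul (hL.pow (n - i))
    rwa [one_mul, Nat.add_sub_cancel' ((Nat.lt_succ_iff.1 (Finset.mem_range.1 hi)).trans hq)]
      at hmul
  · nth_rw 1 [← sum_homogeneousComponent q]
    rw [← Finset.sum_sub_distrib]
    refine Finset.dvd_sum fun i _ => ?_
    rw [← mul_one_sub, ← neg_sub (L ^ (n - i)) 1]
    exact ((sub_one_dvd_pow_sub_one L _).neg_right).mul_left _

theorem sub_mem_span_pair_sub_one {q Q : MvPolynomial σ R} (h : L - 1 ∣ q - Q) :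
    q - Q ∈ Ideal.span {f, L - 1} :=
  Ideal.mem_of_dvd _ h (Ideal.subset_span (Set.mem_insert_of_mem _ rfl))

/- Restriction to the chart `L = 1` is the evaluation `X i ↦ x i / L(x)` at the generic point `x`
of `f = 0`, which rescales every form by a unit. -/
theorem dvd_of_mem_span_pair_sub_one_of_isHomogeneous (hf : f.IsHomogeneous d) (hp : Prime f)
    (hL : L.IsHomogeneous 1) (hfL : ¬ f ∣ L) {g : MvPolynomial σ R} (hg : g.IsHomogeneous n)
    (hmem : g ∈ Ideal.span {f, L - 1}) : f ∣ g := by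
  have : (Ideal.span {f}).IsPrime := (Ideal.span_singleton_prime hp.ne_zero).2 hp
  let K := FractionRing (MvPolynomial σ R ⧸ Ideal.span {f})
  let π := coordinateMap f K
  have hπ (q : MvPolynomial σ R) : π q = 0 ↔ f ∣ q := coordinateMap_eq_zero_iff K
  have hL0 : π L ≠ 0 := fun h => hfL ((hπ L).1 h)
  let φ : MvPolynomial σ R →ₐ[R] K := aeval ((π L)⁻¹ • fun i => π (X i))
  have hφ {e : ℕ} {q : MvPolynomial σ R} (hq : q.IsHomogeneous e) : φ q = (π L)⁻¹ ^ e * π q := by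
    rw [aeval_smul_of_isHomogeneous hq, aeval_unique π]
    simp only [aeval_X]
  have hker : Ideal.span {f, L - 1} ≤ RingHom.ker φ := by
    rw [Ideal.span_le, Set.pair_subset_iff]
    constructor
    · exact (hφ hf).trans (mul_eq_zero_of_right _ ((hπ f).2 dvd_rfl))
    · rw [SetLike.mem_coe, RingHom.mem_ker, map_sub, map_one, hφ hL, pow_one,
        inv_mul_cancel₀ hL0, sub_self]
  have hφg : φ g = 0 := hker hmem
  rw [hφ hg] at hφg
  exact (hπ g).1 ((mul_eq_zero.1 hφg).resolve_left (pow_ne_zero _ (inv_ne_zero hL0)))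

theorem isPrime_span_pair_sub_one (hf : f.IsHomogeneous d) (hp : Prime f)
    (hL : L.IsHomogeneous 1) (hfL : ¬ f ∣ L) : (Ideal.span {f, L - 1}).IsPrime := by
  have mem_iff {q Q : MvPolynomial σ R} (h : L - 1 ∣ q - Q) :
      q ∈ Ideal.span {f, L - 1} ↔ Q ∈ Ideal.span {f, L - 1} := by
    rw [← sub_add_cancel q Q, add_mem_cancel_left (sub_mem_span_pair_sub_one h)]
  have dvd_of_mem {n : ℕ} {Q : MvPolynomial σ R} (hQ : Q.IsHomogeneous n)
      (h : Q ∈ Ideal.span {f, L - 1}) : f ∣ Q :=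
    dvd_of_mem_span_pair_sub_one_of_isHomogeneous hf hp hL hfL hQ h
  have mem_of_dvd {Q : MvPolynomial σ R} (h : f ∣ Q) : Q ∈ Ideal.span {f, L - 1} :=
    Ideal.mem_of_dvd _ h (Ideal.subset_span (Set.mem_insert f _))
  refine ⟨fun htop => hp.not_isUnit (isUnit_of_dvd_one ?_), fun {x y} hxy => ?_⟩
  · exact dvd_of_mem (isHomogeneous_one σ R) (htop ▸ Submodule.mem_top)
  obtain ⟨X', hX, hxX⟩ := exists_isHomogeneous_sub_one_dvd_sub hL (le_refl x.totalDegree)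
  obtain ⟨Y', hY, hyY⟩ := exists_isHomogeneous_sub_one_dvd_sub hL (le_refl y.totalDegree)
  have hdvd := dvd_of_mem (hX.mul hY) ((mem_iff (dvd_mul_sub_mul hxX hyY)).1 hxy)
  exact (hp.dvd_or_dvd hdvd).imp (fun h => (mem_iff hxX).2 (mem_of_dvd h))
    fun h => (mem_iff hyY).2 (mem_of_dvd h)

theorem exists_isHomogeneous_mul_mem_span_pair (hf : f.IsHomogeneous d) (hp : Prime f)
    (hL : L.IsHomogeneous 1) (hfL : ¬ f ∣ L) {v : σ → R} (hv : eval v L = 1)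
    {a h u x : MvPolynomial σ R} (ha : a.IsHomogeneous m) (hh : h.IsHomogeneous n)
    (hu : eval v u ≠ 0) (hmem : u * a - x * h ∈ Ideal.span {f, L - 1}) :
    ∃ (N : ℕ) (U : MvPolynomial σ R), U.IsHomogeneous N ∧ eval v U ≠ 0 ∧
      U * a ∈ Ideal.span {h, f} := by
  obtain ⟨U, hU, huU⟩ := exists_isHomogeneous_sub_one_dvd_sub hL
    (show u.totalDegree ≤ u.totalDegree + x.totalDegree + n by omega)
  obtain ⟨Y, hY, hxY⟩ := exists_isHomogeneous_sub_one_dvd_sub hL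
    (show x.totalDegree ≤ u.totalDegree + x.totalDegree + m by omega)
  have heval : eval v U = eval v u := by
    obtain ⟨r, hr⟩ := huU
    have := congrArg (eval v) hr
    rw [map_sub, map_mul, map_sub, hv, map_one, sub_self, zero_mul] at this
    exact (sub_eq_zero.1 this).symm
  refine ⟨_, U, hU, heval ▸ hu, ?_⟩
  have hUY : U * a - Y * h ∈ Ideal.span {f, L - 1} := by
    have hsplit : U * a - Y * h = u * a - x * h - (u - U) * a + (x - Y) * h := by ring
    rw [hsplit]
    exact add_mem (sub_mem hmem (Ideal.mul_mem_right _ _ (sub_mem_span_pair_sub_one huU)))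
      (Ideal.mul_mem_right _ _ (sub_mem_span_pair_sub_one hxY))
  have hhom := hY.mul hh
  rw [show u.totalDegree + x.totalDegree + m + n = u.totalDegree + x.totalDegree + n + m by
    omega] at hhom
  obtain ⟨z, hz⟩ := dvd_of_mem_span_pair_sub_one_of_isHomogeneous hf hp hL hfL
    ((hU.mul ha).sub hhom) hUY
  exact Ideal.mem_span_pair.2 ⟨Y, z, by linear_combination -hz⟩

end Charts

end HomogeneousPolynomials

section LinearForms

open MvPolynomial

variable {σ k : Type*} [Field k]

theorem eval_sub_mem_ker_eval_sq [Fintype σ] (v : σ → k) (g : MvPolynomial σ k) :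
    g - C (eval v g) - ∑ i, C (eval v (pderiv i g)) * (X i - C (v i)) ∈
      RingHom.ker (eval v) ^ 2 := by
  classical
  induction g using MvPolynomial.induction_on with
  | C a => simp
  | add p q hp hq =>
    convert add_mem hp hq using 1
    simp only [map_add, add_mul, Finset.sum_add_distrib]
    ring
  | mul_X p j hp =>
    have hpj : (p - C (eval v p)) * (X j - C (v j)) ∈ RingHom.ker (eval v) ^ 2 := by
      rw [pow_two]
      exact Ideal.mul_mem_mul (by simp [RingHom.mem_ker]) (by simp [RingHom.mem_ker])
    convert add_mem hpj (Ideal.mul_mem_left _ (C (v j)) hp) using 1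
    have hterm (i : σ) : C (eval v (pderiv i (p * X j))) * (X i - C (v i)) =
        C (v j) * (C (eval v (pderiv i p)) * (X i - C (v i))) +
          if i = j then C (eval v p) * (X j - C (v j)) else 0 := by
      obtain rfl | hij := eq_or_ne i j
      · simp only [Derivation.leibniz, pderiv_X_self, smul_eq_mul, mul_one, map_add, map_mul,
          eval_X, if_true]
        ring
      · simp only [Derivation.leibniz, pderiv_X_of_ne hij.symm, smul_eq_mul, mul_zero, zero_add,
          map_mul, eval_X, if_neg hij]
        ring
    simp_rw [hterm]
    rw [Finset.sum_add_distrib, ← Finset.mul_sum, Finset.sum_ite_eq' Finset.univ j,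
      if_pos (Finset.mem_univ j), map_mul, map_mul, eval_X]
    ring

theorem prime_of_isHomogeneous_one {l : MvPolynomial σ k} (hl : l.IsHomogeneous 1) (hl0 : l ≠ 0) :
    Prime l := by
  refine (irreducible_of_totalDegree_eq_one (hl.totalDegree hl0) fun c hc => ?_).prime
  obtain ⟨s, hs⟩ := ne_zero_iff.1 hl0
  exact isUnit_iff_ne_zero.2 (ne_zero_of_dvd_ne_zero hs (hc s))

theorem finrank_homogeneousSubmodule_one [Fintype σ] :
    Module.finrank k (homogeneousSubmodule σ k 1) = Fintype.card σ := by
  rw [homogeneousSubmodule_one_eq_span_X]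
  exact finrank_span_eq_card (linearIndependent_X σ k)

instance finite_homogeneousSubmodule [Finite σ] (n : ℕ) :
    Module.Finite k (homogeneousSubmodule σ k n) :=
  Module.Finite.iff_fg.2 (homogeneousSubmodule_fg σ k n)

theorem exists_isHomogeneous_one_ne_zero_forall_eval_eq_zero [Fintype σ] {ι : Type*} [Fintype ι]
    (v : ι → σ → k) (hcard : Fintype.card ι < Fintype.card σ) :
    ∃ l : MvPolynomial σ k, l.IsHomogeneous 1 ∧ l ≠ 0 ∧ ∀ i, eval (v i) l = 0 := by
  let ev : homogeneousSubmodule σ k 1 →ₗ[k] ι → k :=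
    (LinearMap.pi fun i => (aeval (v i)).toLinearMap) ∘ₗ Submodule.subtype _
  have hker : LinearMap.ker ev ≠ ⊥ := ev.ker_ne_bot_of_finrank_lt <| by
    rwa [Module.finrank_fintype_fun_eq_card, finrank_homogeneousSubmodule_one]
  obtain ⟨l, hl, hl0⟩ := Submodule.exists_mem_ne_zero_of_ne_bot hker
  exact ⟨l, l.2, Subtype.coe_ne_coe.2 hl0, congrFun hl⟩

theorem exists_isHomogeneous_one_eval_eq_one {v : σ → k} (hv : v ≠ 0) :
    ∃ L : MvPolynomial σ k, L.IsHomogeneous 1 ∧ eval v L = 1 := by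
  obtain ⟨i, hi⟩ := Function.ne_iff.1 hv
  exact ⟨C (v i)⁻¹ * X i, isHomogeneous_C_mul_X _ i, by simpa using inv_mul_cancel₀ hi⟩

/-- The linear forms vanishing at `v`; for `σ = Fin 3`, the lines through the point `[v]` of the
plane. -/
noncomputable def linearFormsThrough (v : σ → k) : Submodule k (MvPolynomial σ k) :=
  homogeneousSubmodule σ k 1 ⊓ LinearMap.ker (aeval v).toLinearMap

theorem mem_linearFormsThrough {v : σ → k} {l : MvPolynomial σ k} :
    l ∈ linearFormsThrough v ↔ l.IsHomogeneous 1 ∧ eval v l = 0 :=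
  Iff.rfl

theorem finrank_inf_ker_add_one {V : Type*} [AddCommGroup V] [Module k V] (W : Submodule k V)
    [Module.Finite k W] (φ : V →ₗ[k] k) {w : V} (hw : w ∈ W) (hφ : φ w ≠ 0) :
    Module.finrank k ↥(W ⊓ LinearMap.ker φ) + 1 = Module.finrank k W := by
  have hres : φ ∘ₗ W.subtype ≠ 0 := fun h => hφ (LinearMap.congr_fun h ⟨w, hw⟩)
  rw [← Module.Dual.finrank_ker_add_one_of_ne_zero hres, LinearMap.ker_comp,
    ← Submodule.finrank_map_subtype_eq W, Submodule.map_comap_subtype]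

theorem finrank_linearFormsThrough_add_one [Fintype σ] {v : σ → k} (hv : v ≠ 0) :
    Module.finrank k (linearFormsThrough v) + 1 = Fintype.card σ := by
  obtain ⟨L, hL, hLv⟩ := exists_isHomogeneous_one_eval_eq_one hv
  rw [← finrank_homogeneousSubmodule_one (k := k)]
  exact finrank_inf_ker_add_one _ (aeval v).toLinearMap hL (hLv.trans_ne one_ne_zero)

instance finite_linearFormsThrough [Finite σ] (v : σ → k) :
    Module.Finite k (linearFormsThrough v) :=
  Submodule.finiteDimensional_of_le inf_le_left

theorem smul_eq_of_linearFormsThrough_le {v w : σ → k} {i : σ} (hi : v i ≠ 0)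
    (h : linearFormsThrough v ≤ linearFormsThrough w) : (w i / v i) • v = w := by
  funext j
  have hmem : C (v i) * X j - C (v j) * X i ∈ linearFormsThrough v := by
    refine ⟨(isHomogeneous_C_mul_X _ _).sub (isHomogeneous_C_mul_X _ _), ?_⟩
    simp [mul_comm]
  have hw := (mem_linearFormsThrough.1 (h hmem)).2
  simp only [map_sub, map_mul, eval_C, eval_X] at hw
  rw [Pi.smul_apply, smul_eq_mul]
  field_simp
  linear_combination -hw

theorem mk_eq_aeval_of_linearFormsThrough_le {v : σ → k} {J : Ideal (MvPolynomial σ k)}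
    (hJ : linearFormsThrough v ≤ J.restrictScalars k) {L : MvPolynomial σ k}
    (hL : L.IsHomogeneous 1) (hLv : eval v L = 1) (g : MvPolynomial σ k) :
    Ideal.Quotient.mkₐ k J g =
      aeval (Ideal.Quotient.mkₐ k J L • (algebraMap k (MvPolynomial σ k ⧸ J) ∘ v)) g := by
  conv_lhs => rw [aeval_unique (Ideal.Quotient.mkₐ k J)]
  congr 2
  funext i
  have hmem : X i - L * C (v i) ∈ linearFormsThrough v := by
    refine mem_linearFormsThrough.2 ⟨(isHomogeneous_X k i).sub (hL.mul (isHomogeneous_C σ _)), ?_⟩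
    rw [map_sub, map_mul, eval_X, eval_C, hLv, one_mul, sub_self]
  exact Ideal.Quotient.eq.2 (hJ hmem)

theorem mem_of_isHomogeneous_of_linearFormsThrough_le {v : σ → k} (hv : v ≠ 0)
    {J : Ideal (MvPolynomial σ k)} (hJ : linearFormsThrough v ≤ J.restrictScalars k)
    {g : MvPolynomial σ k} {n : ℕ} (hg : g.IsHomogeneous n) (hgv : eval v g = 0) : g ∈ J := by
  obtain ⟨L, hL, hLv⟩ := exists_isHomogeneous_one_eval_eq_one hv
  rw [← Ideal.Quotient.eq_zero_iff_mem, ← Ideal.Quotient.mkₐ_eq_mk k,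
    mk_eq_aeval_of_linearFormsThrough_le hJ hL hLv, aeval_smul_of_isHomogeneous hg,
    aeval_algebraMap_apply, aeval_eq_eval, hgv, map_zero, mul_zero]

theorem ker_eval_le_of_linearFormsThrough_le {v : σ → k} {J : Ideal (MvPolynomial σ k)}
    (hJ : linearFormsThrough v ≤ J.restrictScalars k) {L : MvPolynomial σ k}
    (hL : L.IsHomogeneous 1) (hLv : eval v L = 1) (hLJ : L - 1 ∈ J) :
    RingHom.ker (eval v) ≤ J := by
  intro g hg
  have hLJ' : Ideal.Quotient.mkₐ k J L = 1 := Ideal.Quotient.eq.2 hLJ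
  rw [← Ideal.Quotient.eq_zero_iff_mem, ← Ideal.Quotient.mkₐ_eq_mk k,
    mk_eq_aeval_of_linearFormsThrough_le hJ hL hLv, hLJ', one_smul, aeval_algebraMap_apply,
    aeval_eq_eval, RingHom.mem_ker.1 hg, map_zero]

theorem linearIndependent_pair_of_not_dvd {l M : MvPolynomial σ k} (hl0 : l ≠ 0)
    (hlM : ¬ l ∣ M) : LinearIndependent k ![l, M] :=
  (LinearIndependent.pair_iff' hl0).2 fun c hc => hlM ⟨C c, by rw [← hc, smul_eq_C_mul, mul_comm]⟩

theorem linearFormsThrough_eq_span_pair {v : Fin 3 → k} (hv : v ≠ 0)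
    {l M : MvPolynomial (Fin 3) k} (hl : l ∈ linearFormsThrough v) (hl0 : l ≠ 0)
    (hM : M ∈ linearFormsThrough v) (hlM : ¬ l ∣ M) :
    linearFormsThrough v = Submodule.span k {l, M} := by
  refine (Submodule.eq_of_le_of_finrank_eq
    (Submodule.span_le.2 (Set.pair_subset_iff.2 ⟨hl, hM⟩)) ?_).symm
  have hspan := finrank_span_eq_card (linearIndependent_pair_of_not_dvd hl0 hlM)
  have hthrough := finrank_linearFormsThrough_add_one hv
  rw [Matrix.range_cons_cons_empty] at hspan
  rw [hspan, ← Nat.add_right_cancel_iff, hthrough, Fintype.card_fin, Fintype.card_fin]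

theorem linearFormsThrough_le_span_pair {v : Fin 3 → k} (hv : v ≠ 0)
    {l M : MvPolynomial (Fin 3) k} (hl : l ∈ linearFormsThrough v) (hl0 : l ≠ 0)
    (hM : M ∈ linearFormsThrough v) (hlM : ¬ l ∣ M) :
    linearFormsThrough v ≤ (Ideal.span {l, M}).restrictScalars k := by
  rw [linearFormsThrough_eq_span_pair hv hl hl0 hM hlM]
  exact Submodule.span_le_restrictScalars k _ _

theorem exists_mem_linearFormsThrough_not_dvd {v : Fin 3 → k} (hv : v ≠ 0)
    {l : MvPolynomial (Fin 3) k} (hl : l.IsHomogeneous 1) :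
    ∃ M ∈ linearFormsThrough v, ¬ l ∣ M := by
  by_contra! hdvd
  have hle : linearFormsThrough v ≤ Submodule.span k {l} := fun M hM => by
    obtain ⟨c, rfl⟩ := exists_eq_smul_of_dvd_of_isHomogeneous hl
      (mem_linearFormsThrough.1 hM).1 (hdvd M hM)
    exact Submodule.smul_mem _ c (Submodule.mem_span_singleton_self l)
  have hrank := (Submodule.finrank_mono hle).trans (finrank_span_le_card {l})
  have hthrough := finrank_linearFormsThrough_add_one hv
  rw [Set.toFinset_singleton, Finset.card_singleton] at hrank
  rw [Fintype.card_fin] at hthrough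
  omega

end LinearForms

section Koszul

open MvPolynomial

variable {σ R : Type*} [CommRing R]

theorem mem_span_pair_of_X_pow_mul_mem {i j l : σ} (hij : i ≠ j) (hil : i ≠ l) {N : ℕ}
    {q : MvPolynomial σ R}
    (h : X i ^ N * q ∈ Ideal.span {(X j ^ N : MvPolynomial σ R), X l ^ N}) :
    q ∈ Ideal.span {(X j ^ N : MvPolynomial σ R), X l ^ N} := by
  have hspan : ({(X j ^ N : MvPolynomial σ R), X l ^ N} : Set _) =
      (fun s => monomial s (1 : R)) '' {Finsupp.single j N, Finsupp.single l N} := by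
    simp only [Set.image_pair, X_pow_eq_monomial]
  rw [hspan, mem_ideal_span_monomial_image] at h ⊢
  intro s hs
  obtain ⟨t, ht, hts⟩ := h (Finsupp.single i N + s) <| by
    rw [mem_support_iff, X_pow_eq_monomial, coeff_monomial_mul, one_mul]
    exact mem_support_iff.1 hs
  refine ⟨t, ht, ?_⟩
  rcases ht with rfl | rfl <;> rw [Finsupp.single_le_iff] at hts ⊢ <;>
    simpa [Finsupp.single_apply, hij, hil] using hts

theorem X_pow_dvd_of_X_pow_mul_eq [IsDomain R] {i j : σ} (hij : i ≠ j) {N : ℕ}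
    {u w : MvPolynomial σ R} (h : X i ^ N * u = X j ^ N * w) :
    (X i ^ N : MvPolynomial σ R) ∣ w := by
  refine X_prime.pow_dvd_of_dvd_mul_left N (fun hdvd => hij ?_) (h ▸ dvd_mul_right _ _)
  exact X_dvd_X.1 (X_prime.dvd_of_dvd_pow hdvd)

theorem exists_cross_of_X_pow_dot_eq_zero [IsDomain R] {i j l : σ} (hij : i ≠ j) (hil : i ≠ l)
    (hjl : j ≠ l) {N : ℕ} {a b c : MvPolynomial σ R}
    (h : X i ^ N * a + X j ^ N * b + X l ^ N * c = 0) :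
    ∃ r s t : MvPolynomial σ R, a = X j ^ N * t - X l ^ N * s ∧ b = X l ^ N * r - X i ^ N * t ∧
      c = X i ^ N * s - X j ^ N * r := by
  obtain ⟨t, s, hts⟩ := Ideal.mem_span_pair.1 <| mem_span_pair_of_X_pow_mul_mem hij hil <|
    Ideal.mem_span_pair.2 ⟨-b, -c, show -b * X j ^ N + -c * X l ^ N = X i ^ N * a by
      linear_combination -h⟩
  have hjl' : X j ^ N * (b + X i ^ N * t) = X l ^ N * (X i ^ N * -s - c) := by
    linear_combination h + X i ^ N * hts
  obtain ⟨r, hr⟩ := X_pow_dvd_of_X_pow_mul_eq hjl hjl'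
  rw [hr, mul_left_comm] at hjl'
  have hb := mul_left_cancel₀ (pow_ne_zero N (X_ne_zero j)) hjl'
  exact ⟨r, -s, t, by linear_combination -hts, by linear_combination hb,
    by linear_combination -hr⟩

theorem exists_mul_X_pow_sub_eq_of_mem_span_pair {f h : MvPolynomial σ R} (hf : Prime f)
    (hh : ¬ f ∣ h) {x y a b c b' c' : MvPolynomial σ R} (hx : b * h + c * f = x * a)
    (hy : b' * h + c' * f = y * a) : ∃ q, y * b - x * b' = f * q := by
  have hdvd : f ∣ h * (y * b - x * b') :=
    ⟨x * c' - y * c, by linear_combination y * hx - x * hy⟩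
  exact (hf.dvd_or_dvd hdvd).resolve_left hh

/- With `x = (X i ^ N, X j ^ N, X l ^ N)` and `x a ≡ b h` modulo `f`, the vector `b × x` is
`f q`, hence `x ⬝ q = 0`, `q = x × r` and `(b + f r) × x = 0`, so that `x` divides `b + f r`. -/
theorem mem_span_pair_of_forall_X_pow_mul_mem [IsDomain R] {i j l : σ} (hij : i ≠ j)
    (hil : i ≠ l) (hjl : j ≠ l) {f h a : MvPolynomial σ R} (hf : Prime f) (hX : ¬ f ∣ X i)
    (hh : ¬ f ∣ h) {N : ℕ} (H : ∀ i, X i ^ N * a ∈ Ideal.span {h, f}) :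
    a ∈ Ideal.span {h, f} := by
  simp only [Ideal.mem_span_pair] at H
  choose b c hbc using H
  obtain ⟨qi, hqi⟩ := exists_mul_X_pow_sub_eq_of_mem_span_pair hf hh (hbc j) (hbc l)
  obtain ⟨qj, hqj⟩ := exists_mul_X_pow_sub_eq_of_mem_span_pair hf hh (hbc l) (hbc i)
  obtain ⟨ql, hql⟩ := exists_mul_X_pow_sub_eq_of_mem_span_pair hf hh (hbc i) (hbc j)
  have hdot : X i ^ N * qi + X j ^ N * qj + X l ^ N * ql = 0 := by
    refine mul_left_cancel₀ hf.ne_zero ?_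
    linear_combination -X i ^ N * hqi - X j ^ N * hqj - X l ^ N * hql
  obtain ⟨r, s, t, -, -, hl⟩ := exists_cross_of_X_pow_dot_eq_zero hij hil hjl hdot
  obtain ⟨w, hw⟩ := X_pow_dvd_of_X_pow_mul_eq hij
    (show X i ^ N * (b j + f * s) = X j ^ N * (b i + f * r) by linear_combination -hql - f * hl)
  have hdvd : f ∣ X i ^ N * (a - w * h) :=
    ⟨c i - r * h, by linear_combination -hbc i + h * hw⟩
  obtain ⟨z, hz⟩ := (hf.dvd_or_dvd hdvd).resolve_left fun h => hX (hf.dvd_of_dvd_pow h)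
  exact Ideal.mem_span_pair.2 ⟨w, z, by linear_combination -hz⟩

end Koszul

section LocalOrder

variable {R : Type*} [CommRing R] (I 𝔪 : Ideal R)

/-- The order of vanishing of `g` along `V(I)` at the point `𝔪`: the largest `n` such that, locally
at `𝔪`, `g` lies in `I + 𝔪 ^ n`; it is `⊤` if there is no largest such `n`. -/
noncomputable def localOrder (g : R) : ℕ∞ :=
  ⨆ n ∈ {n : ℕ | ∃ h ∉ 𝔪, h * g ∈ I ⊔ 𝔪 ^ n}, (n : ℕ∞)

/-- The local ring at `𝔪` of the closed subscheme `V(I)` of `Spec R`. -/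
abbrev LocalRingAt [𝔪.IsPrime] : Type _ :=
  Localization.AtPrime 𝔪 ⧸ I.map (algebraMap R (Localization.AtPrime 𝔪))

/-- `V(I)` is integral, and regular of dimension one at its point `𝔪`: the maximal ideal of the
local ring is nonzero and, modulo its square, generated by one element. -/
class IsRegularCurvePoint [𝔪.IsPrime] : Prop where
  isPrime : I.IsPrime
  le : I ≤ 𝔪
  not_ge : ¬ 𝔪 ≤ I
  exists_le_sup : ∃ t ∈ 𝔪, 𝔪 ≤ Ideal.span {t} ⊔ I ⊔ 𝔪 ^ 2

variable {I 𝔪}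

theorem natCast_le_localOrder_iff [𝔪.IsPrime] {n : ℕ} {g : R} :
    (n : ℕ∞) ≤ localOrder I 𝔪 g ↔ ∃ h ∉ 𝔪, h * g ∈ I ⊔ 𝔪 ^ n := by
  refine ⟨fun hn => ?_, fun hn => le_iSup₂_of_le n hn le_rfl⟩
  obtain _ | n := n
  · exact ⟨1, 𝔪.one_notMem, by simp⟩
  · obtain ⟨N, hN⟩ := lt_iSup_iff.1 ((Nat.cast_lt.2 n.lt_succ_self).trans_le hn)
    obtain ⟨⟨h, hh, hhg⟩, hlt⟩ := lt_iSup_iff.1 hN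
    exact ⟨h, hh, sup_le_sup_left (Ideal.pow_le_pow_right (Nat.cast_lt.1 hlt)) I hhg⟩

theorem algebraMap_localRingAt_mem_map_iff [𝔪.IsPrime] {J : Ideal R} {g : R} :
    algebraMap R (LocalRingAt I 𝔪) g ∈ J.map (algebraMap R (LocalRingAt I 𝔪)) ↔
      ∃ h ∉ 𝔪, h * g ∈ I ⊔ J := by
  rw [IsScalarTower.algebraMap_eq R (Localization.AtPrime 𝔪) (LocalRingAt I 𝔪), ← Ideal.map_map,
    RingHom.comp_apply, Ideal.Quotient.algebraMap_eq, Ideal.mem_quotient_iff_mem_sup,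
    ← Ideal.map_sup, sup_comm, IsLocalization.algebraMap_mem_map_algebraMap_iff 𝔪.primeCompl]
  rfl

theorem natCast_le_localOrder_iff_mem_map [𝔪.IsPrime] {n : ℕ} {g : R} :
    (n : ℕ∞) ≤ localOrder I 𝔪 g ↔
      algebraMap R (LocalRingAt I 𝔪) g ∈ (𝔪 ^ n).map (algebraMap R (LocalRingAt I 𝔪)) := by
  rw [natCast_le_localOrder_iff, algebraMap_localRingAt_mem_map_iff]

theorem min_localOrder_le_localOrder_add [𝔪.IsPrime] (a b : R) :
    min (localOrder I 𝔪 a) (localOrder I 𝔪 b) ≤ localOrder I 𝔪 (a + b) := by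
  refine ENat.forall_natCast_le_iff_le.1 fun n hn => ?_
  rw [le_min_iff] at hn
  rw [natCast_le_localOrder_iff_mem_map, map_add]
  exact add_mem (natCast_le_localOrder_iff_mem_map.1 hn.1)
    (natCast_le_localOrder_iff_mem_map.1 hn.2)

theorem localOrder_zero [𝔪.IsPrime] : localOrder I 𝔪 0 = ⊤ :=
  ENat.eq_top_iff_forall_ge.2 fun n => natCast_le_localOrder_iff_mem_map.2 (by simp)

theorem localOrder_le_localOrder_mul_left [𝔪.IsPrime] (a b : R) :
    localOrder I 𝔪 b ≤ localOrder I 𝔪 (a * b) := by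
  refine ENat.forall_natCast_le_iff_le.1 fun n hn => ?_
  rw [natCast_le_localOrder_iff_mem_map, map_mul]
  exact Ideal.mul_mem_left _ _ (natCast_le_localOrder_iff_mem_map.1 hn)

section RegularPoint

variable [𝔪.IsPrime] [IsRegularCurvePoint I 𝔪]

open IsRegularCurvePoint (isPrime le not_ge exists_le_sup)

theorem algebraMap_localRingAt_eq_zero_iff {g : R} :
    algebraMap R (LocalRingAt I 𝔪) g = 0 ↔ g ∈ I := by
  have := isPrime (I := I) (𝔪 := 𝔪)
  rw [← Ideal.mem_bot, ← Ideal.map_bot (f := algebraMap R (LocalRingAt I 𝔪)),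
    algebraMap_localRingAt_mem_map_iff, sup_bot_eq]
  refine ⟨fun ⟨h, hh, hhg⟩ => ((‹I.IsPrime›.mem_or_mem hhg).resolve_left fun hI => hh (le hI)),
    fun hg => ⟨1, 𝔪.one_notMem, by rwa [one_mul]⟩⟩

instance isDomain_localRingAt : IsDomain (LocalRingAt I 𝔪) := by
  refine (Ideal.Quotient.isDomain_iff_prime _).2
    (IsLocalization.isPrime_of_isPrime_disjoint 𝔪.primeCompl _ I
      (isPrime (𝔪 := 𝔪)) ?_)
  exact Set.disjoint_left.2 fun x hx hxI => hx (le hxI)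

instance isLocalRing_localRingAt : IsLocalRing (LocalRingAt I 𝔪) :=
  IsLocalRing.of_surjective' _ Ideal.Quotient.mk_surjective

theorem map_eq_maximalIdeal_localRingAt :
    𝔪.map (algebraMap R (LocalRingAt I 𝔪)) = IsLocalRing.maximalIdeal (LocalRingAt I 𝔪) := by
  rw [IsScalarTower.algebraMap_eq R (Localization.AtPrime 𝔪) (LocalRingAt I 𝔪), ← Ideal.map_map,
    Localization.AtPrime.map_eq_maximalIdeal]
  have := IsLocalHom.of_surjective (Ideal.Quotient.mk (I.map (algebraMap R _)))
    (Ideal.Quotient.mk_surjective (I := I.map (algebraMap R (Localization.AtPrime 𝔪))))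
  refine le_antisymm (((IsLocalRing.local_hom_TFAE _).out 0 2).1 this) fun x hx => ?_
  obtain ⟨y, rfl⟩ := Ideal.Quotient.mk_surjective x
  exact Ideal.mem_map_of_mem _ fun hy => hx (hy.map _)

theorem exists_maximalIdeal_localRingAt_eq_span [IsNoetherianRing R] :
    ∃ t ∈ 𝔪, IsLocalRing.maximalIdeal (LocalRingAt I 𝔪) =
      Ideal.span {algebraMap R (LocalRingAt I 𝔪) t} := by
  obtain ⟨t, ht, hle⟩ := exists_le_sup (I := I) (𝔪 := 𝔪)
  refine ⟨t, ht, le_antisymm ?_ ?_⟩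
  · refine Submodule.le_of_le_smul_of_le_jacobson_bot (IsNoetherian.noetherian _)
      (IsLocalRing.maximalIdeal_le_jacobson _) ?_
    have hI : I.map (algebraMap R (LocalRingAt I 𝔪)) = ⊥ :=
      (Ideal.map_eq_bot_iff_le_ker _).2 fun x hx => algebraMap_localRingAt_eq_zero_iff.2 hx
    have hmap := Ideal.map_mono (f := algebraMap R (LocalRingAt I 𝔪)) hle
    rwa [Ideal.map_sup, Ideal.map_sup, hI, sup_bot_eq, Ideal.map_span, Set.image_singleton,
      Ideal.map_pow, map_eq_maximalIdeal_localRingAt, pow_two] at hmap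
  · rw [← map_eq_maximalIdeal_localRingAt, Ideal.span_singleton_le_iff_mem]
    exact Ideal.mem_map_of_mem _ ht

instance isDiscreteValuationRing_localRingAt [IsNoetherianRing R] :
    IsDiscreteValuationRing (LocalRingAt I 𝔪) := by
  have hfield : ¬ IsField (LocalRingAt I 𝔪) := by
    rw [IsLocalRing.isField_iff_maximalIdeal_eq, ← map_eq_maximalIdeal_localRingAt,
      Ideal.map_eq_bot_iff_le_ker]
    exact fun h => not_ge (I := I) (𝔪 := 𝔪)
      fun x hx => algebraMap_localRingAt_eq_zero_iff.1 (h hx)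
  obtain ⟨t, -, ht⟩ := exists_maximalIdeal_localRingAt_eq_span (I := I) (𝔪 := 𝔪)
  have hprincipal : (IsLocalRing.maximalIdeal (LocalRingAt I 𝔪)).IsPrincipal := ⟨_, ht⟩
  exact ((IsDiscreteValuationRing.TFAE _ hfield).out 0 4).2 hprincipal

theorem localOrder_eq_zero_iff {g : R} : localOrder I 𝔪 g = 0 ↔ g ∉ 𝔪 := by
  rw [← not_iff_not, ← ne_eq, ← Order.one_le_iff_ne_zero, ← Nat.cast_one,
    natCast_le_localOrder_iff, pow_one, sup_eq_right.2 (le (I := I)), not_not]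
  exact ⟨fun ⟨h, hh, hhg⟩ => (‹𝔪.IsPrime›.mem_or_mem hhg).resolve_left hh,
    fun hg => ⟨1, 𝔪.one_notMem, by rwa [one_mul]⟩⟩

variable [IsNoetherianRing R]

open IsDiscreteValuationRing

theorem localOrder_eq_addVal (g : R) :
    localOrder I 𝔪 g = addVal (LocalRingAt I 𝔪) (algebraMap R (LocalRingAt I 𝔪) g) := by
  obtain ⟨ϖ, hϖ⟩ := exists_irreducible (LocalRingAt I 𝔪)
  refine ENat.eq_of_forall_natCast_le_iff fun n => ?_
  rw [natCast_le_localOrder_iff_mem_map, Ideal.map_pow, map_eq_maximalIdeal_localRingAt,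
    hϖ.maximalIdeal_eq, Ideal.span_singleton_pow, Ideal.mem_span_singleton,
    ← addVal_le_iff_dvd, hϖ.addVal_pow]

theorem localOrder_mul (a b : R) :
    localOrder I 𝔪 (a * b) = localOrder I 𝔪 a + localOrder I 𝔪 b := by
  rw [localOrder_eq_addVal, localOrder_eq_addVal, localOrder_eq_addVal, map_mul, addVal_mul]

theorem localOrder_eq_top_iff {g : R} : localOrder I 𝔪 g = ⊤ ↔ g ∈ I := by
  rw [localOrder_eq_addVal, addVal_eq_top_iff, algebraMap_localRingAt_eq_zero_iff]

theorem exists_localOrder_eq_one : ∃ t ∈ 𝔪, localOrder I 𝔪 t = 1 := by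
  obtain ⟨t, ht, hspan⟩ := exists_maximalIdeal_localRingAt_eq_span (I := I) (𝔪 := 𝔪)
  exact ⟨t, ht, by rw [localOrder_eq_addVal,
    addVal_uniformizer ((irreducible_iff_uniformizer _).2 hspan)]⟩

theorem exists_mem_localOrder_le_one_of_le_span_sup {s : Set R} (hs : 𝔪 ≤ Ideal.span s ⊔ I) :
    ∃ x ∈ s, localOrder I 𝔪 x ≤ 1 := by
  by_contra! hlt
  let J := ((𝔪 ^ 2).map (algebraMap R (LocalRingAt I 𝔪))).comap
    (algebraMap R (LocalRingAt I 𝔪))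
  have mem_J {g : R} : g ∈ J ↔ 1 < localOrder I 𝔪 g := by
    rw [Ideal.mem_comap, ← natCast_le_localOrder_iff_mem_map, ← Order.add_one_le_iff_of_not_isMax
      (by simp), one_add_one_eq_two, Nat.cast_ofNat]
  have hI : I ≤ J := fun g hg => mem_J.2 (by simp [localOrder_eq_top_iff.2 hg])
  obtain ⟨t, ht, hord⟩ := exists_localOrder_eq_one (I := I) (𝔪 := 𝔪)
  have htJ := hs.trans (sup_le (Ideal.span_le.2 fun x hx => mem_J.2 (hlt x hx)) hI) ht
  exact (mem_J.1 htJ).ne' hord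

theorem exists_mul_sub_mul_mem_of_localOrder_le {a h : R}
    (hle : localOrder I 𝔪 h ≤ localOrder I 𝔪 a) :
    ∃ u ∉ 𝔪, ∃ x, u * a - x * h ∈ I := by
  rw [localOrder_eq_addVal, localOrder_eq_addVal, addVal_le_iff_dvd, ← Ideal.mem_span_singleton,
    ← Set.image_singleton, ← Ideal.map_span, algebraMap_localRingAt_mem_map_iff] at hle
  obtain ⟨u, hu, hmem⟩ := hle
  obtain ⟨y, hy, z, hz, hyz⟩ := Submodule.mem_sup.1 hmem
  obtain ⟨x, rfl⟩ := Ideal.mem_span_singleton'.1 hz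
  exact ⟨u, hu, x, by rwa [← hyz, add_sub_cancel_right]⟩

end RegularPoint

end LocalOrder

section SmoothPlaneCurve

open MvPolynomial

variable {k : Type*} [Field k] {f : MvPolynomial (Fin 3) k} {d : ℕ}

instance isPrime_ker_eval (v : Fin 3 → k) : (RingHom.ker (eval v)).IsPrime :=
  RingHom.ker_isPrime _

/-- `f` is the equation of a smooth integral plane curve of degree `d ≥ 2`. -/
structure IsSmoothPlaneCurve (d : ℕ) (f : MvPolynomial (Fin 3) k) : Prop where
  isHomogeneous : f.IsHomogeneous d
  prime : Prime f
  two_le : 2 ≤ d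
  smooth : ∀ v : Fin 3 → k, eval v f = 0 → (∀ i, eval v (pderiv i f) = 0) → v = 0

/-- The order of vanishing at the point `p` of `V(f)`, defined on all polynomials and with values
in `ℕ∞`; on the forms which `f` does not divide it agrees with `ordAt`. -/
noncomputable def PlanePoint.ord (p : PlanePoint f) (g : MvPolynomial (Fin 3) k) : ℕ∞ :=
  localOrder (Ideal.span {f, slicePoly p.1.rep}) (RingHom.ker (eval p.1.rep)) g

theorem exists_isHomogeneous_one_slicePoly_eq {v : Fin 3 → k} (hv : v ≠ 0) :
    ∃ L : MvPolynomial (Fin 3) k, L.IsHomogeneous 1 ∧ eval v L = 1 ∧ slicePoly v = L - 1 := by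
  have hex := Function.ne_iff.1 hv
  refine ⟨_, isHomogeneous_C_mul_X _ hex.choose, ?_, dif_pos hex⟩
  simpa using inv_mul_cancel₀ hex.choose_spec

/-- The equation of the tangent line to `V(f)` at `[v]`. -/
noncomputable def tangentForm (f : MvPolynomial (Fin 3) k) (v : Fin 3 → k) :
    MvPolynomial (Fin 3) k :=
  ∑ i, C (eval v (pderiv i f)) * X i

theorem tangentForm_mem_linearFormsThrough (hf : f.IsHomogeneous d) {v : Fin 3 → k}
    (hfv : eval v f = 0) : tangentForm f v ∈ linearFormsThrough v := by
  refine ⟨IsHomogeneous.sum _ _ _ fun i _ => isHomogeneous_C_mul_X _ i, ?_⟩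
  have euler := congrArg (eval v) hf.sum_X_mul_pderiv
  simpa [tangentForm, hfv, mul_comm] using euler

theorem sub_tangentForm_mem_ker_eval_sq (hf : f.IsHomogeneous d) {v : Fin 3 → k}
    (hfv : eval v f = 0) : f - tangentForm f v ∈ RingHom.ker (eval v) ^ 2 := by
  have hT : ∑ i, C (σ := Fin 3) (eval v (pderiv i f)) * C (v i) = 0 := by
    simpa [tangentForm] using congrArg (C (σ := Fin 3))
      (mem_linearFormsThrough.1 (tangentForm_mem_linearFormsThrough hf hfv)).2
  simpa [tangentForm, mul_sub, hT, hfv] using eval_sub_mem_ker_eval_sq v f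

theorem natCast_ordAt {p : PlanePoint f} {g : MvPolynomial (Fin 3) k} (hg : p.ord g ≠ ⊤) :
    (ordAt f p g : ℕ∞) = p.ord g := by
  obtain ⟨N, hN⟩ := ENat.ne_top_iff_exists.1 hg
  rw [← hN, Nat.cast_inj]
  refine (congrArg sSup (Set.ext fun n => ?_)).trans (csSup_Iic (a := N))
  rw [Set.mem_Iic, ← Nat.cast_le (α := ℕ∞), hN]
  exact (natCast_le_localOrder_iff (𝔪 := RingHom.ker (eval p.1.rep))).symm

namespace IsSmoothPlaneCurve

theorem eq_zero_of_dvd (hC : IsSmoothPlaneCurve d f) {g : MvPolynomial (Fin 3) k} {n : ℕ}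
    (hg : g.IsHomogeneous n) (hn : n < d) (hdvd : f ∣ g) : g = 0 :=
  eq_zero_of_dvd_of_isHomogeneous_of_lt hC.isHomogeneous hg hn hdvd

theorem not_dvd_linear (hC : IsSmoothPlaneCurve d f) {l : MvPolynomial (Fin 3) k}
    (hl : l.IsHomogeneous 1) (hl0 : l ≠ 0) : ¬ f ∣ l :=
  fun hdvd => hl0 (hC.eq_zero_of_dvd hl hC.two_le hdvd)

theorem linear_not_dvd (hC : IsSmoothPlaneCurve d f) {l : MvPolynomial (Fin 3) k}
    (hl : l.IsHomogeneous 1) (hl0 : l ≠ 0) : ¬ l ∣ f := fun hdvd =>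
  hC.not_dvd_linear hl hl0
    ((prime_of_isHomogeneous_one hl hl0).associated_of_dvd hC.prime hdvd).dvd'

theorem tangentForm_ne_zero (hC : IsSmoothPlaneCurve d f) {v : Fin 3 → k} (hv : v ≠ 0)
    (hfv : eval v f = 0) : tangentForm f v ≠ 0 := by
  refine fun h => hv (hC.smooth v hfv fun j => ?_)
  simpa [tangentForm, pderiv_X, Pi.single_apply] using congrArg (fun q => eval v (pderiv j q)) h

theorem exists_ker_eval_le_sup (hC : IsSmoothPlaneCurve d f) {v : Fin 3 → k} (hv : v ≠ 0)
    (hfv : eval v f = 0) {L : MvPolynomial (Fin 3) k} (hL : L.IsHomogeneous 1)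
    (hLv : eval v L = 1) : ∃ t ∈ RingHom.ker (eval v), RingHom.ker (eval v) ≤
      Ideal.span {t} ⊔ Ideal.span {f, L - 1} ⊔ RingHom.ker (eval v) ^ 2 := by
  have hT := tangentForm_mem_linearFormsThrough hC.isHomogeneous hfv
  obtain ⟨t, ht, hTt⟩ := exists_mem_linearFormsThrough_not_dvd hv hT.1
  set J := Ideal.span {t} ⊔ Ideal.span {f, L - 1} ⊔ RingHom.ker (eval v) ^ 2
  have hpair : Ideal.span {f, L - 1} ≤ J := le_sup_right.trans le_sup_left
  have htJ : t ∈ J := (le_sup_left.trans le_sup_left : _ ≤ J) (Ideal.mem_span_singleton_self t)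
  have hTJ : tangentForm f v ∈ J := by
    have := J.sub_mem (hpair (Ideal.subset_span (Set.mem_insert _ _)))
      ((le_sup_right : _ ≤ J) (sub_tangentForm_mem_ker_eval_sq hC.isHomogeneous hfv))
    rwa [sub_sub_cancel] at this
  refine ⟨t, ht.2, ker_eval_le_of_linearFormsThrough_le (fun m hm => ?_) hL hLv
    (hpair (Ideal.subset_span (Set.mem_insert_of_mem _ rfl)))⟩
  exact Ideal.span_le.2 (Set.pair_subset_iff.2 ⟨hTJ, htJ⟩)
    (linearFormsThrough_le_span_pair hv hT (hC.tangentForm_ne_zero hv hfv) ht hTt hm)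

theorem isRegularCurvePoint (hC : IsSmoothPlaneCurve d f) (p : PlanePoint f) :
    IsRegularCurvePoint (Ideal.span {f, slicePoly p.1.rep}) (RingHom.ker (eval p.1.rep)) := by
  have hv := p.1.rep_nonzero
  obtain ⟨L, hL, hLv, hslice⟩ := exists_isHomogeneous_one_slicePoly_eq hv
  have hL0 : L ≠ 0 := by rintro rfl; simp at hLv
  have hfL := hC.not_dvd_linear hL hL0
  rw [hslice]
  refine ⟨isPrime_span_pair_sub_one hC.isHomogeneous hC.prime hL hfL, ?_, fun hle => ?_,
    hC.exists_ker_eval_le_sup hv p.2 hL hLv⟩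
  · refine Ideal.span_le.2 (Set.pair_subset_iff.2 ⟨p.2, ?_⟩)
    simp [RingHom.mem_ker, hLv]
  · obtain ⟨M, hM, hLM⟩ := exists_mem_linearFormsThrough_not_dvd hv hL
    have hM0 : M ≠ 0 := by rintro rfl; exact hLM (dvd_zero L)
    exact hC.not_dvd_linear hM.1 hM0 (dvd_of_mem_span_pair_sub_one_of_isHomogeneous
      hC.isHomogeneous hC.prime hL hfL hM.1 (hle hM.2))

variable (hC : IsSmoothPlaneCurve d f) (p : PlanePoint f)

include hC

theorem ord_mul (a b : MvPolynomial (Fin 3) k) : p.ord (a * b) = p.ord a + p.ord b :=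
  have := hC.isRegularCurvePoint p
  localOrder_mul a b

theorem ord_eq_zero_iff {g : MvPolynomial (Fin 3) k} : p.ord g = 0 ↔ eval p.1.rep g ≠ 0 :=
  have := hC.isRegularCurvePoint p
  localOrder_eq_zero_iff

theorem one_le_ord_iff {g : MvPolynomial (Fin 3) k} : 1 ≤ p.ord g ↔ eval p.1.rep g = 0 := by
  rw [Order.one_le_iff_ne_zero, ne_eq, hC.ord_eq_zero_iff, not_not]

theorem ord_one : p.ord 1 = 0 :=
  (hC.ord_eq_zero_iff p).2 (by simp)

theorem ord_prod {ι : Type*} (s : Finset ι) (g : ι → MvPolynomial (Fin 3) k) :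
    p.ord (∏ i ∈ s, g i) = ∑ i ∈ s, p.ord (g i) := by
  induction s using Finset.cons_induction with
  | empty => exact hC.ord_one p
  | cons a s ha ih => rw [Finset.prod_cons, Finset.sum_cons, hC.ord_mul, ih]

theorem ord_eq_top_of_dvd {g : MvPolynomial (Fin 3) k} (hg : f ∣ g) : p.ord g = ⊤ :=
  have := hC.isRegularCurvePoint p
  localOrder_eq_top_iff.2 (Ideal.mem_of_dvd _ hg (Ideal.subset_span (Set.mem_insert _ _)))

theorem ord_congr {a b : MvPolynomial (Fin 3) k} (hab : f ∣ a - b) : p.ord a = p.ord b := by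
  have hle {a b : MvPolynomial (Fin 3) k} (hab : f ∣ a - b) : p.ord b ≤ p.ord a := by
    have := min_localOrder_le_localOrder_add (I := Ideal.span {f, slicePoly p.1.rep})
      (𝔪 := RingHom.ker (eval p.1.rep)) b (a - b)
    change min (p.ord b) (p.ord (a - b)) ≤ p.ord (b + (a - b)) at this
    rwa [hC.ord_eq_top_of_dvd p hab, min_top_right, add_sub_cancel] at this
  exact (hle ((dvd_sub_comm).1 hab)).antisymm (hle hab)

theorem ord_ne_top {g : MvPolynomial (Fin 3) k} {n : ℕ} (hg : g.IsHomogeneous n)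
    (hfg : ¬ f ∣ g) : p.ord g ≠ ⊤ := by
  have := hC.isRegularCurvePoint p
  obtain ⟨L, hL, hLv, hslice⟩ := exists_isHomogeneous_one_slicePoly_eq p.1.rep_nonzero
  have hL0 : L ≠ 0 := by rintro rfl; simp at hLv
  refine fun htop => hfg ?_
  have hmem := localOrder_eq_top_iff.1 htop
  rw [hslice] at hmem
  exact dvd_of_mem_span_pair_sub_one_of_isHomogeneous hC.isHomogeneous hC.prime hL
    (hC.not_dvd_linear hL hL0) hg hmem

theorem natCast_ordAt {g : MvPolynomial (Fin 3) k} {n : ℕ} (hg : g.IsHomogeneous n)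
    (hfg : ¬ f ∣ g) : (ordAt f p g : ℕ∞) = p.ord g :=
  _root_.natCast_ordAt (hC.ord_ne_top p hg hfg)

theorem ord_le_one_or_ord_le_one {l M : MvPolynomial (Fin 3) k}
    (hl : l ∈ linearFormsThrough p.1.rep) (hl0 : l ≠ 0) (hM : M ∈ linearFormsThrough p.1.rep)
    (hlM : ¬ l ∣ M) : p.ord l ≤ 1 ∨ p.ord M ≤ 1 := by
  have := hC.isRegularCurvePoint p
  have hv := p.1.rep_nonzero
  obtain ⟨L, hL, hLv, hslice⟩ := exists_isHomogeneous_one_slicePoly_eq hv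
  have hker : RingHom.ker (eval p.1.rep) ≤
      Ideal.span {l, M} ⊔ Ideal.span {f, slicePoly p.1.rep} := by
    refine ker_eval_le_of_linearFormsThrough_le
      ((linearFormsThrough_le_span_pair hv hl hl0 hM hlM).trans fun g hg => ?_) hL hLv ?_
    · exact Ideal.mem_sup_left hg
    · rw [← hslice]
      exact Ideal.mem_sup_right (Ideal.subset_span (Set.mem_insert_of_mem _ rfl))
  obtain ⟨x, rfl | rfl, hx⟩ := exists_mem_localOrder_le_one_of_le_span_sup hker
  exacts [Or.inl hx, Or.inr hx]

end IsSmoothPlaneCurve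

end SmoothPlaneCurve

section Noether

open MvPolynomial

variable {k : Type*} [Field k]

theorem exists_forall_X_pow_mem_of_zeroLocus_subset [IsAlgClosed k] {σ : Type*} [Finite σ]
    {J : Ideal (MvPolynomial σ k)} (hJ : zeroLocus k J ⊆ {0}) :
    ∃ N : ℕ, ∀ i, X i ^ N ∈ J := by
  have hrad (i : σ) : X i ∈ J.radical := by
    rw [← vanishingIdeal_zeroLocus_eq_radical (K := k), mem_vanishingIdeal_iff]
    intro v hv
    rw [hJ hv, aeval_X, Pi.zero_apply]
  choose N hN using hrad
  obtain ⟨B, hB⟩ := (Set.finite_range N).bddAbove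
  exact ⟨B, fun i => J.pow_mem_of_pow_mem (hN i) (hB ⟨i, rfl⟩)⟩

variable {f : MvPolynomial (Fin 3) k} {d : ℕ}

/-- The divisor `∑ q ∈ S, q` on `V(f)`. -/
noncomputable def reducedDivisor (S : Finset (PlanePoint f)) : PlanePoint f → ℕ :=
  (S : Set (PlanePoint f)).indicator 1

theorem reducedDivisor_of_mem {S : Finset (PlanePoint f)} {p : PlanePoint f} (hp : p ∈ S) :
    reducedDivisor S p = 1 :=
  Set.indicator_of_mem (Finset.mem_coe.2 hp) 1

theorem reducedDivisor_of_notMem {S : Finset (PlanePoint f)} {p : PlanePoint f} (hp : p ∉ S) :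
    reducedDivisor S p = 0 :=
  Set.indicator_of_notMem (mt Finset.mem_coe.1 hp) 1

open Classical in
theorem card_filter_eq_reducedDivisor_map {ι : Type*} [Fintype ι] (p : ι ↪ PlanePoint f)
    (q : PlanePoint f) :
    (Finset.univ.filter fun i => p i = q).card = reducedDivisor (Finset.univ.map p) q := by
  by_cases hq : q ∈ Finset.univ.map p
  · obtain ⟨i, -, rfl⟩ := Finset.mem_map.1 hq
    rw [reducedDivisor_of_mem hq, Finset.card_eq_one]
    exact ⟨i, by ext j; simp [p.injective.eq_iff]⟩
  · rw [reducedDivisor_of_notMem hq, Finset.card_eq_zero, Finset.filter_eq_empty_iff]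
    exact fun i _ hi => hq (Finset.mem_map.2 ⟨i, Finset.mem_univ i, hi⟩)

theorem exists_planePoint_rep_eq_smul (hf : f.IsHomogeneous d) {v : Fin 3 → k} (hv : v ≠ 0)
    (hfv : eval v f = 0) : ∃ (p : PlanePoint f) (c : k), p.1.rep = c • v := by
  obtain ⟨c, hc⟩ := Projectivization.exists_smul_eq_mk_rep k v hv
  have hrep : (Projectivization.mk k v hv).rep = (c : k) • v := hc.symm
  exact ⟨⟨Projectivization.mk k v hv,
    by rw [hrep, eval_smul_of_isHomogeneous hf, hfv, mul_zero]⟩, c, hrep⟩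

namespace IsSmoothPlaneCurve

variable (hC : IsSmoothPlaneCurve d f)

include hC

theorem exists_isHomogeneous_mul_mem_of_ord_le (p : PlanePoint f) {a h : MvPolynomial (Fin 3) k}
    {m n : ℕ} (ha : a.IsHomogeneous m) (hh : h.IsHomogeneous n) (hle : p.ord h ≤ p.ord a) :
    ∃ (N : ℕ) (U : MvPolynomial (Fin 3) k), U.IsHomogeneous N ∧ eval p.1.rep U ≠ 0 ∧
      U * a ∈ Ideal.span {h, f} := by
  have := hC.isRegularCurvePoint p
  obtain ⟨L, hL, hLv, hslice⟩ := exists_isHomogeneous_one_slicePoly_eq p.1.rep_nonzero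
  obtain ⟨u, hu, x, hmem⟩ := exists_mul_sub_mul_mem_of_localOrder_le hle
  have hL0 : L ≠ 0 := by rintro rfl; simp at hLv
  rw [hslice] at hmem
  exact exists_isHomogeneous_mul_mem_span_pair hC.isHomogeneous hC.prime hL
    (hC.not_dvd_linear hL hL0) hLv ha hh hu hmem

theorem reducedDivisor_le_ord {S : Finset (PlanePoint f)} {g : MvPolynomial (Fin 3) k}
    (hg : ∀ q ∈ S, eval q.1.rep g = 0) (p : PlanePoint f) :
    (reducedDivisor S p : ℕ∞) ≤ p.ord g := by
  by_cases hp : p ∈ S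
  · rw [reducedDivisor_of_mem hp, Nat.cast_one]
    exact (hC.one_le_ord_iff p).2 (hg p hp)
  · simp [reducedDivisor_of_notMem hp]

variable [IsAlgClosed k]

theorem mem_span_pair_of_forall_ord_le {a h : MvPolynomial (Fin 3) k} {m n : ℕ}
    (ha : a.IsHomogeneous m) (hh : h.IsHomogeneous n) (hfh : ¬ f ∣ h)
    (hle : ∀ p : PlanePoint f, p.ord h ≤ p.ord a) : a ∈ Ideal.span {h, f} := by
  let J := (Ideal.span {h, f}).colon (Ideal.span {a})
  have mem_J {u : MvPolynomial (Fin 3) k} : u ∈ J ↔ u * a ∈ Ideal.span {h, f} :=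
    Ideal.mem_colon_span_singleton
  have hzero : zeroLocus k J ⊆ {0} := by
    intro v hv
    rw [mem_zeroLocus_iff] at hv
    simp only [aeval_eq_eval] at hv
    by_contra hv0
    have hfJ : f ∈ J := mem_J.2 (Ideal.mul_mem_right _ _ (Ideal.subset_span (by simp)))
    obtain ⟨p, c, hp⟩ := exists_planePoint_rep_eq_smul hC.isHomogeneous hv0 (hv f hfJ)
    obtain ⟨N, U, hU, hUp, hUa⟩ := hC.exists_isHomogeneous_mul_mem_of_ord_le p ha hh (hle p)
    refine hUp ?_
    rw [hp, eval_smul_of_isHomogeneous hU, hv U (mem_J.2 hUa), mul_zero]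
  obtain ⟨N, hN⟩ := exists_forall_X_pow_mem_of_zeroLocus_subset hzero
  exact mem_span_pair_of_forall_X_pow_mul_mem (show (0 : Fin 3) ≠ 1 by decide)
    (show (0 : Fin 3) ≠ 2 by decide) (by decide) hC.prime
    (hC.not_dvd_linear (isHomogeneous_X k 0) (X_ne_zero 0)) hfh fun i => mem_J.1 (hN i)

theorem dvd_of_ord_le_ord_add_reducedDivisor {l G : MvPolynomial (Fin 3) k} {e : ℕ}
    (hl : l.IsHomogeneous 1) (hl0 : l ≠ 0) (hG : G.IsHomogeneous e) {E : Finset (PlanePoint f)}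
    (hcard : E.card + e < d)
    (hle : ∀ p : PlanePoint f, p.ord l ≤ p.ord G + reducedDivisor E p) : l ∣ G := by
  choose M hM hlM using fun q : PlanePoint f =>
    exists_mem_linearFormsThrough_not_dvd q.1.rep_nonzero hl
  have hprod : (∏ q ∈ E, M q).IsHomogeneous E.card := by
    simpa using IsHomogeneous.prod E M 1 fun q _ => (hM q).1
  have hmem : G * ∏ q ∈ E, M q ∈ Ideal.span {l, f} := by
    refine hC.mem_span_pair_of_forall_ord_le (hG.mul hprod) hl (hC.not_dvd_linear hl hl0)
      fun p => ?_
    rw [hC.ord_mul]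
    refine (hle p).trans (add_le_add_right (hC.reducedDivisor_le_ord (fun q hq => ?_) p) _)
    rw [map_prod, Finset.prod_eq_zero hq (mem_linearFormsThrough.1 (hM q)).2]
  have hdvd := dvd_of_mem_span_pair_of_isHomogeneous_of_lt hC.isHomogeneous hl (hG.mul hprod)
    (by omega) hmem
  refine ((prime_of_isHomogeneous_one hl hl0).dvd_or_dvd hdvd).resolve_right fun h => ?_
  obtain ⟨q, -, hq⟩ := ((prime_of_isHomogeneous_one hl hl0).dvd_finsetProd_iff M).1 h
  exact hlM q hq

end IsSmoothPlaneCurve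

end Noether

section RiemannRoch

open MvPolynomial

variable {k : Type*} [Field k] {f : MvPolynomial (Fin 3) k} {d : ℕ}

/-- The space of forms `G` of degree `n` such that `G / H` satisfies the order conditions defining
`L(D)`, where `H` is a form of degree `n`. -/
noncomputable def residualForms (D : PlanePoint f → ℕ) (H : MvPolynomial (Fin 3) k) (n : ℕ) :
    Submodule k (MvPolynomial (Fin 3) k) where
  carrier := {G | G.IsHomogeneous n ∧ ∀ p : PlanePoint f, p.ord H ≤ p.ord G + D p}
  add_mem' := fun ha hb => ⟨ha.1.add hb.1, fun p =>
    (le_min (ha.2 p) (hb.2 p)).trans <| (min_add_add_right _ _ _).trans_le <| by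
      gcongr
      exact min_localOrder_le_localOrder_add _ _⟩
  zero_mem' := ⟨isHomogeneous_zero _ _ _, fun p => by simp [PlanePoint.ord, localOrder_zero]⟩
  smul_mem' := fun c G hG => by
    rw [smul_eq_C_mul]
    exact ⟨hG.1.C_mul c, fun p => (hG.2 p).trans <| by
      gcongr
      exact localOrder_le_localOrder_mul_left _ _⟩

namespace IsSmoothPlaneCurve

variable (hC : IsSmoothPlaneCurve d f)

include hC

theorem ordAt_sub_ordAt_add_nonneg_iff (p : PlanePoint f) {g h : MvPolynomial (Fin 3) k} {e : ℕ}
    (hg : g.IsHomogeneous e) (hh : h.IsHomogeneous e) (hfg : ¬ f ∣ g) (hfh : ¬ f ∣ h) (m : ℕ) :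
    0 ≤ (ordAt f p g : ℤ) - ordAt f p h + m ↔ p.ord h ≤ p.ord g + m := by
  rw [← hC.natCast_ordAt p hg hfg, ← hC.natCast_ordAt p hh hfh, ← Nat.cast_add, Nat.cast_le]
  omega

theorem exists_mem_residualForms_eq_mul_of_dvd {D : PlanePoint f → ℕ}
    {G H h : MvPolynomial (Fin 3) k} {n e : ℕ} (hh : h.IsHomogeneous e) (hfh : ¬ f ∣ h)
    (hG : G ∈ residualForms D (h * H) (n + e)) (hdvd : h ∣ G) :
    ∃ G' ∈ residualForms D H n, G = G' * h := by
  obtain ⟨G', hG', rfl⟩ := exists_isHomogeneous_eq_mul_of_dvd hh hG.1 hdvd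
  refine ⟨G', ⟨hG', fun p => ?_⟩, rfl⟩
  have hle := hG.2 p
  rw [mul_comm G', hC.ord_mul, hC.ord_mul, add_assoc] at hle
  exact (ENat.add_le_add_iff_left (hC.ord_ne_top p hh hfh)).1 hle

variable [IsAlgClosed k]

theorem exists_mem_residualForms_dvd_sub {D : PlanePoint f → ℕ} {g h H : MvPolynomial (Fin 3) k}
    {e n : ℕ} (hg : g.IsHomogeneous e) (hh : h.IsHomogeneous e) (hfh : ¬ f ∣ h)
    (hH : H.IsHomogeneous n) (hD : ∀ p, (D p : ℕ∞) ≤ p.ord H)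
    (hle : ∀ p : PlanePoint f, p.ord h ≤ p.ord g + D p) :
    ∃ G ∈ residualForms D H n, f ∣ g * H - G * h := by
  have hgH : (g * H).IsHomogeneous (n + e) := by simpa only [add_comm] using hg.mul hH
  have hmem := hC.mem_span_pair_of_forall_ord_le hgH hh hfh fun p => by
    rw [hC.ord_mul]
    exact (hle p).trans (by gcongr; exact hD p)
  obtain ⟨G, hG, hdvd⟩ :=
    exists_isHomogeneous_dvd_sub_mul_of_mem_span_pair hC.isHomogeneous hh hgH hmem
  refine ⟨G, ⟨hG, fun p => ?_⟩, hdvd⟩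
  rw [← ENat.add_le_add_iff_right (hC.ord_ne_top p hh hfh)]
  calc p.ord H + p.ord h ≤ p.ord H + (p.ord g + D p) := by gcongr; exact hle p
    _ = p.ord (g * H) + D p := by rw [hC.ord_mul]; ring
    _ = p.ord G + D p + p.ord h := by rw [hC.ord_congr p hdvd, hC.ord_mul]; ring

end IsSmoothPlaneCurve

variable {F : Type*} [Field F] [Algebra k F]
  [Algebra (MvPolynomial (Fin 3) k ⧸ Ideal.span {f}) F]
  [IsScalarTower k (MvPolynomial (Fin 3) k ⧸ Ideal.span {f}) F]
  [IsFractionRing (MvPolynomial (Fin 3) k ⧸ Ideal.span {f}) F]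

namespace IsSmoothPlaneCurve

variable [IsAlgClosed k] {D : PlanePoint f → ℕ} {H : MvPolynomial (Fin 3) k} {n : ℕ}

theorem mem_RRspace_iff (hC : IsSmoothPlaneCurve d f) (hH : H.IsHomogeneous n) (hfH : ¬ f ∣ H)
    (hD : ∀ p, (D p : ℕ∞) ≤ p.ord H) {φ : F} :
    φ ∈ RRspace F f (fun p => (D p : ℤ)) ↔
      ∃ G ∈ residualForms D H n, φ * coordinateMap f F H = coordinateMap f F G := by
  constructor
  · rintro (rfl | ⟨e, g, h, hg, hh, hfg, hfh, hφ, hord⟩)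
    · exact ⟨0, zero_mem _, by rw [zero_mul, map_zero]⟩
    · obtain ⟨G, hG, hdvd⟩ := hC.exists_mem_residualForms_dvd_sub hg hh hfh hH hD
        fun p => (hC.ordAt_sub_ordAt_add_nonneg_iff p hg hh hfg hfh (D p)).1 (hord p)
      refine ⟨G, hG, mul_right_cancel₀ ((coordinateMap_eq_zero_iff F).not.2 hfh) ?_⟩
      have hGh := (coordinateMap_eq_zero_iff F).2 hdvd
      rw [map_sub, map_mul, map_mul] at hGh
      change φ * coordinateMap f F h = coordinateMap f F g at hφ
      linear_combination hGh + coordinateMap f F H * hφ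
  · rintro ⟨G, ⟨hG, hle⟩, hφ⟩
    by_cases hfG : f ∣ G
    · rw [(coordinateMap_eq_zero_iff F).2 hfG] at hφ
      exact Or.inl ((mul_eq_zero.1 hφ).resolve_right ((coordinateMap_eq_zero_iff F).not.2 hfH))
    · exact Or.inr ⟨n, G, H, hG, hH, hfG, hfH, hφ, fun p =>
        (hC.ordAt_sub_ordAt_add_nonneg_iff p hG hH hfG hfH (D p)).2 (hle p)⟩

theorem h0_eq_finrank_residualForms (hC : IsSmoothPlaneCurve d f) (hH : H.IsHomogeneous n)
    (hn : n < d) (hH0 : H ≠ 0) (hD : ∀ p, (D p : ℕ∞) ≤ p.ord H) :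
    h0 F f (fun p => (D p : ℤ)) = Module.finrank k (residualForms D H n) := by
  have hfH : ¬ f ∣ H := fun h => hH0 (hC.eq_zero_of_dvd hH hn h)
  have hπH : coordinateMap f F H ≠ 0 := (coordinateMap_eq_zero_iff F).not.2 hfH
  let ψ : residualForms D H n →ₗ[k] F :=
    (LinearMap.mulRight k (coordinateMap f F H)⁻¹ ∘ₗ
      (coordinateMap f F).toLinearMap).domRestrict _
  have hψ (G : residualForms D H n) :
      ψ G = coordinateMap f F G / coordinateMap f F H :=
    (div_eq_mul_inv _ _).symm
  have hinj : Function.Injective ψ := by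
    refine (injective_iff_map_eq_zero ψ).2 fun G hG => Subtype.ext ?_
    rw [hψ, div_eq_zero_iff, or_iff_left hπH, coordinateMap_eq_zero_iff] at hG
    exact hC.eq_zero_of_dvd G.2.1 hn hG
  have hrange : RRspace F f (fun p => (D p : ℤ)) = LinearMap.range ψ := by
    ext φ
    rw [hC.mem_RRspace_iff hH hfH hD]
    simp [hψ, eq_div_iff hπH, eq_comm]
  rw [h0, hrange, Submodule.span_eq, LinearMap.finrank_range_of_inj hinj]

theorem h0_ordAt_linear (hC : IsSmoothPlaneCurve d f) {l : MvPolynomial (Fin 3) k}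
    (hl : l.IsHomogeneous 1) (hl0 : l ≠ 0) : h0 F f (fun p => (ordAt f p l : ℤ)) = 3 := by
  have hord (p : PlanePoint f) := hC.natCast_ordAt p hl (hC.not_dvd_linear hl hl0)
  have htop : residualForms (fun p : PlanePoint f => ordAt f p l) l 1 =
      homogeneousSubmodule (Fin 3) k 1 :=
    le_antisymm (fun G hG => hG.1) fun G hG =>
      ⟨hG, fun p => (hord p).ge.trans le_add_self⟩
  rw [hC.h0_eq_finrank_residualForms hl hC.two_le hl0 fun p => (hord p).le, htop,
    finrank_homogeneousSubmodule_one, Fintype.card_fin]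

end IsSmoothPlaneCurve

end RiemannRoch

section Collinear

open MvPolynomial

variable {k : Type*} [Field k]

theorem eval_rep_ne_zero_of_not_dvd {p q : Projectivization k (Fin 3 → k)} (hpq : p ≠ q)
    {l M : MvPolynomial (Fin 3) k} (hl : l ∈ linearFormsThrough p.rep) (hl0 : l ≠ 0)
    (hlq : eval q.rep l = 0) (hM : M ∈ linearFormsThrough p.rep) (hlM : ¬ l ∣ M) :
    eval q.rep M ≠ 0 := by
  refine fun hMq => hpq ?_
  have hle : linearFormsThrough p.rep ≤ linearFormsThrough q.rep := by
    rw [linearFormsThrough_eq_span_pair p.rep_nonzero hl hl0 hM hlM]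
    exact Submodule.span_le.2 (Set.pair_subset_iff.2 ⟨⟨hl.1, hlq⟩, ⟨hM.1, hMq⟩⟩)
  obtain ⟨i, hi⟩ := Function.ne_iff.1 p.rep_nonzero
  rw [← p.mk_rep, ← q.mk_rep]
  exact ((Projectivization.mk_eq_mk_iff' k _ _ q.rep_nonzero p.rep_nonzero).2
    ⟨_, smul_eq_of_linearFormsThrough_le hi hle⟩).symm

theorem exists_isHomogeneous_dvd_sub_mul_prod {ι : Type*} {p : ι → Projectivization k (Fin 3 → k)}
    (hp : Function.Injective p) {l : MvPolynomial (Fin 3) k} (hl : l.IsHomogeneous 1)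
    (hl0 : l ≠ 0) {M : ι → MvPolynomial (Fin 3) k}
    (hM : ∀ i, M i ∈ linearFormsThrough (p i).rep) (hlM : ∀ i, ¬ l ∣ M i) (S : Finset ι)
    (hlS : ∀ i ∈ S, eval (p i).rep l = 0) {G : MvPolynomial (Fin 3) k} {n : ℕ}
    (hG : G.IsHomogeneous (n + S.card)) (hGS : ∀ i ∈ S, eval (p i).rep G = 0) :
    ∃ N : MvPolynomial (Fin 3) k, N.IsHomogeneous n ∧ l ∣ G - N * ∏ i ∈ S, M i := by
  induction S using Finset.cons_induction generalizing n with
  | empty => exact ⟨G, hG, by simp⟩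
  | cons a S ha ih =>
    rw [Finset.card_cons, ← add_assoc, add_right_comm] at hG
    rw [Finset.forall_mem_cons] at hlS hGS
    obtain ⟨N', hN', hdvd⟩ := ih hlS.2 hG hGS.2
    have hN'a : eval (p a).rep N' = 0 := by
      obtain ⟨B, hB⟩ := hdvd
      have heval := congrArg (eval (p a).rep) hB
      rw [map_sub, map_mul, map_mul, hGS.1, hlS.1, zero_mul, zero_sub, neg_eq_zero, map_prod]
        at heval
      refine (mul_eq_zero.1 heval).resolve_right (Finset.prod_ne_zero_iff.2 fun i hi => ?_)
      exact eval_rep_ne_zero_of_not_dvd (hp.ne (ne_of_mem_of_not_mem hi ha)) ⟨hl, hlS.2 i hi⟩ hl0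
        hlS.1 (hM i) (hlM i)
    have hmem : N' ∈ Ideal.span {M a, l} := by
      rw [Set.pair_comm]
      exact mem_of_isHomogeneous_of_linearFormsThrough_le (p a).rep_nonzero
        (linearFormsThrough_le_span_pair (p a).rep_nonzero ⟨hl, hlS.1⟩ hl0 (hM a) (hlM a)) hN' hN'a
    obtain ⟨N, hN, hdvd'⟩ :=
      exists_isHomogeneous_dvd_sub_mul_of_mem_span_pair hl (hM a).1 hN' hmem
    refine ⟨N, hN, ?_⟩
    rw [Finset.prod_cons]
    convert dvd_add hdvd (hdvd'.mul_right (∏ i ∈ S, M i)) using 1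
    ring

variable {f : MvPolynomial (Fin 3) k} {d : ℕ}

namespace IsSmoothPlaneCurve

variable (hC : IsSmoothPlaneCurve d f) {l : MvPolynomial (Fin 3) k} (hl : l.IsHomogeneous 1)
  (hl0 : l ≠ 0) {S : Finset (PlanePoint f)} (hlS : ∀ q ∈ S, eval q.1.rep l = 0)

include hC hl hl0 hlS

theorem ord_le_or_ord_prod_le_reducedDivisor {M : PlanePoint f → MvPolynomial (Fin 3) k}
    (hM : ∀ q, M q ∈ linearFormsThrough q.1.rep) (hlM : ∀ q, ¬ l ∣ M q) (p : PlanePoint f) :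
    p.ord l ≤ reducedDivisor S p ∨ p.ord (∏ q ∈ S, M q) ≤ reducedDivisor S p := by
  rcases eq_or_ne (eval p.1.rep l) 0 with hlp | hlp
  swap
  · exact Or.inl (((hC.ord_eq_zero_iff p).2 hlp).trans_le zero_le)
  have hord (q : PlanePoint f) (hq : q ∈ S) (hqp : q ≠ p) : p.ord (M q) = 0 :=
    (hC.ord_eq_zero_iff p).2 <| eval_rep_ne_zero_of_not_dvd (Subtype.coe_ne_coe.2 hqp)
      ⟨hl, hlS q hq⟩ hl0 hlp (hM q) (hlM q)
  rw [hC.ord_prod]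
  by_cases hp : p ∈ S
  · rw [Finset.sum_eq_single_of_mem p hp hord, reducedDivisor_of_mem hp, Nat.cast_one]
    exact hC.ord_le_one_or_ord_le_one p ⟨hl, hlp⟩ hl0 (hM p) (hlM p)
  · rw [Finset.sum_eq_zero fun q hq => hord q hq (ne_of_mem_of_not_mem hq hp)]
    exact Or.inr zero_le

variable (hS : S.card + 1 = d)

include hS

theorem exists_mem_residualForms_not_dvd :
    ∃ N ∈ residualForms (reducedDivisor S) l 1, ¬ l ∣ N := by
  choose M hM hlM using fun q : PlanePoint f =>
    exists_mem_linearFormsThrough_not_dvd q.1.rep_nonzero hl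
  obtain ⟨N, hN, B, hB⟩ := exists_isHomogeneous_dvd_sub_mul_prod
    (p := fun q : PlanePoint f => q.1) Subtype.val_injective hl hl0 hM hlM S hlS
    (by rw [add_comm, hS]; exact hC.isHomogeneous) fun q _ => q.2
  refine ⟨N, ⟨hN, fun p => ?_⟩, fun hlN => hC.linear_not_dvd hl hl0 ?_⟩
  · have hord : p.ord (N * ∏ q ∈ S, M q) = p.ord (l * -B) :=
      hC.ord_congr p ⟨1, by linear_combination -hB⟩
    rw [hC.ord_mul, hC.ord_mul] at hord
    rcases hC.ord_le_or_ord_prod_le_reducedDivisor hl hl0 hlS hM hlM p with hle | hle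
    · exact hle.trans le_add_self
    · exact (le_self_add.trans_eq hord.symm).trans (add_le_add_right hle _)
  · exact (dvd_sub_left (hlN.mul_right _)).1 ⟨B, hB⟩

variable [IsAlgClosed k]

theorem exists_residualForms_eq_linearFormsThrough :
    ∃ p : PlanePoint f, residualForms (reducedDivisor S) l 1 = linearFormsThrough p.1.rep := by
  obtain ⟨p, hp⟩ : ∃ p : PlanePoint f, (reducedDivisor S p : ℕ∞) < p.ord l := by
    by_contra! hle
    refine (prime_of_isHomogeneous_one hl hl0).not_dvd_one ?_
    exact hC.dvd_of_ord_le_ord_add_reducedDivisor hl hl0 (isHomogeneous_one _ _)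
      (hS ▸ S.card.lt_succ_self) fun p => (hle p).trans le_add_self
  have hle : residualForms (reducedDivisor S) l 1 ≤ linearFormsThrough p.1.rep := by
    refine fun G hG => ⟨hG.1, of_not_not fun hGp => hp.not_ge ?_⟩
    simpa [(hC.ord_eq_zero_iff p).2 hGp] using hG.2 p
  have hlD : l ∈ residualForms (reducedDivisor S) l 1 := ⟨hl, fun p => le_self_add⟩
  obtain ⟨N, hND, hlN⟩ := hC.exists_mem_residualForms_not_dvd hl hl0 hlS hS
  refine ⟨p, hle.antisymm ?_⟩
  rw [linearFormsThrough_eq_span_pair p.1.rep_nonzero (hle hlD) hl0 (hle hND) hlN]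
  exact Submodule.span_le.2 (Set.pair_subset_iff.2 ⟨hlD, hND⟩)

theorem h0_reducedDivisor_eq_two_of_collinear (F : Type*) [Field F] [Algebra k F]
    [Algebra (MvPolynomial (Fin 3) k ⧸ Ideal.span {f}) F]
    [IsScalarTower k (MvPolynomial (Fin 3) k ⧸ Ideal.span {f}) F]
    [IsFractionRing (MvPolynomial (Fin 3) k ⧸ Ideal.span {f}) F] :
    h0 F f (fun p => (reducedDivisor S p : ℤ)) = 2 := by
  obtain ⟨p, hp⟩ := hC.exists_residualForms_eq_linearFormsThrough hl hl0 hlS hS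
  rw [hC.h0_eq_finrank_residualForms hl hC.two_le hl0 (hC.reducedDivisor_le_ord hlS), hp]
  simpa using finrank_linearFormsThrough_add_one p.1.rep_nonzero

end IsSmoothPlaneCurve

end Collinear

section Noncollinear

open MvPolynomial

variable {k : Type*} [Field k] {f : MvPolynomial (Fin 3) k} {d : ℕ}

open Classical in
theorem card_filter_eval_mul_prod_ne_zero_add_le {S T : Finset (PlanePoint f)}
    {l : MvPolynomial (Fin 3) k} {L : PlanePoint f → MvPolynomial (Fin 3) k}
    (hL : ∀ q, L q ∈ linearFormsThrough q.1.rep)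
    (hT : T ⊆ S.filter fun q => ¬ eval q.1.rep l = 0) :
    (S.filter fun q => eval q.1.rep (l * ∏ q ∈ T, L q) ≠ 0).card + T.card +
      (S.filter fun q => eval q.1.rep l = 0).card ≤ S.card := by
  have hE : (S.filter fun q => eval q.1.rep (l * ∏ q ∈ T, L q) ≠ 0) ⊆
      (S.filter fun q => ¬ eval q.1.rep l = 0) \ T := by
    intro q hq
    obtain ⟨hqS, hq⟩ := Finset.mem_filter.1 hq
    rw [map_mul, map_prod, mul_ne_zero_iff, Finset.prod_ne_zero_iff] at hq
    exact Finset.mem_sdiff.2 ⟨Finset.mem_filter.2 ⟨hqS, hq.1⟩, fun hqT => hq.2 q hqT (hL q).2⟩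
  have hcard := S.card_filter_add_card_filter_not fun q => eval q.1.rep l = 0
  have hcardT := Finset.card_le_card hT
  have hcardE := Finset.card_le_card hE
  rw [Finset.card_sdiff_of_subset hT] at hcardE
  omega

open Classical in
theorem exists_linear_two_le_card_filter_ssubset {S : Finset (PlanePoint f)}
    (hline : ¬ ∃ l : MvPolynomial (Fin 3) k,
      l.IsHomogeneous 1 ∧ l ≠ 0 ∧ ∀ q ∈ S, eval q.1.rep l = 0) :
    ∃ l : MvPolynomial (Fin 3) k, l.IsHomogeneous 1 ∧ l ≠ 0 ∧
      2 ≤ (S.filter fun q => eval q.1.rep l = 0).card ∧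
      (S.filter fun q => eval q.1.rep l = 0) ⊂ S := by
  have hline_of_card (T : Finset (PlanePoint f)) (hT : T.card ≤ 2) :
      ∃ l : MvPolynomial (Fin 3) k, l.IsHomogeneous 1 ∧ l ≠ 0 ∧ ∀ q ∈ T, eval q.1.rep l = 0 := by
    obtain ⟨l, hl, hl0, hlT⟩ := exists_isHomogeneous_one_ne_zero_forall_eval_eq_zero
      (fun q : T => q.1.1.rep) (by simpa using Nat.lt_succ_of_le hT)
    exact ⟨l, hl, hl0, fun q hq => hlT ⟨q, hq⟩⟩
  obtain ⟨T, hTS, hT⟩ := Finset.exists_subset_card_eq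
    (not_lt.1 fun hlt : S.card < 2 => hline (hline_of_card S hlt.le))
  obtain ⟨l, hl, hl0, hlT⟩ := hline_of_card T hT.le
  refine ⟨l, hl, hl0, hT.ge.trans (Finset.card_le_card fun q hq => ?_),
    (Finset.filter_subset _ _).ssubset_of_ne fun h => hline ⟨l, hl, hl0, ?_⟩⟩
  · exact Finset.mem_filter.2 ⟨hTS hq, hlT q hq⟩
  · exact Finset.filter_eq_self.1 h

open Classical in
theorem eval_mul_prod_filter_eq_zero {S : Finset (PlanePoint f)} (l : MvPolynomial (Fin 3) k)
    {L : PlanePoint f → MvPolynomial (Fin 3) k} (hL : ∀ q, L q ∈ linearFormsThrough q.1.rep) :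
    ∀ q ∈ S, eval q.1.rep (l * ∏ q ∈ S.filter fun q => ¬ eval q.1.rep l = 0, L q) = 0 := by
  intro q hq
  by_cases hlq : eval q.1.rep l = 0
  · rw [map_mul, hlq, zero_mul]
  · rw [map_mul, map_prod, Finset.prod_eq_zero (Finset.mem_filter.2 ⟨hq, hlq⟩)
      (mem_linearFormsThrough.1 (hL q)).2, mul_zero]

namespace IsSmoothPlaneCurve

variable [IsAlgClosed k] (hC : IsSmoothPlaneCurve d f)

include hC

open Classical in
theorem dvd_of_ord_mul_le_ord_add_reducedDivisor {S : Finset (PlanePoint f)}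
    {l P G : MvPolynomial (Fin 3) k} {m n : ℕ} (hl : l.IsHomogeneous 1) (hl0 : l ≠ 0)
    (hP : P.IsHomogeneous m) (hfP : ¬ f ∣ P) (hG : G.IsHomogeneous n)
    (hcard : (S.filter fun q => eval q.1.rep l = 0 ∧ eval q.1.rep P ≠ 0).card + n < d)
    (hle : ∀ p : PlanePoint f, p.ord (l * P) ≤ p.ord G + reducedDivisor S p) : l ∣ G := by
  refine hC.dvd_of_ord_le_ord_add_reducedDivisor hl hl0 hG hcard fun p => ?_
  by_cases hlp : eval p.1.rep l = 0
  swap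
  · exact ((hC.ord_eq_zero_iff p).2 hlp).trans_le zero_le
  have hp := hle p
  rw [hC.ord_mul] at hp
  by_cases hpE : p ∈ S.filter fun q => eval q.1.rep l = 0 ∧ eval q.1.rep P ≠ 0
  · rw [reducedDivisor_of_mem hpE, ← reducedDivisor_of_mem (Finset.mem_of_mem_filter p hpE)]
    exact le_self_add.trans hp
  · have hDP : (reducedDivisor S p : ℕ∞) ≤ p.ord P := by
      by_cases hpS : p ∈ S
      · rw [reducedDivisor_of_mem hpS, Nat.cast_one, hC.one_le_ord_iff]
        exact of_not_not fun hPp => hpE (Finset.mem_filter.2 ⟨hpS, hlp, hPp⟩)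
      · simp [reducedDivisor_of_notMem hpS]
    refine le_add_right ((ENat.add_le_add_iff_right (hC.ord_ne_top p hP hfP)).1 ?_)
    exact hp.trans (add_le_add_right hDP _)

variable {S : Finset (PlanePoint f)} (hS : S.card < d)

include hS

open Classical in
theorem exists_eq_smul_of_mem_residualForms {l : MvPolynomial (Fin 3) k} (hl : l.IsHomogeneous 1)
    (hl0 : l ≠ 0)
    (htwo : 2 ≤ (S.filter fun q => eval q.1.rep l = 0).card)
    (hlS : (S.filter fun q => eval q.1.rep l = 0) ⊂ S) {L : PlanePoint f → MvPolynomial (Fin 3) k}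
    (hL : ∀ q, L q ∈ linearFormsThrough q.1.rep) (hL0 : ∀ q, L q ≠ 0) {T : Finset (PlanePoint f)}
    (hT : T ⊆ S.filter fun q => ¬ eval q.1.rep l = 0) {G : MvPolynomial (Fin 3) k}
    (hG : G ∈ residualForms (reducedDivisor S) (l * ∏ q ∈ T, L q) (T.card + 1)) :
    ∃ c : k, G = c • (l * ∏ q ∈ T, L q) := by
  induction T using Finset.cons_induction generalizing G with
  | empty =>
    simp only [Finset.prod_empty, mul_one]
    refine exists_eq_smul_of_dvd_of_isHomogeneous hl hG.1 ?_
    refine hC.dvd_of_ord_mul_le_ord_add_reducedDivisor hl hl0 (isHomogeneous_one _ _)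
      (mt isUnit_of_dvd_one hC.prime.not_isUnit) hG.1 ?_ hG.2
    have := Finset.card_lt_card hlS
    simp only [map_one, ne_eq, one_ne_zero, not_false_eq_true, and_true]
    rw [Finset.card_empty]
    omega
  | cons j T hj ih =>
    have hcardS := S.card_filter_add_card_filter_not fun q => eval q.1.rep l = 0
    have hTS : T ⊆ S.filter fun q => ¬ eval q.1.rep l = 0 := (Finset.subset_cons hj).trans hT
    have hcardT := Finset.card_le_card hTS
    have hP : (l * ∏ q ∈ T, L q).IsHomogeneous (1 + T.card) :=
      hl.mul (by simpa using IsHomogeneous.prod T L 1 fun q _ => (hL q).1)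
    have hP0 : l * ∏ q ∈ T, L q ≠ 0 := mul_ne_zero hl0 (Finset.prod_ne_zero_iff.2 fun q _ => hL0 q)
    have hfP : ¬ f ∣ l * ∏ q ∈ T, L q := fun h => hP0 (hC.eq_zero_of_dvd hP (by omega) h)
    rw [Finset.prod_cons, mul_left_comm] at hG ⊢
    rw [Finset.card_cons] at hG
    have hcardE := card_filter_eval_mul_prod_ne_zero_add_le hL hTS
    have hcard : (S.filter fun q => eval q.1.rep (L j) = 0 ∧
        eval q.1.rep (l * ∏ q ∈ T, L q) ≠ 0).card + (T.card + 1 + 1) < d := by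
      have := Finset.card_le_card (S.monotone_filter_right fun q _ (hq : _ ∧ _) => hq.2 :
        (S.filter fun q => eval q.1.rep (L j) = 0 ∧ eval q.1.rep (l * ∏ q ∈ T, L q) ≠ 0) ⊆ _)
      omega
    obtain ⟨G', hG', rfl⟩ := hC.exists_mem_residualForms_eq_mul_of_dvd (hL j).1
      (hC.not_dvd_linear (hL j).1 (hL0 j)) hG <|
      hC.dvd_of_ord_mul_le_ord_add_reducedDivisor (hL j).1 (hL0 j) hP hfP hG.1 hcard hG.2
    obtain ⟨c, rfl⟩ := ih hTS hG'
    exact ⟨c, by rw [smul_mul_assoc, mul_comm]⟩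

open Classical in
theorem exists_residualForms_eq_span_singleton
    (hline : ¬ ∃ l : MvPolynomial (Fin 3) k,
      l.IsHomogeneous 1 ∧ l ≠ 0 ∧ ∀ q ∈ S, eval q.1.rep l = 0) :
    ∃ (n : ℕ) (H : MvPolynomial (Fin 3) k), n < d ∧ H.IsHomogeneous n ∧ H ≠ 0 ∧
      (∀ q ∈ S, eval q.1.rep H = 0) ∧
      residualForms (reducedDivisor S) H n = Submodule.span k {H} := by
  obtain ⟨l, hl, hl0, htwo, hlS⟩ := exists_linear_two_le_card_filter_ssubset hline
  choose L hL hlL using fun q : PlanePoint f =>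
    exists_mem_linearFormsThrough_not_dvd q.1.rep_nonzero hl
  have hL0 (q : PlanePoint f) : L q ≠ 0 := fun h => hlL q (h ▸ dvd_zero l)
  have hcard := S.card_filter_add_card_filter_not fun q => eval q.1.rep l = 0
  set T := S.filter fun q => ¬ eval q.1.rep l = 0 with hT
  have hH : (l * ∏ q ∈ T, L q).IsHomogeneous (T.card + 1) := by
    simpa [add_comm] using hl.mul (IsHomogeneous.prod T L (fun _ => 1) fun q _ => (hL q).1)
  refine ⟨T.card + 1, l * ∏ q ∈ T, L q, by omega, hH,
    mul_ne_zero hl0 (Finset.prod_ne_zero_iff.2 fun q _ => hL0 q),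
    eval_mul_prod_filter_eq_zero l hL, le_antisymm (fun G hG => ?_) ?_⟩
  · obtain ⟨c, rfl⟩ := hC.exists_eq_smul_of_mem_residualForms hS hl hl0 htwo hlS hL hL0
      hT.subset hG
    exact Submodule.smul_mem _ c (Submodule.mem_span_singleton_self _)
  · rw [Submodule.span_singleton_le_iff_mem]
    exact ⟨hH, fun p => le_self_add⟩

theorem h0_reducedDivisor_eq_one_of_not_collinear
    (hline : ¬ ∃ l : MvPolynomial (Fin 3) k,
      l.IsHomogeneous 1 ∧ l ≠ 0 ∧ ∀ q ∈ S, eval q.1.rep l = 0)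
    (F : Type*) [Field F] [Algebra k F] [Algebra (MvPolynomial (Fin 3) k ⧸ Ideal.span {f}) F]
    [IsScalarTower k (MvPolynomial (Fin 3) k ⧸ Ideal.span {f}) F]
    [IsFractionRing (MvPolynomial (Fin 3) k ⧸ Ideal.span {f}) F] :
    h0 F f (fun p => (reducedDivisor S p : ℤ)) = 1 := by
  obtain ⟨n, H, hn, hH, hH0, hHS, hspan⟩ := hC.exists_residualForms_eq_span_singleton hS hline
  rw [hC.h0_eq_finrank_residualForms hH hn hH0 (hC.reducedDivisor_le_ord hHS), hspan,
    finrank_span_singleton hH0]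

end IsSmoothPlaneCurve

end Noncollinear

open Classical in
/-- Let `C ⊆ ℙ²_k` be a smooth plane curve of degree `d ≥ 2` over an algebraically closed
field, let `p₁, …, p_{d-1}` be distinct points of `C` and `L = O_C(p₁ + ⋯ + p_{d-1})`.
If the points do not all lie on a line then `h⁰(C, L) = 1`; if they all lie on a line `ℓ`,
then `h⁰(C, L) = 2` and `h⁰(C, O_C(ℓ ∩ C)) = 3`, where `ℓ ∩ C` is the intersection divisor
of `ℓ` with `C`. -/
theorem h0_of_d_sub_one_points
    (k : Type*) [Field k] [IsAlgClosed k]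
    (d : ℕ) (hd : 2 ≤ d) (f : MvPolynomial (Fin 3) k) (hf : f.IsHomogeneous d)
    (hsm : ∀ v : Fin 3 → k, MvPolynomial.eval v f = 0 →
      (∀ i : Fin 3, MvPolynomial.eval v (MvPolynomial.pderiv i f) = 0) → v = 0)
    (m : ℕ) (hm : m + 1 = d)
    (p : Fin m → PlanePoint f) (hp : Function.Injective p)
    (F : Type*) [Field F]
    [Algebra (MvPolynomial (Fin 3) k ⧸ Ideal.span {f}) F]
    [IsFractionRing (MvPolynomial (Fin 3) k ⧸ Ideal.span {f}) F]
    [Algebra k F] [IsScalarTower k (MvPolynomial (Fin 3) k ⧸ Ideal.span {f}) F] :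
    ((¬ ∃ l : MvPolynomial (Fin 3) k, l.IsHomogeneous 1 ∧ l ≠ 0 ∧
        ∀ i, MvPolynomial.eval (p i).1.rep l = 0) →
      h0 F f (fun q => ((Finset.univ.filter (fun i => p i = q)).card : ℤ)) = 1) ∧
    (∀ l : MvPolynomial (Fin 3) k, l.IsHomogeneous 1 → l ≠ 0 →
      (∀ i, MvPolynomial.eval (p i).1.rep l = 0) →
      h0 F f (fun q => ((Finset.univ.filter (fun i => p i = q)).card : ℤ)) = 2 ∧
      h0 F f (fun q => (ordAt f q l : ℤ)) = 3) := by
  have hf0 : f ≠ 0 := fun h => one_ne_zero (congrFun (hsm 1 (by simp [h]) (by simp [h])) 0)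
  have hC : IsSmoothPlaneCurve d f := ⟨hf, prime_of_isFractionRing F hf0, hd, hsm⟩
  let S := Finset.univ.map ⟨p, hp⟩
  have hS : S.card + 1 = d := by simpa [S] using hm
  have forall_mem_S {l : MvPolynomial (Fin 3) k} :
      (∀ q ∈ S, MvPolynomial.eval q.1.rep l = 0) ↔
        ∀ i, MvPolynomial.eval (p i).1.rep l = 0 := by
    simp [S]
  have hD (q : PlanePoint f) : (Finset.univ.filter fun i => p i = q).card = reducedDivisor S q :=
    card_filter_eq_reducedDivisor_map ⟨p, hp⟩ q
  simp only [hD, ← forall_mem_S]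
  refine ⟨fun hline => ?_, fun l hl hl0 hlS => ⟨?_, hC.h0_ordAt_linear hl hl0⟩⟩
  · exact hC.h0_reducedDivisor_eq_one_of_not_collinear (by omega) hline F
  · exact hC.h0_reducedDivisor_eq_two_of_collinear hl hl0 hlS hS F
end
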